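/- arXiv:1905.11491 — 2 statements merged into one kernel-verified Lean document; each statement's English description precedes it below -/
import Mathlib

section
/- Let q > 7 and κ > 0. Then there exists a solution u to Δ²u + u^{−q} = 0 in ℝ³ with u > 0, such that u is not radially symmetric about any point, liminf_{|x|→∞} u(x)/|x| ∈ (0, ∞), and limsup_{|x|→∞} u(x)/|x|² = κ. -/
open MeasureTheory Filter Topology Real

/-- The Laplacian of a function on ℝ³. -/
noncomputable def laplacian (u : EuclideanSpace ℝ (Fin 3) → ℝ) (x : EuclideanSpace ℝ (Fin 3)) : ℝ :=
  ∑ i : Fin 3, iteratedFDeriv ℝ 2 u x ![EuclideanSpace.single i 1, EuclideanSpace.single i 1]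

/-!
On `ℝ³` the bilaplacian of `-‖x‖ / (8π)` is the Dirac mass and the bilaplacian of `x₀² + x₁²` is
zero, so an even function `u` with `u = 1 + x₀² + x₁² + ε ∫ k(x, y) u(y)^(-q) dy`, where `k` is the
even part in `x` of `‖x - y‖ - ‖y‖`, solves the equation up to a factor `8πε`, which scaling
removes. The correction is positive and of at most linear growth, hence `u` grows quadratically
transversally to the third axis and linearly along it; in particular it is not radial.

For small `ε`, `u` varies along the third axis on a much longer scale than across it, so near the
axis the kernel may be replaced by its restriction to the axis. Integrating out the transverse
variables then leaves a one-dimensional integral equation for a profile `w` of the third variable,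
in which the exponent `q` becomes `q - 1`. Both the profile and, around `w(x₂) + x₀² + x₁²`, the
solution `u` are obtained as fixed points of contractions for weighted sup norms; the weight is a
supersolution of the linearised profile equation.

Fourth derivatives of `‖x‖` are not locally integrable, so the bilaplacian of the potential is
computed with `‖x‖` replaced by `√(δ² + ‖x‖²)`, letting `δ` tend to zero.
-/

local notation "ℝ³" => EuclideanSpace ℝ (Fin 3)

open scoped Convolution RealInnerProductSpace

section WeightedContraction

variable {X : Type*} [TopologicalSpace X] {W g : X → ℝ} {T : (X → ℝ) → X → ℝ} {θ K : ℝ}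

/-- The closed ball of radius `θ` about `W` in the space of continuous functions, for the weighted
supremum norm `sup |u| / g`. -/
def weightedBall (W g : X → ℝ) (θ : ℝ) : Set (X → ℝ) :=
  {u | Continuous u ∧ ∀ x, |u x - W x| ≤ θ * g x}

theorem self_mem_weightedBall (hW : Continuous W) (hg0 : ∀ x, 0 < g x) (hθ : 0 ≤ θ) :
    W ∈ weightedBall W g θ :=
  ⟨hW, fun x ↦ by simpa using mul_nonneg hθ (hg0 x).le⟩

theorem add_mul_mem_weightedBall (hW : Continuous W) (hg : Continuous g) (hg0 : ∀ x, 0 < g x)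
    {h : BoundedContinuousFunction X ℝ} (hh : ‖h‖ ≤ θ) :
    (fun x ↦ W x + g x * h x) ∈ weightedBall W g θ := by
  refine ⟨hW.add (hg.mul h.continuous), fun x ↦ ?_⟩
  rw [add_sub_cancel_left, abs_mul, abs_of_pos (hg0 x), mul_comm]
  exact mul_le_mul_of_nonneg_right ((h.norm_coe_le_norm x).trans hh) (hg0 x).le

theorem exists_fixedPoint_of_mapsTo_weightedBall (hW : Continuous W) (hg : Continuous g)
    (hg0 : ∀ x, 0 < g x) (hθ : 0 ≤ θ) (hK0 : 0 ≤ K) (hK : K < 1)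
    (hT : Set.MapsTo T (weightedBall W g θ) (weightedBall W g θ))
    (hlip : ∀ u ∈ weightedBall W g θ, ∀ v ∈ weightedBall W g θ, ∀ D,
      (∀ x, |u x - v x| ≤ D * g x) → ∀ x, |T u x - T v x| ≤ K * D * g x) :
    ∃ u ∈ weightedBall W g θ, T u = u := by
  let B := Metric.closedBall (0 : BoundedContinuousFunction X ℝ) θ
  let e (h : B) (x : X) : ℝ := W x + g x * h.1 x
  have he (h : B) : e h ∈ weightedBall W g θ :=
    add_mul_mem_weightedBall hW hg hg0 (mem_closedBall_zero_iff.1 h.2)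
  have hbound (h : B) (x : X) : ‖(T (e h) x - W x) / g x‖ ≤ θ := by
    rw [norm_div, norm_of_nonneg (hg0 x).le, div_le_iff₀ (hg0 x)]
    exact (hT (he h)).2 x
  let Φ (h : B) : B := ⟨BoundedContinuousFunction.ofNormedAddCommGroup
    (fun x ↦ (T (e h) x - W x) / g x) (((hT (he h)).1.sub hW).div hg fun x ↦ (hg0 x).ne') θ
    (hbound h), mem_closedBall_zero_iff.2 <|
      BoundedContinuousFunction.norm_ofNormedAddCommGroup_le _ hθ _⟩
  have hΦ : ContractingWith ⟨K, hK0⟩ Φ := by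
    refine ⟨by exact_mod_cast hK, LipschitzWith.of_dist_le_mul fun h k ↦
      (BoundedContinuousFunction.dist_le (by positivity)).2 fun x ↦ ?_⟩
    have hd (y) : |e h y - e k y| ≤ dist h k * g y := by
      rw [add_sub_add_left_eq_sub, ← mul_sub, abs_mul, abs_of_pos (hg0 y), mul_comm]
      exact mul_le_mul_of_nonneg_right (h.1.dist_coe_le_dist (g := k.1) y) (hg0 y).le
    change |(T (e h) x - W x) / g x - (T (e k) x - W x) / g x| ≤ K * dist h k
    rw [← sub_div, sub_sub_sub_cancel_right, abs_div, abs_of_pos (hg0 x), div_le_iff₀ (hg0 x)]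
    exact hlip _ (he h) _ (he k) _ hd x
  have : CompleteSpace B := Metric.isClosed_closedBall.completeSpace_coe
  have : Nonempty B := ⟨0, Metric.mem_closedBall_self hθ⟩
  refine ⟨e hΦ.fixedPoint, he _, funext fun x ↦ ?_⟩
  have hx : (T (e hΦ.fixedPoint) x - W x) / g x = hΦ.fixedPoint.1 x :=
    congr_arg (fun k : B ↦ k.1 x) hΦ.fixedPoint_isFixedPt
  rw [div_eq_iff (hg0 x).ne', sub_eq_iff_eq_add, mul_comm, add_comm] at hx
  exact hx

theorem exists_fixedPoint_of_weighted_contraction (hW : Continuous W) (hg : Continuous g)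
    (hg0 : ∀ x, 0 < g x) (hθ : 0 ≤ θ) (hK0 : 0 ≤ K) (hK : K < 1)
    (hT : ∀ u ∈ weightedBall W g θ, Continuous (T u))
    (hlip : ∀ u ∈ weightedBall W g θ, ∀ v ∈ weightedBall W g θ, ∀ D,
      (∀ x, |u x - v x| ≤ D * g x) → ∀ x, |T u x - T v x| ≤ K * D * g x)
    (hbase : ∀ x, |T W x - W x| ≤ (1 - K) * θ * g x) :
    ∃ u ∈ weightedBall W g θ, T u = u := by
  refine exists_fixedPoint_of_mapsTo_weightedBall hW hg hg0 hθ hK0 hK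
    (fun u hu ↦ ⟨hT u hu, fun x ↦ ?_⟩) hlip
  calc |T u x - W x| ≤ |T u x - T W x| + |T W x - W x| := abs_sub_le _ _ _
    _ ≤ K * θ * g x + (1 - K) * θ * g x :=
      add_le_add (hlip u hu W (self_mem_weightedBall hW hg0 hθ) θ hu.2 x) (hbase x)
    _ = θ * g x := by ring

end WeightedContraction

section SymmKernel

variable {E : Type*} [SeminormedAddCommGroup E]

/-- The even part in `x` of `‖x - y‖ - ‖y‖`, which in dimension three is, up to a constant factor,
the fundamental solution of the bilaplacian normalised to vanish at `x = 0`. -/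
noncomputable def symmKernel (x y : E) : ℝ := (‖x - y‖ + ‖x + y‖) / 2 - ‖y‖

@[fun_prop]
theorem continuous_symmKernel {X : Type*} [TopologicalSpace X] {f g : X → E} (hf : Continuous f)
    (hg : Continuous g) : Continuous fun z ↦ symmKernel (f z) (g z) := by
  unfold symmKernel
  fun_prop

theorem symmKernel_zero_left (y : E) : symmKernel 0 y = 0 := by simp [symmKernel]

theorem symmKernel_neg_left (x y : E) : symmKernel (-x) y = symmKernel x y := by
  rw [symmKernel, symmKernel, ← neg_add', norm_neg, neg_add_eq_sub, norm_sub_rev y x,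
    add_comm ‖x - y‖]

theorem abs_symmKernel_sub_le (x x' y : E) :
    |symmKernel x y - symmKernel x' y| ≤ ‖x - x'‖ := by
  have h₁ : |‖x - y‖ - ‖x' - y‖| ≤ ‖x - x'‖ := by
    simpa using abs_norm_sub_norm_le (x - y) (x' - y)
  have h₂ : |‖x + y‖ - ‖x' + y‖| ≤ ‖x - x'‖ := by
    simpa using abs_norm_sub_norm_le (x + y) (x' + y)
  rw [abs_le] at *
  constructor <;> simp only [symmKernel] <;> linarith

theorem symmKernel_le_norm (x y : E) : symmKernel x y ≤ ‖x‖ := by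
  simpa [symmKernel_zero_left] using (le_abs_self _).trans (abs_symmKernel_sub_le x 0 y)

variable [NormedSpace ℝ E]

theorem symmKernel_nonneg (x y : E) : 0 ≤ symmKernel x y := by
  have h : ‖(2 : ℝ) • y‖ ≤ ‖x + y‖ + ‖x - y‖ := by
    have h := norm_sub_le (x + y) (x - y)
    rwa [add_sub_sub_cancel, ← two_smul ℝ] at h
  rw [norm_smul, norm_ofNat] at h
  rw [symmKernel]
  linarith

theorem symmKernel_smul (c : ℝ) (x y : E) : symmKernel (c • x) (c • y) = |c| * symmKernel x y := by
  simp only [symmKernel, ← smul_sub, ← smul_add, norm_smul, norm_eq_abs]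
  ring

end SymmKernel

theorem symmKernel_real (s t : ℝ) : symmKernel s t = max (|s| - |t|) 0 := by
  rw [symmKernel, norm_eq_abs, norm_eq_abs, norm_eq_abs]
  rcases abs_cases (s - t) with h | h <;> rcases abs_cases (s + t) with h' | h' <;>
    rcases abs_cases s with hs | hs <;> rcases abs_cases t with ht | ht <;>
      rcases max_cases (|s| - |t|) 0 with hm | hm <;> linarith

theorem integral_symmKernel_mul_comp_abs (h : ℝ → ℝ) (s : ℝ) :
    ∫ t, symmKernel s t * h |t| = 2 * ∫ t in 0..|s|, (|s| - t) * h t := by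
  have cut : ∫ t in Set.Ioi 0, max (|s| - t) 0 * h t = ∫ t in Set.Ioc 0 |s|, (|s| - t) * h t := by
    rw [setIntegral_eq_of_subset_of_forall_sdiff_eq_zero measurableSet_Ioi
      (Set.Ioc_subset_Ioi_self : Set.Ioc 0 |s| ⊆ _)]
    · refine setIntegral_congr_fun measurableSet_Ioc fun t ht ↦ ?_
      simp only [max_eq_left (sub_nonneg.2 ht.2)]
    · intro t ht
      have : |s| < t := not_le.1 fun hts ↦ ht.2 ⟨ht.1, hts⟩
      rw [max_eq_right (by linarith), zero_mul]
  simp only [symmKernel_real]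
  rw [integral_comp_abs (f := fun t ↦ max (|s| - t) 0 * h t), cut,
    intervalIntegral.integral_of_le (abs_nonneg s)]

theorem abs_rpow_neg_sub_le {q m a b : ℝ} (hq : 0 ≤ q) (hm : 0 < m) (ha : m ≤ a) (hb : m ≤ b) :
    |a ^ (-q) - b ^ (-q)| ≤ q * m ^ (-q - 1) * |a - b| := by
  refine Convex.norm_image_sub_le_of_norm_hasDerivWithin_le (s := Set.Ici m)
    (f' := fun t ↦ -q * t ^ (-q - 1))
    (fun t ht ↦ (hasDerivAt_rpow_const (.inl (hm.trans_le ht).ne')).hasDerivWithinAt)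
    (fun t ht ↦ ?_) (convex_Ici m) hb ha
  rw [norm_mul, norm_neg, norm_of_nonneg hq, norm_of_nonneg (rpow_nonneg (hm.trans_le ht).le _)]
  exact mul_le_mul_of_nonneg_left (rpow_le_rpow_of_nonpos hm ht (by linarith)) hq

theorem integral_sub_mul_le_of_deriv2_ge {g g' g'' p : ℝ → ℝ} {s : ℝ} (hs : 0 ≤ s)
    (hg : ∀ t ∈ Set.Icc 0 s, HasDerivAt g (g' t) t)
    (hg' : ∀ t ∈ Set.Icc 0 s, HasDerivAt g' (g'' t) t)
    (hg'' : ContinuousOn g'' (Set.Icc 0 s)) (hp : ContinuousOn p (Set.Icc 0 s))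
    (hg₀ : 0 ≤ g 0) (hg'₀ : 0 ≤ g' 0) (hpg : ∀ t ∈ Set.Icc 0 s, p t ≤ g'' t) :
    ∫ t in 0..s, (s - t) * p t ≤ g s := by
  have h_int {f : ℝ → ℝ} (hf : ContinuousOn f (Set.Icc 0 s)) :
      IntervalIntegrable (fun t ↦ (s - t) * f t) volume 0 s :=
    ContinuousOn.intervalIntegrable (by rw [Set.uIcc_of_le hs]; fun_prop)
  calc ∫ t in 0..s, (s - t) * p t
      ≤ ∫ t in 0..s, (s - t) * g'' t :=
        intervalIntegral.integral_mono_on hs (h_int hp) (h_int hg'') fun t ht ↦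
          mul_le_mul_of_nonneg_left (hpg t ht) (sub_nonneg.2 ht.2)
    _ = ((s - s) * g' s + g s) - ((s - 0) * g' 0 + g 0) := by
        refine intervalIntegral.integral_eq_sub_of_hasDerivAt
          (f := fun t ↦ (s - t) * g' t + g t) (fun t ht ↦ ?_) (h_int hg'')
        rw [Set.uIcc_of_le hs] at ht
        refine ((((hasDerivAt_id t).const_sub s).mul (hg' t ht)).add (hg t ht)).congr_deriv ?_
        simp
    _ ≤ g s := by nlinarith

theorem integral_sub_mul_exp_le {M s : ℝ} (hM : 0 < M) (hs : 0 ≤ s) :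
    ∫ t in 0..s, (s - t) * exp (M * t) ≤ exp (M * s) / M ^ 2 := by
  have hd (t : ℝ) : HasDerivAt (fun t ↦ exp (M * t)) (exp (M * t) * M) t := by
    simpa using ((hasDerivAt_id t).const_mul M).exp
  refine integral_sub_mul_le_of_deriv2_ge (g := fun t ↦ exp (M * t) / M ^ 2)
    (g' := fun t ↦ exp (M * t) / M) (g'' := fun t ↦ exp (M * t)) hs (fun t _ ↦ ?_) (fun t _ ↦ ?_)
    (by fun_prop) (by fun_prop) (by positivity) (by positivity) fun t _ ↦ le_rfl
  · exact ((hd t).div_const (M ^ 2)).congr_deriv (by field_simp)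
  · exact ((hd t).div_const M).congr_deriv (by field_simp)

theorem continuous_integral_abs_sub_mul {f : ℝ → ℝ} (hf : Continuous f) :
    Continuous fun s : ℝ ↦ ∫ t in 0..|s|, (|s| - t) * f t := by
  fun_prop

theorem abs_integral_abs_sub_mul_le {f : ℝ → ℝ} {M C : ℝ} (hM : 0 < M)
    (h : ∀ t, |f t| ≤ C * exp (M * |t|)) (s : ℝ) :
    |∫ t in 0..|s|, (|s| - t) * f t| ≤ C / M ^ 2 * exp (M * |s|) := by
  have hs := abs_nonneg s
  have hC : 0 ≤ C := by simpa using (abs_nonneg _).trans (h 0)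
  have hexp : Continuous fun t ↦ (|s| - t) * (C * exp (M * t)) := by fun_prop
  calc |∫ t in 0..|s|, (|s| - t) * f t|
      ≤ ∫ t in 0..|s|, (|s| - t) * (C * exp (M * t)) := by
        refine intervalIntegral.norm_integral_le_of_norm_le (f := fun t ↦ (|s| - t) * f t) hs
          (.of_forall fun t ht ↦ ?_) (hexp.intervalIntegrable _ _)
        rw [norm_mul, norm_of_nonneg (sub_nonneg.2 ht.2)]
        refine mul_le_mul_of_nonneg_left ?_ (sub_nonneg.2 ht.2)
        simpa [abs_of_pos ht.1] using h t
    _ = C * ∫ t in 0..|s|, (|s| - t) * exp (M * t) := by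
        rw [← intervalIntegral.integral_const_mul]
        simp only [mul_left_comm]
    _ ≤ C / M ^ 2 * exp (M * |s|) := by
        rw [div_mul_comm, mul_comm]
        exact mul_le_mul_of_nonneg_right (integral_sub_mul_exp_le hM hs) hC

theorem exists_eq_add_integral_abs_sub_mul {F : ℝ → ℝ} {L : NNReal} (hF : LipschitzWith L F)
    (a : ℝ) :
    ∃ w : ℝ → ℝ, Continuous w ∧ ∀ s, w s = a + ∫ t in 0..|s|, (|s| - t) * F (w t) := by
  have hM : 0 < √(2 * (L + 1)) := by positivity
  set M := √(2 * (L + 1))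
  have hM2 : M ^ 2 = 2 * (L + 1) := sq_sqrt (by positivity)
  have hlip (u v : ℝ → ℝ) (hu : Continuous u) (hv : Continuous v) (D : ℝ)
      (hD : ∀ t, |u t - v t| ≤ D * exp (M * |t|)) (s : ℝ) :
      |(∫ t in 0..|s|, (|s| - t) * F (u t)) - ∫ t in 0..|s|, (|s| - t) * F (v t)| ≤
        1 / 2 * D * exp (M * |s|) := by
    have hcu : Continuous fun t ↦ F (u t) := hF.continuous.comp hu
    have hcv : Continuous fun t ↦ F (v t) := hF.continuous.comp hv
    have hD0 : 0 ≤ D := by simpa using (abs_nonneg _).trans (hD 0)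
    have hle (t) : |F (u t) - F (v t)| ≤ L * D * exp (M * |t|) := by
      rw [mul_assoc]
      exact (hF.dist_le_mul _ _).trans (mul_le_mul_of_nonneg_left (hD t) L.coe_nonneg)
    have h_int (f : ℝ → ℝ) (hf : Continuous f) :
        IntervalIntegrable (fun t ↦ (|s| - t) * f t) volume 0 |s| :=
      Continuous.intervalIntegrable (by fun_prop) _ _
    rw [← intervalIntegral.integral_sub (h_int _ hcu) (h_int _ hcv)]
    simp only [← mul_sub]
    refine (abs_integral_abs_sub_mul_le hM hle s).trans ?_
    refine mul_le_mul_of_nonneg_right ?_ (exp_pos _).le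
    rw [hM2, div_le_iff₀ (by positivity)]
    nlinarith
  have hbase (s : ℝ) : |∫ t in 0..|s|, (|s| - t) * F a| ≤ |F a| / M ^ 2 * exp (M * |s|) :=
    abs_integral_abs_sub_mul_le (f := fun _ ↦ F a) hM
      (fun t ↦ le_mul_of_one_le_right (abs_nonneg _) (one_le_exp (by positivity))) s
  obtain ⟨w, hw, hfix⟩ := exists_fixedPoint_of_weighted_contraction (W := fun _ ↦ a)
    (g := fun s ↦ exp (M * |s|)) (θ := 2 * |F a| / M ^ 2) (K := 1 / 2)
    (T := fun u s ↦ a + ∫ t in 0..|s|, (|s| - t) * F (u t)) continuous_const (by fun_prop)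
    (fun _ ↦ exp_pos _) (by positivity) (by norm_num) (by norm_num)
    (fun u hu ↦ continuous_const.add <|
      continuous_integral_abs_sub_mul (hF.continuous.comp hu.1))
    (fun u hu v hv D hD s ↦ by
      simpa only [add_sub_add_left_eq_sub] using hlip u v hu.1 hv.1 D hD s)
    (fun s ↦ by simpa only [add_sub_cancel_left] using (hbase s).trans_eq (by ring))
  exact ⟨w, hw.1, fun s ↦ (congr_fun hfix s).symm⟩

theorem lipschitzWith_max_one_rpow {q : ℝ} (hq : 1 ≤ q) :
    LipschitzWith ⟨q - 1, sub_nonneg.2 hq⟩ fun y : ℝ ↦ max y 1 ^ (1 - q) := by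
  refine LipschitzWith.of_dist_le_mul fun a b ↦ ?_
  have h := abs_rpow_neg_sub_le (sub_nonneg.2 hq) one_pos (le_max_right a 1) (le_max_right b 1)
  rw [one_rpow, mul_one, neg_sub] at h
  exact h.trans (mul_le_mul_of_nonneg_left (abs_max_sub_max_le_abs a b 1) (sub_nonneg.2 hq))

theorem integral_abs_sub_mul_nonneg {f : ℝ → ℝ} (hf : ∀ t, 0 ≤ f t) (s : ℝ) :
    0 ≤ ∫ t in 0..|s|, (|s| - t) * f t :=
  intervalIntegral.integral_nonneg (abs_nonneg s) fun t ht ↦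
    mul_nonneg (sub_nonneg.2 ht.2) (hf t)

theorem exists_eq_one_add_integral_abs_sub_mul_rpow {q : ℝ} (hq : 1 ≤ q) :
    ∃ w : ℝ → ℝ, Continuous w ∧ (∀ s, 1 ≤ w s) ∧
      ∀ s, w s = 1 + ∫ t in 0..|s|, (|s| - t) * w t ^ (1 - q) := by
  obtain ⟨w, hw, hws⟩ := exists_eq_add_integral_abs_sub_mul (lipschitzWith_max_one_rpow hq) 1
  have hw1 (s : ℝ) : 1 ≤ w s := by
    rw [hws s]
    exact le_add_of_nonneg_right <| integral_abs_sub_mul_nonneg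
      (fun t ↦ rpow_nonneg (zero_le_one.trans (le_max_right _ _)) _) s
  refine ⟨w, hw, hw1, fun s ↦ ?_⟩
  simpa only [max_eq_left (hw1 _)] using hws s

theorem exists_mul_le_one_add_integral_abs_sub_mul {f : ℝ → ℝ} (hf : Continuous f)
    (hf0 : ∀ t, 0 < f t) :
    ∃ c > 0, ∀ s : ℝ, c * (1 + |s|) ≤ 1 + ∫ t in 0..|s|, (|s| - t) * f t := by
  set I := ∫ t in (0 : ℝ)..1, f t
  have hI : 0 < I := intervalIntegral.intervalIntegral_pos_of_pos (hf.intervalIntegrable _ _) hf0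
    one_pos
  have hI1 := min_le_left I 1
  have hI1' := min_le_right I 1
  refine ⟨min I 1 / 2, half_pos (lt_min hI one_pos), fun s ↦ ?_⟩
  rcases le_total |s| 1 with hs | hs
  · have := integral_abs_sub_mul_nonneg (fun t ↦ (hf0 t).le) s
    nlinarith [abs_nonneg s]
  · have h_int (a b : ℝ) : IntervalIntegrable (fun t ↦ (|s| - t) * f t) volume a b :=
      Continuous.intervalIntegrable (by fun_prop) _ _
    have : (|s| - 1) * I ≤ ∫ t in 0..|s|, (|s| - t) * f t :=
      calc (|s| - 1) * I = ∫ t in (0 : ℝ)..1, (|s| - 1) * f t :=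
            (intervalIntegral.integral_const_mul _ _).symm
        _ ≤ ∫ t in (0 : ℝ)..1, (|s| - t) * f t :=
            intervalIntegral.integral_mono_on zero_le_one
              ((hf.const_mul _).intervalIntegrable _ _) (h_int _ _) fun t ht ↦
                mul_le_mul_of_nonneg_right (by linarith [ht.2]) (hf0 t).le
        _ ≤ ∫ t in 0..|s|, (|s| - t) * f t :=
            intervalIntegral.integral_mono_interval le_rfl zero_le_one hs
              ((ae_restrict_iff' measurableSet_Ioc).2 <| .of_forall fun t ht ↦
                mul_nonneg (sub_nonneg.2 ht.2) (hf0 t).le) (h_int _ _)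
    nlinarith

/-- A function comparable to `1 + |t|` which is so convex that, for large `A`, it is a
supersolution of the linearised equation `g'' = C (1 + |t|)^(-q) g` whenever `5 / 2 ≤ q`. -/
noncomputable def barrier (A t : ℝ) : ℝ := (1 + |t|) * exp (-A * (1 + |t|) ^ (-1 / 2 : ℝ))

section Barrier

variable {A : ℝ}

theorem continuous_barrier : Continuous (barrier A) := by
  unfold barrier
  have : Continuous fun t : ℝ ↦ (1 + |t|) ^ (-1 / 2 : ℝ) :=
    Continuous.rpow_const (by fun_prop) fun t ↦ .inl (by positivity)
  fun_prop

theorem barrier_pos (t : ℝ) : 0 < barrier A t := by unfold barrier; positivity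

theorem barrier_le (hA : 0 ≤ A) (t : ℝ) : barrier A t ≤ 1 + |t| := by
  refine mul_le_of_le_one_right (by positivity) (exp_le_one_iff.2 ?_)
  rw [neg_mul]
  exact neg_nonpos.2 (by positivity)

theorem le_exp_mul_barrier (hA : 0 ≤ A) (t : ℝ) : 1 + |t| ≤ exp A * barrier A t := by
  rw [barrier, mul_left_comm, ← exp_add]
  refine le_mul_of_one_le_right (by positivity) (one_le_exp ?_)
  have : (1 + |t|) ^ (-1 / 2 : ℝ) ≤ 1 :=
    rpow_le_one_of_one_le_of_nonpos (by linarith [abs_nonneg t]) (by norm_num)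
  nlinarith

theorem hasDerivAt_exp_neg_mul_rpow {σ : ℝ} (hσ : 0 < σ) :
    HasDerivAt (fun σ : ℝ ↦ exp (-A * σ ^ (-1 / 2 : ℝ)))
      (exp (-A * σ ^ (-1 / 2 : ℝ)) * (A / 2 * σ ^ (-3 / 2 : ℝ))) σ := by
  refine ((hasDerivAt_rpow_const (.inl hσ.ne')).const_mul (-A)).exp.congr_deriv ?_
  rw [show (-1 / 2 : ℝ) - 1 = -3 / 2 by norm_num]
  ring

theorem rpow_neg_three_halves_mul {σ : ℝ} (hσ : 0 < σ) :
    σ ^ (-3 / 2 : ℝ) * σ = σ ^ (-1 / 2 : ℝ) := by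
  rw [← rpow_add_one hσ.ne']; norm_num

theorem hasDerivAt_mul_exp_neg_mul_rpow {σ : ℝ} (hσ : 0 < σ) :
    HasDerivAt (fun σ : ℝ ↦ σ * exp (-A * σ ^ (-1 / 2 : ℝ)))
      (exp (-A * σ ^ (-1 / 2 : ℝ)) * (1 + A / 2 * σ ^ (-1 / 2 : ℝ))) σ := by
  refine ((hasDerivAt_id σ).mul (hasDerivAt_exp_neg_mul_rpow hσ)).congr_deriv ?_
  rw [id, ← rpow_neg_three_halves_mul hσ]
  ring

theorem hasDerivAt_deriv_mul_exp_neg_mul_rpow {σ : ℝ} (hσ : 0 < σ) :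
    HasDerivAt (fun σ : ℝ ↦ exp (-A * σ ^ (-1 / 2 : ℝ)) * (1 + A / 2 * σ ^ (-1 / 2 : ℝ)))
      (exp (-A * σ ^ (-1 / 2 : ℝ)) *
        (A / 4 * σ ^ (-3 / 2 : ℝ) + A ^ 2 / 4 * σ ^ (-3 / 2 : ℝ) * σ ^ (-1 / 2 : ℝ))) σ := by
  refine ((hasDerivAt_exp_neg_mul_rpow hσ).mul <|
    ((hasDerivAt_rpow_const (.inl hσ.ne')).const_mul (A / 2)).const_add 1).congr_deriv ?_
  rw [show (-1 / 2 : ℝ) - 1 = -3 / 2 by norm_num]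
  ring

theorem integral_mul_barrier_le {q : ℝ} (hq : 5 / 2 ≤ q) (hA : 0 < A) (s : ℝ) :
    ∫ t in 0..|s|, (|s| - t) * ((1 + |t|) ^ (-q) * barrier A t) ≤ 4 / A * barrier A s := by
  have hσ (t) (ht : t ∈ Set.Icc 0 |s|) : 0 < 1 + t := by linarith [ht.1]
  have hcont (r : ℝ) : ContinuousOn (fun t : ℝ ↦ (1 + t) ^ r) (Set.Icc 0 |s|) :=
    ContinuousOn.rpow_const (by fun_prop) fun t ht ↦ .inl (hσ t ht).ne'
  have hcont' : Continuous fun t : ℝ ↦ (1 + |t|) ^ (-q) :=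
    Continuous.rpow_const (by fun_prop) fun t ↦ .inl (by positivity)
  have hcb := continuous_barrier (A := A)
  have h := integral_sub_mul_le_of_deriv2_ge (s := |s|)
    (p := fun t ↦ A / 4 * ((1 + |t|) ^ (-q) * barrier A t)) (abs_nonneg s)
    (fun t ht ↦ (hasDerivAt_mul_exp_neg_mul_rpow (A := A) (hσ t ht)).comp_const_add 1 t)
    (fun t ht ↦ (hasDerivAt_deriv_mul_exp_neg_mul_rpow (A := A) (hσ t ht)).comp_const_add 1 t)
    (by have := hcont (-1 / 2); have := hcont (-3 / 2); fun_prop) (by fun_prop)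
    (by positivity) (by positivity) fun t ht ↦ ?_
  · simp only [mul_left_comm _ (A / 4), intervalIntegral.integral_const_mul] at h
    rw [div_mul_eq_mul_div, le_div_iff₀ hA, barrier]
    linarith
  · have hσt := hσ t ht
    have hpow : (1 + t) ^ (-q) * (1 + t) ≤ (1 + t) ^ (-3 / 2 : ℝ) := by
      rw [← rpow_add_one hσt.ne']
      exact rpow_le_rpow_of_exponent_le (by linarith [ht.1]) (by linarith)
    rw [barrier, abs_of_nonneg ht.1]
    calc A / 4 * ((1 + t) ^ (-q) * ((1 + t) * exp (-A * (1 + t) ^ (-1 / 2 : ℝ))))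
        = exp (-A * (1 + t) ^ (-1 / 2 : ℝ)) * (A / 4 * ((1 + t) ^ (-q) * (1 + t))) := by ring
      _ ≤ _ := by
        refine mul_le_mul_of_nonneg_left ?_ (exp_pos _).le
        refine le_add_of_le_of_nonneg (mul_le_mul_of_nonneg_left hpow (by positivity)) ?_
        positivity

end Barrier

/-- `w` solves `w = 1 + l ∫ k(·, t) w(t)^(1 - q) dt`, where `k` is `symmKernel`, grows linearly, and
`g` is a supersolution of the linearisation of this equation which controls `w - 1`. -/
structure IsProfile (q l C : ℝ) (w g : ℝ → ℝ) : Prop where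
  continuous_sol : Continuous w
  continuous_super : Continuous g
  one_le : ∀ s, 1 ≤ w s
  exists_mul_le : ∃ c > 0, ∀ s, c * (1 + |s|) ≤ w s
  super_pos : ∀ s, 0 < g s
  super_le : ∀ s, g s ≤ w s / 2
  sol_sub_one_eq : ∀ s, w s - 1 = l * ∫ t, symmKernel s t * w t ^ (1 - q)
  sol_sub_one_le : ∀ s, w s - 1 ≤ C * g s
  linearised_le : ∀ s, (q - 1) * (l * ∫ t, symmKernel s t * (g t * w t ^ (-q))) ≤ g s / 8

theorem integral_symmKernel_mul_comp_mul {η : ℝ} (hη : 0 < η) (f : ℝ → ℝ) (s : ℝ) :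
    η ^ 2 * ∫ t, symmKernel s t * f (η * t) = ∫ t, symmKernel (η * s) t * f t := by
  have h := Measure.integral_comp_mul_left (fun t ↦ symmKernel (η * s) t * f t) η
  have hk (t : ℝ) : symmKernel (η * s) (η * t) = η * symmKernel s t := by
    simpa [abs_of_pos hη] using symmKernel_smul η s t
  simp only [hk, mul_assoc, integral_const_mul, abs_inv, abs_of_pos hη, smul_eq_mul] at h
  rw [sq, mul_assoc, h, mul_inv_cancel_left₀ hη.ne']

namespace IsProfile

variable {q l C η : ℝ} {w g : ℝ → ℝ}

theorem comp_mul (h : IsProfile q l C w g) (hη : 0 < η) :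
    IsProfile q (η ^ 2 * l) C (fun s ↦ w (η * s)) (fun s ↦ g (η * s)) where
  continuous_sol := h.continuous_sol.comp (continuous_const_mul η)
  continuous_super := h.continuous_super.comp (continuous_const_mul η)
  one_le s := h.one_le _
  exists_mul_le := by
    obtain ⟨c, hc, hcw⟩ := h.exists_mul_le
    refine ⟨c * min 1 η, by positivity, fun s ↦ le_trans ?_ (hcw (η * s))⟩
    rw [mul_assoc, abs_mul, abs_of_pos hη]
    refine mul_le_mul_of_nonneg_left ?_ hc.le
    nlinarith [min_le_left 1 η, min_le_right 1 η, abs_nonneg s]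
  super_pos s := h.super_pos _
  super_le s := h.super_le _
  sol_sub_one_eq s := by
    rw [h.sol_sub_one_eq, mul_comm (η ^ 2), mul_assoc,
      integral_symmKernel_mul_comp_mul hη fun t ↦ w t ^ (1 - q)]
  sol_sub_one_le s := h.sol_sub_one_le _
  linearised_le s := by
    rw [mul_comm (η ^ 2), mul_assoc,
      integral_symmKernel_mul_comp_mul hη fun t ↦ g t * w t ^ (-q)]
    exact h.linearised_le _

end IsProfile

theorem integral_abs_sub_mul_le_of_le {f g : ℝ → ℝ} (hf : Continuous f) (hg : Continuous g)
    (hfg : ∀ t, f t ≤ g t) (s : ℝ) :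
    ∫ t in 0..|s|, (|s| - t) * f t ≤ ∫ t in 0..|s|, (|s| - t) * g t :=
  intervalIntegral.integral_mono_on (abs_nonneg s)
    (Continuous.intervalIntegrable (by fun_prop) _ _)
    (Continuous.intervalIntegrable (by fun_prop) _ _) fun t ht ↦
      mul_le_mul_of_nonneg_left (hfg t) (sub_nonneg.2 ht.2)

section ProfileBounds

variable {q c A : ℝ} {w : ℝ → ℝ}

theorem integral_barrier_mul_rpow_le (hq : 5 / 2 ≤ q) (hA : 0 < A) (hc : 0 < c)
    (hw : Continuous w) (hcw : ∀ s, c * (1 + |s|) ≤ w s) (s : ℝ) :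
    ∫ t in 0..|s|, (|s| - t) * (barrier A t * w t ^ (-q)) ≤ c ^ (-q) * (4 / A * barrier A s) := by
  have hσ (t : ℝ) : 0 < 1 + |t| := by positivity
  have hw0 (t) : 0 < w t := (mul_pos hc (hσ t)).trans_le (hcw t)
  have hcσ : Continuous fun t : ℝ ↦ (1 + |t|) ^ (-q) :=
    Continuous.rpow_const (by fun_prop) fun t ↦ .inl (hσ t).ne'
  have hcb := continuous_barrier (A := A)
  calc ∫ t in 0..|s|, (|s| - t) * (barrier A t * w t ^ (-q))
      ≤ ∫ t in 0..|s|, (|s| - t) * (c ^ (-q) * ((1 + |t|) ^ (-q) * barrier A t)) := by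
        refine integral_abs_sub_mul_le_of_le
          (hcb.mul (hw.rpow_const fun t ↦ .inl (hw0 t).ne')) (by fun_prop) (fun t ↦ ?_) s
        rw [← mul_assoc, ← mul_rpow hc.le (hσ t).le, mul_comm]
        exact mul_le_mul_of_nonneg_right
          (rpow_le_rpow_of_nonpos (mul_pos hc (hσ t)) (hcw t) (by linarith)) (barrier_pos t).le
    _ = c ^ (-q) * ∫ t in 0..|s|, (|s| - t) * ((1 + |t|) ^ (-q) * barrier A t) := by
        simp only [mul_left_comm _ (c ^ (-q)), intervalIntegral.integral_const_mul]
    _ ≤ c ^ (-q) * (4 / A * barrier A s) :=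
        mul_le_mul_of_nonneg_left (integral_mul_barrier_le hq hA s) (rpow_nonneg hc.le _)

theorem integral_rpow_le_barrier (hq : 5 / 2 ≤ q) (hA : 0 < A) (hc : 0 < c)
    (hw : Continuous w) (hcw : ∀ s, c * (1 + |s|) ≤ w s) (s : ℝ) :
    ∫ t in 0..|s|, (|s| - t) * w t ^ (1 - q) ≤
      c ^ (1 - q) * exp A * (4 / A * barrier A s) := by
  have hσ (t : ℝ) : 0 < 1 + |t| := by positivity
  have hw0 (t) : 0 < w t := (mul_pos hc (hσ t)).trans_le (hcw t)
  have hcσ : Continuous fun t : ℝ ↦ (1 + |t|) ^ (-q) :=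
    Continuous.rpow_const (by fun_prop) fun t ↦ .inl (hσ t).ne'
  have hcb := continuous_barrier (A := A)
  calc ∫ t in 0..|s|, (|s| - t) * w t ^ (1 - q)
      ≤ ∫ t in 0..|s|, (|s| - t) *
          (c ^ (1 - q) * exp A * ((1 + |t|) ^ (-q) * barrier A t)) := by
        refine integral_abs_sub_mul_le_of_le
          (hw.rpow_const fun t ↦ .inl (hw0 t).ne') (by fun_prop) (fun t ↦ ?_) s
        calc w t ^ (1 - q) ≤ (c * (1 + |t|)) ^ (1 - q) :=
              rpow_le_rpow_of_nonpos (mul_pos hc (hσ t)) (hcw t) (by linarith)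
          _ = c ^ (1 - q) * ((1 + |t|) ^ (-q) * (1 + |t|)) := by
              rw [mul_rpow hc.le (hσ t).le, ← rpow_add_one (hσ t).ne', neg_add_eq_sub]
          _ ≤ c ^ (1 - q) * ((1 + |t|) ^ (-q) * (exp A * barrier A t)) := by
              have := le_exp_mul_barrier hA.le t
              gcongr
          _ = c ^ (1 - q) * exp A * ((1 + |t|) ^ (-q) * barrier A t) := by ring
    _ = c ^ (1 - q) * exp A * ∫ t in 0..|s|, (|s| - t) * ((1 + |t|) ^ (-q) * barrier A t) := by
        simp only [mul_left_comm _ (c ^ (1 - q) * exp A), intervalIntegral.integral_const_mul]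
    _ ≤ c ^ (1 - q) * exp A * (4 / A * barrier A s) :=
        mul_le_mul_of_nonneg_left (integral_mul_barrier_le hq hA s) (by positivity)

end ProfileBounds

theorem exists_isProfile {q : ℝ} (hq : 5 / 2 ≤ q) : ∃ C w g, IsProfile q (1 / 2) C w g := by
  obtain ⟨w, hw, hw1, hws⟩ := exists_eq_one_add_integral_abs_sub_mul_rpow (by linarith : 1 ≤ q)
  have hw0 (s) : 0 < w s := one_pos.trans_le (hw1 s)
  obtain ⟨c, hc, hcw⟩ := exists_mul_le_one_add_integral_abs_sub_mul
    (hw.rpow_const fun s ↦ .inl (hw0 s).ne') fun s ↦ rpow_pos_of_pos (hw0 s) (1 - q)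
  replace hcw (s : ℝ) : c * (1 + |s|) ≤ w s := (hcw s).trans_eq (hws s).symm
  have hwabs (s : ℝ) : w |s| = w s := by rw [hws, hws s, abs_abs]
  have hgabs (A s : ℝ) : barrier A |s| = barrier A s := by rw [barrier, barrier, abs_abs]
  set A := 32 * (q - 1) * c ^ (-q) with hAdef
  have hq1 : 0 < q - 1 := by linarith
  have hA : 0 < A := by positivity
  have hAq : (q - 1) * (c ^ (-q) * (4 / A)) = 1 / 8 := by
    rw [hAdef]
    field_simp
    norm_num
  have hfold (f : ℝ → ℝ) (hf : ∀ t, f |t| = f t) (s : ℝ) :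
      1 / 2 * ∫ t, symmKernel s t * f t = ∫ t in 0..|s|, (|s| - t) * f t := by
    have := integral_symmKernel_mul_comp_abs f s
    simp only [hf] at this
    linarith
  refine ⟨2 / c * (c ^ (1 - q) * exp A * (4 / A)), w, fun s ↦ c / 2 * barrier A s, hw,
    continuous_barrier.const_mul _, hw1, ⟨c, hc, hcw⟩, fun s ↦ mul_pos (by positivity)
    (barrier_pos s), fun s ↦ ?_, fun s ↦ ?_, fun s ↦ ?_, fun s ↦ ?_⟩
  · have := (mul_le_mul_of_nonneg_left (barrier_le hA.le s) hc.le).trans (hcw s)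
    linarith
  · rw [hfold (fun t ↦ w t ^ (1 - q)) (by simp only [hwabs, implies_true])]
    linarith [hws s]
  · rw [hws s, add_sub_cancel_left]
    refine (integral_rpow_le_barrier hq hA hc hw hcw s).trans_eq ?_
    field_simp
  · rw [hfold (fun t ↦ c / 2 * barrier A t * w t ^ (-q))
      (by simp only [hwabs, hgabs, implies_true])]
    have h := integral_barrier_mul_rpow_le hq hA hc hw hcw s
    simp only [mul_assoc (c / 2), mul_left_comm _ (c / 2), intervalIntegral.integral_const_mul]
    calc c / 2 * ((q - 1) * ∫ t in 0..|s|, (|s| - t) * (barrier A t * w t ^ (-q)))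
        ≤ c / 2 * ((q - 1) * (c ^ (-q) * (4 / A * barrier A s))) := by gcongr
      _ = (q - 1) * (c ^ (-q) * (4 / A)) * (c / 2 * barrier A s) := by ring
      _ = c / 2 * barrier A s / 8 := by rw [hAq]; ring

section TransverseIntegral

variable {A a : ℝ}

theorem lintegral_Ioi_mul_add_sq_rpow (hA : 0 < A) (ha : 1 < a) :
    ∫⁻ r in Set.Ioi (0 : ℝ), ENNReal.ofReal (r * (A + r ^ 2) ^ (-a)) =
      ENNReal.ofReal (A ^ (1 - a) / (2 * (a - 1))) := by
  have ha' : a - 1 ≠ 0 := by linarith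
  have hd (r : ℝ) : HasDerivAt (fun r ↦ -(A + r ^ 2) ^ (1 - a) / (2 * (a - 1)))
      (r * (A + r ^ 2) ^ (-a)) r := by
    have h := (((hasDerivAt_pow 2 r).const_add A).rpow_const (p := 1 - a)
      (.inl (by positivity))).neg.div_const (2 * (a - 1))
    refine h.congr_deriv ?_
    rw [sub_sub_cancel_left]
    field_simp
    ring
  have hlim : Tendsto (fun r : ℝ ↦ -(A + r ^ 2) ^ (1 - a) / (2 * (a - 1))) atTop (𝓝 0) := by
    have h := ((tendsto_rpow_neg_atTop (sub_pos.2 ha)).comp <|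
      tendsto_atTop_add_const_left atTop A (tendsto_pow_atTop two_ne_zero)).neg.div_const
        (2 * (a - 1))
    simpa using h
  have hnn : ∀ r ∈ Set.Ioi (0 : ℝ), 0 ≤ r * (A + r ^ 2) ^ (-a) := fun r hr ↦
    mul_nonneg (le_of_lt hr) (by positivity)
  rw [← ofReal_integral_eq_lintegral_ofReal
      (integrableOn_Ioi_deriv_of_nonneg' (fun r _ ↦ hd r) hnn hlim)
      ((ae_restrict_iff' measurableSet_Ioi).2 (.of_forall hnn)),
    integral_Ioi_of_hasDerivAt_of_nonneg' (fun r _ ↦ hd r) hnn hlim]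
  simp [neg_div]

theorem lintegral_add_sq_add_sq_rpow (hA : 0 < A) (ha : 1 < a) :
    ∫⁻ p : ℝ × ℝ, ENNReal.ofReal ((A + (p.1 ^ 2 + p.2 ^ 2)) ^ (-a)) =
      ENNReal.ofReal (π / (a - 1) * A ^ (1 - a)) := by
  have hpolar : ∀ p ∈ polarCoord.target, ENNReal.ofReal p.1 •
      ENNReal.ofReal ((A + ((polarCoord.symm p).1 ^ 2 + (polarCoord.symm p).2 ^ 2)) ^ (-a)) =
      ENNReal.ofReal (p.1 * (A + p.1 ^ 2) ^ (-a)) * 1 := fun p hp ↦ by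
    have hsq : (p.1 * cos p.2) ^ 2 + (p.1 * sin p.2) ^ 2 = p.1 ^ 2 := by
      linear_combination p.1 ^ 2 * cos_sq_add_sin_sq p.2
    rw [smul_eq_mul, ← ENNReal.ofReal_mul (le_of_lt hp.1), mul_one, polarCoord_symm_apply, hsq]
  rw [← lintegral_comp_polarCoord_symm,
    setLIntegral_congr_fun polarCoord.open_target.measurableSet hpolar, polarCoord_target,
    Measure.volume_eq_prod, ← Measure.prod_restrict,
    lintegral_prod_mul (f := fun r : ℝ ↦ ENNReal.ofReal (r * (A + r ^ 2) ^ (-a)))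
      (g := fun _ ↦ 1) (by fun_prop) (by fun_prop), lintegral_Ioi_mul_add_sq_rpow hA ha,
    lintegral_one, Measure.restrict_apply_univ, Real.volume_Ioo,
    ← ENNReal.ofReal_mul (by have := sub_pos.2 ha; positivity)]
  congr 1
  have : a - 1 ≠ 0 := by linarith
  field_simp
  ring

theorem lintegral_euclideanSpace_fin_three {F : ℝ → ℝ × ℝ → ENNReal}
    (hF : Measurable (Function.uncurry F)) :
    ∫⁻ y : ℝ³, F (y 2) (y 0, y 1) = ∫⁻ t : ℝ, ∫⁻ p : ℝ × ℝ, F t p := by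
  have h := (((MeasurePreserving.id volume).prod (volume_preserving_finTwoArrow ℝ)).comp
    ((volume_preserving_piFinSuccAbove (fun _ : Fin 3 ↦ ℝ) 2).comp
      (PiLp.volume_preserving_ofLp (Fin 3)))).lintegral_comp hF
  rwa [lintegral_prod _ hF.aemeasurable] at h

variable {Φ ω : ℝ → ℝ}

theorem lintegral_mul_add_sq_add_sq_rpow (hΦ : Measurable Φ) (hω : Measurable ω)
    (hΦ0 : ∀ t, 0 ≤ Φ t) (hω0 : ∀ t, 0 < ω t) (ha : 1 < a) :
    ∫⁻ y : ℝ³, ENNReal.ofReal (Φ (y 2) * (ω (y 2) + (y 0 ^ 2 + y 1 ^ 2)) ^ (-a)) =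
      ∫⁻ t, ENNReal.ofReal (π / (a - 1) * (Φ t * ω t ^ (1 - a))) := by
  rw [lintegral_euclideanSpace_fin_three (F := fun t p ↦
    ENNReal.ofReal (Φ t * (ω t + (p.1 ^ 2 + p.2 ^ 2)) ^ (-a)))
    (by unfold Function.uncurry; fun_prop)]
  refine lintegral_congr fun t ↦ ?_
  simp_rw [ENNReal.ofReal_mul (hΦ0 t)]
  rw [lintegral_const_mul _ (by fun_prop), lintegral_add_sq_add_sq_rpow (hω0 t) ha,
    ← ENNReal.ofReal_mul (hΦ0 t), mul_left_comm]

theorem integral_mul_add_sq_add_sq_rpow (hΦ : Measurable Φ) (hω : Measurable ω)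
    (hΦ0 : ∀ t, 0 ≤ Φ t) (hω0 : ∀ t, 0 < ω t) (ha : 1 < a) :
    ∫ y : ℝ³, Φ (y 2) * (ω (y 2) + (y 0 ^ 2 + y 1 ^ 2)) ^ (-a) =
      π / (a - 1) * ∫ t, Φ t * ω t ^ (1 - a) := by
  have := sub_pos.2 ha
  rw [← integral_const_mul, integral_eq_lintegral_of_nonneg_ae, integral_eq_lintegral_of_nonneg_ae,
    lintegral_mul_add_sq_add_sq_rpow hΦ hω hΦ0 hω0 ha]
  · exact .of_forall fun t ↦ mul_nonneg (by positivity)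
      (mul_nonneg (hΦ0 t) (rpow_nonneg (hω0 t).le _))
  · exact Measurable.aestronglyMeasurable (by fun_prop)
  · exact .of_forall fun y ↦ mul_nonneg (hΦ0 _)
      (rpow_nonneg (add_nonneg (hω0 _).le (by positivity)) _)
  · exact Measurable.aestronglyMeasurable (by fun_prop)

theorem integrable_add_sq_add_sq_rpow (hω : Measurable ω) (hω0 : ∀ t, 0 < ω t) (ha : 1 < a)
    (hi : Integrable fun t ↦ ω t ^ (1 - a)) :
    Integrable fun y : ℝ³ ↦ (ω (y 2) + (y 0 ^ 2 + y 1 ^ 2)) ^ (-a) := by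
  refine ⟨Measurable.aestronglyMeasurable (by fun_prop), ?_⟩
  have h := lintegral_mul_add_sq_add_sq_rpow (Φ := fun _ ↦ 1) measurable_const hω
    (fun _ ↦ zero_le_one) hω0 ha
  simp only [one_mul] at h
  rw [hasFiniteIntegral_iff_ofReal, h]
  · exact (hi.const_mul _).lintegral_lt_top
  · exact .of_forall fun y ↦ rpow_nonneg (add_nonneg (hω0 _).le (by positivity)) _

end TransverseIntegral

section SymmKernelIntegral

variable {E : Type*} [NormedAddCommGroup E] [NormedSpace ℝ E]

theorem integrable_symmKernel_mul {X : Type*} [TopologicalSpace X] [MeasurableSpace X]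
    [OpensMeasurableSpace X] {μ : Measure X} {f : X → ℝ} (hf : Integrable f μ) {z : X → E}
    (hz : Continuous z) (x : E) : Integrable (fun y ↦ symmKernel x (z y) * f y) μ := by
  refine hf.bdd_mul (c := ‖x‖) (Continuous.aestronglyMeasurable (by fun_prop))
    (.of_forall fun y ↦ ?_)
  rw [norm_of_nonneg (symmKernel_nonneg x (z y))]
  exact symmKernel_le_norm x (z y)

theorem lipschitzWith_integral_symmKernel_mul [MeasurableSpace E] [BorelSpace E] {μ : Measure E}
    {f : E → ℝ} (hf : Integrable f μ) :
    LipschitzWith (∫ y, |f y| ∂μ).toNNReal fun x ↦ ∫ y, symmKernel x y * f y ∂μ := by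
  refine LipschitzWith.of_dist_le_mul fun x x' ↦ ?_
  rw [dist_eq_norm, dist_eq_norm, ← integral_sub (integrable_symmKernel_mul hf continuous_id' x)
      (integrable_symmKernel_mul hf continuous_id' x'),
    coe_toNNReal _ (integral_nonneg fun _ ↦ abs_nonneg _), ← integral_mul_const]
  refine norm_integral_le_of_norm_le (hf.abs.mul_const _) (.of_forall fun y ↦ ?_)
  rw [← sub_mul, norm_mul, mul_comm]
  exact mul_le_mul_of_nonneg_left (abs_symmKernel_sub_le x x' y) (norm_nonneg _)

end SymmKernelIntegral

theorem norm_le_abs_add_abs_add_abs (x : ℝ³) : ‖x‖ ≤ |x 0| + |x 1| + |x 2| := by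
  rw [EuclideanSpace.norm_eq, Fin.sum_univ_three]
  refine sqrt_le_iff.2 ⟨by positivity, ?_⟩
  simp only [norm_eq_abs]
  nlinarith [mul_nonneg (abs_nonneg (x 0)) (abs_nonneg (x 1)),
    mul_nonneg (abs_nonneg (x 0)) (abs_nonneg (x 2)),
    mul_nonneg (abs_nonneg (x 1)) (abs_nonneg (x 2))]

theorem abs_symmKernel_sub_symmKernel_le (x y : ℝ³) :
    |symmKernel x y - symmKernel (x 2) (y 2)| ≤ (1 + |x 0| + |x 1|) * (1 + |y 0| + |y 1|) := by
  have hlow (z : ℝ³) : |z 2| ≤ ‖z‖ := PiLp.norm_apply_le z 2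
  have hsum : |symmKernel x y - symmKernel (x 2) (y 2)| ≤ |x 0| + |x 1| + |y 0| + |y 1| := by
    have h₁ := hlow (x - y)
    have h₂ := hlow (x + y)
    have h₃ := norm_le_abs_add_abs_add_abs (x - y)
    have h₄ := norm_le_abs_add_abs_add_abs (x + y)
    simp only [PiLp.sub_apply, PiLp.add_apply] at h₁ h₂ h₃ h₄
    rw [abs_le]
    constructor <;> simp only [symmKernel, norm_eq_abs] <;>
      linarith [hlow y, norm_le_abs_add_abs_add_abs y, abs_sub (x 0) (y 0), abs_sub (x 1) (y 1),
        abs_add_le (x 0) (y 0), abs_add_le (x 1) (y 1), abs_nonneg (x 0), abs_nonneg (x 1)]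
  refine hsum.trans ?_
  nlinarith [abs_nonneg (x 0), abs_nonneg (x 1), abs_nonneg (y 0), abs_nonneg (y 1),
    mul_nonneg (add_nonneg (abs_nonneg (x 0)) (abs_nonneg (x 1)))
      (add_nonneg (abs_nonneg (y 0)) (abs_nonneg (y 1)))]

theorem integrable_rpow_neg_of_mul_one_add_norm_le {E : Type*} [NormedAddCommGroup E]
    [NormedSpace ℝ E] [FiniteDimensional ℝ E] [MeasurableSpace E] [BorelSpace E] {μ : Measure E}
    [μ.IsAddHaarMeasure] {q c : ℝ} {u : E → ℝ} (hq : Module.finrank ℝ E < q) (hu : Continuous u)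
    (hc : 0 < c) (hcu : ∀ x, c * (1 + ‖x‖) ≤ u x) : Integrable (fun x ↦ u x ^ (-q)) μ := by
  have hσ (x : E) : 0 < c * (1 + ‖x‖) := by positivity
  have hu0 (x) : 0 < u x := (hσ x).trans_le (hcu x)
  refine ((integrable_one_add_norm hq).const_mul (c ^ (-q))).mono'
    (hu.rpow_const fun x ↦ .inl (hu0 x).ne').aestronglyMeasurable (.of_forall fun x ↦ ?_)
  rw [norm_of_nonneg (rpow_nonneg (hu0 x).le _), ← mul_rpow hc.le (by positivity)]
  exact rpow_le_rpow_of_nonpos (hσ x) (hcu x) (neg_nonpos.2 ((Nat.cast_nonneg _).trans hq.le))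

/-- The function on `ℝ³` which behaves like `w` along the axis and quadratically across it. -/
def axialLift (w : ℝ → ℝ) (y : ℝ³) : ℝ := w (y 2) + (y 0 ^ 2 + y 1 ^ 2)

/-- The weight of the norm in which the fixed point argument around `axialLift w` is run. -/
def axialWeight (δ : ℝ) (g : ℝ → ℝ) (y : ℝ³) : ℝ := δ * (1 + |y 0| + |y 1|) + g (y 2)

section AxialLift

variable {δ : ℝ} {w g : ℝ → ℝ}

@[fun_prop]
theorem continuous_axialLift (hw : Continuous w) : Continuous (axialLift w) := by
  unfold axialLift
  fun_prop

@[fun_prop]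
theorem continuous_axialWeight (hg : Continuous g) : Continuous (axialWeight δ g) := by
  unfold axialWeight
  fun_prop

theorem one_le_axialLift (hw : ∀ s, 1 ≤ w s) (y : ℝ³) : 1 ≤ axialLift w y := by
  have := hw (y 2)
  rw [axialLift]
  nlinarith

theorem axialLift_pos (hw : ∀ s, 1 ≤ w s) (y : ℝ³) : 0 < axialLift w y :=
  one_pos.trans_le (one_le_axialLift hw y)

theorem one_add_abs_add_abs_le_axialLift (hw : ∀ s, 1 ≤ w s) (y : ℝ³) :
    1 + |y 0| + |y 1| ≤ 2 * axialLift w y := by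
  have := hw (y 2)
  rw [axialLift]
  nlinarith [sq_nonneg (|y 0| - 1), sq_nonneg (|y 1| - 1), sq_abs (y 0), sq_abs (y 1)]

theorem axialWeight_pos (hδ : 0 ≤ δ) (hg : ∀ s, 0 < g s) (y : ℝ³) : 0 < axialWeight δ g y :=
  add_pos_of_nonneg_of_pos (by positivity) (hg _)

theorem axialWeight_le_axialLift (hδ : 0 ≤ δ) (hδ4 : δ ≤ 1 / 4) (hw : ∀ s, 1 ≤ w s)
    (hgw : ∀ s, g s ≤ w s / 2) (y : ℝ³) : axialWeight δ g y ≤ axialLift w y := by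
  have h := mul_le_mul_of_nonneg_left (one_add_abs_add_abs_le_axialLift hw y) hδ
  have h' := mul_le_mul_of_nonneg_right hδ4 (axialLift_pos hw y).le
  have hg : g (y 2) ≤ axialLift w y / 2 := (hgw _).trans (by rw [axialLift]; nlinarith)
  rw [axialWeight]
  linarith

theorem axialLift_mul_rpow_neg_sub_one (hw : ∀ s, 1 ≤ w s) (q : ℝ) (y : ℝ³) :
    axialLift w y * axialLift w y ^ (-q - 1) = axialLift w y ^ (-q) := by
  rw [mul_comm, ← rpow_add_one (axialLift_pos hw y).ne', sub_add_cancel]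

theorem axialLift_mul_rpow_neg (hw : ∀ s, 1 ≤ w s) (q : ℝ) (y : ℝ³) :
    axialLift w y * axialLift w y ^ (-q) = axialLift w y ^ (1 - q) := by
  rw [mul_comm, ← rpow_add_one (axialLift_pos hw y).ne', neg_add_eq_sub]

theorem continuous_axialLift_rpow (hw : Continuous w) (hw1 : ∀ s, 1 ≤ w s) (a : ℝ) :
    Continuous fun y ↦ axialLift w y ^ a :=
  (continuous_axialLift hw).rpow_const fun y ↦ .inl (axialLift_pos hw1 y).ne'

end AxialLift

namespace IsProfile

variable {q l C a : ℝ} {w g : ℝ → ℝ}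

theorem sol_pos (h : IsProfile q l C w g) (s : ℝ) : 0 < w s := one_pos.trans_le (h.one_le s)

theorem exists_mul_le_axialLift (h : IsProfile q l C w g) :
    ∃ c > 0, ∀ y : ℝ³, c * (1 + ‖y‖) ≤ axialLift w y := by
  obtain ⟨c, hc, hcw⟩ := h.exists_mul_le
  refine ⟨(2 + 1 / c)⁻¹, by positivity, fun y ↦ ?_⟩
  rw [inv_mul_le_iff₀ (by positivity), add_mul, one_div_mul_eq_div]
  have h₁ := one_add_abs_add_abs_le_axialLift h.one_le y
  have h₂ : 1 + |y 2| ≤ axialLift w y / c := by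
    rw [le_div_iff₀' hc]
    exact (hcw _).trans (by rw [axialLift]; nlinarith)
  linarith [norm_le_abs_add_abs_add_abs y]

theorem integrable_axialLift_rpow (h : IsProfile q l C w g) (ha : 2 < a) :
    Integrable fun y ↦ axialLift w y ^ (-a) := by
  obtain ⟨c, hc, hcw⟩ := h.exists_mul_le
  refine integrable_add_sq_add_sq_rpow h.continuous_sol.measurable h.sol_pos (by linarith) ?_
  simpa using integrable_rpow_neg_of_mul_one_add_norm_le (μ := volume) (q := a - 1)
    (by rw [Module.finrank_self]; push_cast; linarith) h.continuous_sol hc hcw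

theorem integral_symmKernel_mul_axialLift_rpow (h : IsProfile q l C w g) (hq : 1 < q) (s : ℝ) :
    l * (q - 1) / π * ∫ y : ℝ³, symmKernel s (y 2) * axialLift w y ^ (-q) = w s - 1 := by
  have := integral_mul_add_sq_add_sq_rpow (Φ := symmKernel s) (by fun_prop)
    h.continuous_sol.measurable (symmKernel_nonneg s) h.sol_pos hq
  have hq' := sub_pos.2 hq
  unfold axialLift
  rw [this, h.sol_sub_one_eq]
  field_simp

theorem integral_symmKernel_mul_super_mul_axialLift_rpow_le (h : IsProfile q l C w g)
    (hq : 1 < q) (s : ℝ) :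
    q * (l * (q - 1) / π * ∫ y : ℝ³, symmKernel s (y 2) * (g (y 2) * axialLift w y ^ (-q - 1))) ≤
      g s / 8 := by
  have := integral_mul_add_sq_add_sq_rpow (Φ := fun t ↦ symmKernel s t * g t) (a := q + 1)
    (((continuous_symmKernel continuous_const continuous_id).mul h.continuous_super).measurable)
    h.continuous_sol.measurable (fun t ↦ mul_nonneg (symmKernel_nonneg s t) (h.super_pos t).le)
    h.sol_pos (by linarith)
  have hexp : 1 - (q + 1) = -q := by ring
  simp only [hexp, mul_assoc, add_sub_cancel_right, neg_add'] at this
  unfold axialLift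
  rw [this]
  refine le_of_eq_of_le ?_ (h.linearised_le s)
  field_simp

theorem integral_axialLift_comp_mul (h : IsProfile q l C w g) (hq : 2 < q) {η : ℝ}
    (hη : 0 < η) :
    η ^ 2 * l * (q - 1) / π * ∫ y, axialLift (fun s ↦ w (η * s)) y ^ (1 - q) =
      η * (l * (q - 1) / π * ∫ y, axialLift w y ^ (1 - q)) := by
  have hlift {η : ℝ} (hη : 0 < η) : ∫ y, axialLift (fun s ↦ w (η * s)) y ^ (1 - q) =
      η⁻¹ * (π / (q - 1 - 1) * ∫ t, w t ^ (1 - (q - 1))) := by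
    have hw := h.continuous_sol
    have := integral_mul_add_sq_add_sq_rpow (Φ := fun _ ↦ 1) (ω := fun s ↦ w (η * s)) (a := q - 1)
      measurable_const (by fun_prop) (fun _ ↦ zero_le_one) (fun s ↦ h.sol_pos _) (by linarith)
    simp only [one_mul, neg_sub] at this
    unfold axialLift
    rw [this, Measure.integral_comp_mul_left (fun t ↦ w t ^ (1 - (q - 1))), abs_inv,
      abs_of_pos hη, smul_eq_mul]
    ring
  have h₁ := hlift one_pos
  simp only [one_mul, inv_one] at h₁
  rw [hlift hη, h₁]
  field_simp

end IsProfile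

theorem exists_isProfile_integral_le {q : ℝ} (hq : 5 / 2 ≤ q) :
    ∃ C, ∀ b > 0, ∃ l > 0, ∃ w g, IsProfile q l C w g ∧
      l * (q - 1) / π * ∫ y, axialLift w y ^ (1 - q) ≤ b := by
  obtain ⟨C, w, g, h⟩ := exists_isProfile hq
  refine ⟨C, fun b hb ↦ ?_⟩
  set m := 1 / 2 * (q - 1) / π * ∫ y, axialLift w y ^ (1 - q)
  have hη : 0 < b / (|m| + 1) := by positivity
  refine ⟨(b / (|m| + 1)) ^ 2 * (1 / 2), by positivity, _, _, h.comp_mul hη, ?_⟩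
  rw [h.integral_axialLift_comp_mul (by linarith) hη, div_mul_eq_mul_div,
    div_le_iff₀ (by positivity)]
  exact mul_le_mul_of_nonneg_left ((le_abs_self m).trans (by linarith)) hb.le

/-- The map whose fixed points are the even solutions of the integral equation: adding `1` to the
biharmonic polynomial `x₀² + x₁²` fixes the value at the origin, where the potential vanishes. -/
noncomputable def potentialMap (q ε : ℝ) (u : ℝ³ → ℝ) (x : ℝ³) : ℝ :=
  1 + (x 0 ^ 2 + x 1 ^ 2) + ε * ∫ y, symmKernel x y * u y ^ (-q)

theorem continuous_potentialMap {q : ℝ} {u : ℝ³ → ℝ} (ε : ℝ)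
    (hu : Integrable fun y ↦ u y ^ (-q)) : Continuous (potentialMap q ε u) := by
  have := (lipschitzWith_integral_symmKernel_mul hu).continuous
  unfold potentialMap
  fun_prop

theorem exists_one_sub_rpow_le_two (a : ℝ) : ∃ θ : ℝ, 0 < θ ∧ θ < 1 ∧ (1 - θ) ^ a ≤ 2 := by
  have h : ContinuousAt (fun θ : ℝ ↦ (1 - θ) ^ a) 0 :=
    ContinuousAt.rpow_const (by fun_prop) (.inl (by norm_num))
  have hlt : (1 - 0 : ℝ) ^ a < 2 := by norm_num
  obtain ⟨θ, ⟨hθa, hθ1⟩, hθ0⟩ := (((h.eventually_lt_const hlt).and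
    (eventually_lt_nhds one_pos)).filter_mono nhdsWithin_le_nhds |>.and
      (self_mem_nhdsWithin (s := Set.Ioi 0))).exists
  exact ⟨θ, hθ0, hθ1, hθa.le⟩

namespace IsProfile

variable {q l C δ θ D : ℝ} {w g : ℝ → ℝ} {u v : ℝ³ → ℝ}

theorem integrable_axialLift_rpow_neg (h : IsProfile q l C w g) (hq : 3 < q) :
    Integrable fun y ↦ axialLift w y ^ (-q) :=
  h.integrable_axialLift_rpow (by linarith)

theorem integrable_axialLift_rpow_one_sub (h : IsProfile q l C w g) (hq : 3 < q) :
    Integrable fun y ↦ axialLift w y ^ (1 - q) := by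
  simpa using h.integrable_axialLift_rpow (a := q - 1) (by linarith)

theorem integrable_mul_axialLift_rpow (h : IsProfile q l C w g) (hq : 3 < q) {f : ℝ³ → ℝ}
    (hf : Continuous f) (hf0 : ∀ y, 0 ≤ f y) (hfw : ∀ y, f y ≤ axialLift w y) :
    Integrable fun y ↦ f y * axialLift w y ^ (-q - 1) := by
  have hW (y : ℝ³) := rpow_nonneg (axialLift_pos h.one_le y).le (-q - 1)
  refine (h.integrable_axialLift_rpow_neg hq).mono' (hf.mul
    (continuous_axialLift_rpow h.continuous_sol h.one_le _)).aestronglyMeasurable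
    (.of_forall fun y ↦ ?_)
  rw [norm_of_nonneg (mul_nonneg (hf0 y) (hW y)), ← axialLift_mul_rpow_neg_sub_one h.one_le]
  exact mul_le_mul_of_nonneg_right (hfw y) (hW y)

theorem symmKernel_mul_axialWeight_mul_le (h : IsProfile q l C w g) (hδ0 : 0 < δ)
    (hδ4 : δ ≤ 1 / 4) (x y : ℝ³) :
    symmKernel x y * (axialWeight δ g y * axialLift w y ^ (-q - 1)) ≤
      symmKernel (x 2) (y 2) * (g (y 2) * axialLift w y ^ (-q - 1)) +
        2 * δ * (symmKernel (x 2) (y 2) * axialLift w y ^ (-q)) +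
        2 * (1 + |x 0| + |x 1|) * axialLift w y ^ (1 - q) := by
  have hW := axialLift_pos h.one_le y
  have hWq : 0 < axialLift w y ^ (-q - 1) := rpow_pos_of_pos hW _
  have hG := axialWeight_pos hδ0.le h.super_pos y
  have hGW := axialWeight_le_axialLift hδ0.le hδ4 h.one_le h.super_le y
  have hR := one_add_abs_add_abs_le_axialLift h.one_le y
  have hk := symmKernel_nonneg (x 2) (y 2)
  have hkx : symmKernel x y ≤
      symmKernel (x 2) (y 2) + (1 + |x 0| + |x 1|) * (1 + |y 0| + |y 1|) := by
    linarith [(abs_le.1 (abs_symmKernel_sub_symmKernel_le x y)).2]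
  rw [← axialLift_mul_rpow_neg h.one_le, ← axialLift_mul_rpow_neg_sub_one h.one_le]
  set W := axialLift w y
  calc symmKernel x y * (axialWeight δ g y * W ^ (-q - 1))
      ≤ (symmKernel (x 2) (y 2) + (1 + |x 0| + |x 1|) * (1 + |y 0| + |y 1|)) *
          (axialWeight δ g y * W ^ (-q - 1)) := by gcongr
    _ = symmKernel (x 2) (y 2) * (axialWeight δ g y * W ^ (-q - 1)) +
          (1 + |x 0| + |x 1|) * ((1 + |y 0| + |y 1|) * (axialWeight δ g y * W ^ (-q - 1))) := by
        ring
    _ ≤ symmKernel (x 2) (y 2) * ((δ * (2 * W) + g (y 2)) * W ^ (-q - 1)) +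
          (1 + |x 0| + |x 1|) * (2 * W * (W * W ^ (-q - 1))) := by
        have : axialWeight δ g y ≤ δ * (2 * W) + g (y 2) := by
          rw [axialWeight]
          gcongr
        gcongr
    _ = _ := by ring

theorem integral_symmKernel_mul_axialWeight_le (h : IsProfile q l C w g) (hq : 3 < q)
    (hδ0 : 0 < δ) (hδ4 : δ ≤ 1 / 4) (x : ℝ³) :
    ∫ y, symmKernel x y * (axialWeight δ g y * axialLift w y ^ (-q - 1)) ≤
      (∫ y : ℝ³, symmKernel (x 2) (y 2) * (g (y 2) * axialLift w y ^ (-q - 1))) +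
        2 * δ * (∫ y : ℝ³, symmKernel (x 2) (y 2) * axialLift w y ^ (-q)) +
        2 * (1 + |x 0| + |x 1|) * ∫ y, axialLift w y ^ (1 - q) := by
  have hg := h.continuous_super
  have h2 : Continuous fun y : ℝ³ ↦ y 2 := by fun_prop
  have hGW := axialWeight_le_axialLift hδ0.le hδ4 h.one_le h.super_le
  have hgw (y : ℝ³) : g (y 2) ≤ axialLift w y :=
    (le_add_of_nonneg_left (by positivity)).trans (hGW y)
  have i₁ := integrable_symmKernel_mul (h.integrable_mul_axialLift_rpow hq (f := fun y ↦ g (y 2))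
    (hg.comp h2) (fun y ↦ (h.super_pos _).le) hgw) h2 (x 2)
  have i₂ := (integrable_symmKernel_mul (h.integrable_axialLift_rpow_neg hq) h2
    (x 2)).const_mul (2 * δ)
  have i₃ := (h.integrable_axialLift_rpow_one_sub hq).const_mul (2 * (1 + |x 0| + |x 1|))
  have i := integrable_symmKernel_mul (h.integrable_mul_axialLift_rpow hq
    (continuous_axialWeight hg) (fun y ↦ (axialWeight_pos hδ0.le h.super_pos y).le) hGW)
    continuous_id' x
  refine (integral_mono i ((i₁.add i₂).add i₃)
    (h.symmKernel_mul_axialWeight_mul_le hδ0 hδ4 x)).trans_eq ?_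
  rw [integral_add' (i₁.add i₂) i₃, integral_add' i₁ i₂, integral_const_mul, integral_const_mul]

theorem mul_integral_symmKernel_mul_axialWeight_le (h : IsProfile q l C w g) (hq : 3 < q)
    (hl : 0 < l) (hδ0 : 0 < δ) (hδ4 : δ ≤ 1 / 4) (hδC : 16 * q * δ * C ≤ 1)
    (hm : 8 * q * (l * (q - 1) / π * ∫ y, axialLift w y ^ (1 - q)) ≤ δ) (x : ℝ³) :
    q * (l * (q - 1) / π *
      ∫ y, symmKernel x y * (axialWeight δ g y * axialLift w y ^ (-q - 1))) ≤
      axialWeight δ g x / 4 := by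
  have h_int := h.integral_symmKernel_mul_axialWeight_le hq hδ0 hδ4 x
  have e₁ := h.integral_symmKernel_mul_super_mul_axialLift_rpow_le (by linarith) (x 2)
  have e₂ := h.integral_symmKernel_mul_axialLift_rpow (by linarith) (x 2)
  have hε : 0 < l * (q - 1) / π := div_pos (mul_pos hl (by linarith)) pi_pos
  set ε := l * (q - 1) / π
  set J₁ := ∫ y : ℝ³, symmKernel (x 2) (y 2) * (g (y 2) * axialLift w y ^ (-q - 1))
  set J₂ := ∫ y : ℝ³, symmKernel (x 2) (y 2) * axialLift w y ^ (-q)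
  set J₃ := ∫ y, axialLift w y ^ (1 - q)
  have hsup : 16 * q * δ * (w (x 2) - 1) ≤ g (x 2) := by
    calc 16 * q * δ * (w (x 2) - 1) ≤ 16 * q * δ * (C * g (x 2)) := by
          gcongr
          exact h.sol_sub_one_le _
      _ = 16 * q * δ * C * g (x 2) := by ring
      _ ≤ g (x 2) := mul_le_of_le_one_left (h.super_pos _).le hδC
  calc q * (ε * _) ≤ q * (ε * (J₁ + 2 * δ * J₂ + 2 * (1 + |x 0| + |x 1|) * J₃)) := by gcongr
    _ = q * (ε * J₁) + 16 * q * δ * (ε * J₂) / 8 +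
          8 * q * (ε * J₃) * (1 + |x 0| + |x 1|) / 4 := by ring
    _ ≤ g (x 2) / 8 + g (x 2) / 8 + δ * (1 + |x 0| + |x 1|) / 4 := by
        rw [e₂]
        gcongr
    _ = axialWeight δ g x / 4 := by rw [axialWeight]; ring

theorem abs_integral_symmKernel_mul_axialLift_sub_le (h : IsProfile q l C w g) (hq : 3 < q)
    (hl : 0 < l) (x : ℝ³) :
    |l * (q - 1) / π * (∫ y, symmKernel x y * axialLift w y ^ (-q)) - (w (x 2) - 1)| ≤
      2 * (l * (q - 1) / π * ∫ y, axialLift w y ^ (1 - q)) * (1 + |x 0| + |x 1|) := by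
  have hi := h.integrable_axialLift_rpow_neg hq
  have hε : 0 < l * (q - 1) / π := div_pos (mul_pos hl (by linarith)) pi_pos
  rw [← h.integral_symmKernel_mul_axialLift_rpow (by linarith) (x 2), ← mul_sub,
    ← integral_sub (integrable_symmKernel_mul hi continuous_id' x)
      (integrable_symmKernel_mul hi (by fun_prop) (x 2)), abs_mul, abs_of_pos hε]
  have h_int := norm_integral_le_of_norm_le ((h.integrable_axialLift_rpow_one_sub hq).const_mul
    (2 * (1 + |x 0| + |x 1|))) (f := fun y : ℝ³ ↦ symmKernel x y * axialLift w y ^ (-q) -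
      symmKernel (x 2) (y 2) * axialLift w y ^ (-q)) (.of_forall fun y ↦ ?_)
  · rw [integral_const_mul, norm_eq_abs] at h_int
    exact (mul_le_mul_of_nonneg_left h_int hε.le).trans_eq (by ring)
  · have hWq := rpow_nonneg (axialLift_pos h.one_le y).le (-q)
    rw [← sub_mul, norm_mul, norm_of_nonneg hWq, ← axialLift_mul_rpow_neg h.one_le, norm_eq_abs]
    calc |symmKernel x y - symmKernel (x 2) (y 2)| * axialLift w y ^ (-q)
        ≤ (1 + |x 0| + |x 1|) * (2 * axialLift w y) * axialLift w y ^ (-q) := by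
          gcongr
          exact (abs_symmKernel_sub_symmKernel_le x y).trans
            (by gcongr; exact one_add_abs_add_abs_le_axialLift h.one_le y)
      _ = 2 * (1 + |x 0| + |x 1|) * (axialLift w y * axialLift w y ^ (-q)) := by ring

theorem one_sub_mul_le_of_mem_weightedBall (h : IsProfile q l C w g) (hδ0 : 0 < δ)
    (hδ4 : δ ≤ 1 / 4) (hθ : 0 ≤ θ) (hu : u ∈ weightedBall (axialLift w) (axialWeight δ g) θ)
    (y : ℝ³) : (1 - θ) * axialLift w y ≤ u y := by
  have h₁ := (abs_le.1 (hu.2 y)).1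
  have h₂ := mul_le_mul_of_nonneg_left
    (axialWeight_le_axialLift hδ0.le hδ4 h.one_le h.super_le y) hθ
  linarith

theorem exists_mul_le_of_mem_weightedBall (h : IsProfile q l C w g) (hδ0 : 0 < δ)
    (hδ4 : δ ≤ 1 / 4) (hθ : 0 ≤ θ) (hθ1 : θ < 1)
    (hu : u ∈ weightedBall (axialLift w) (axialWeight δ g) θ) :
    ∃ c > 0, ∀ y, c * (1 + ‖y‖) ≤ u y := by
  obtain ⟨c, hc, hcw⟩ := h.exists_mul_le_axialLift
  have hθ' := sub_pos.2 hθ1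
  refine ⟨(1 - θ) * c, by positivity, fun y ↦
    le_trans ?_ (h.one_sub_mul_le_of_mem_weightedBall hδ0 hδ4 hθ hu y)⟩
  rw [mul_assoc]
  exact mul_le_mul_of_nonneg_left (hcw y) hθ'.le

theorem integrable_rpow_neg_of_mem_weightedBall (h : IsProfile q l C w g) (hq : 3 < q)
    (hδ0 : 0 < δ) (hδ4 : δ ≤ 1 / 4) (hθ : 0 ≤ θ) (hθ1 : θ < 1)
    (hu : u ∈ weightedBall (axialLift w) (axialWeight δ g) θ) :
    Integrable fun y ↦ u y ^ (-q) := by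
  obtain ⟨c, hc, hcu⟩ := h.exists_mul_le_of_mem_weightedBall hδ0 hδ4 hθ hθ1 hu
  exact integrable_rpow_neg_of_mul_one_add_norm_le (by simpa using hq) hu.1 hc hcu

theorem abs_rpow_sub_rpow_le (h : IsProfile q l C w g) (hq : 0 ≤ q) (hδ0 : 0 < δ)
    (hδ4 : δ ≤ 1 / 4) (hθ : 0 ≤ θ) (hθ1 : θ < 1) (hθq : (1 - θ) ^ (-q - 1) ≤ 2)
    (hu : u ∈ weightedBall (axialLift w) (axialWeight δ g) θ)
    (hv : v ∈ weightedBall (axialLift w) (axialWeight δ g) θ)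
    (hD : ∀ y, |u y - v y| ≤ D * axialWeight δ g y) (y : ℝ³) :
    |u y ^ (-q) - v y ^ (-q)| ≤
      2 * q * D * (axialWeight δ g y * axialLift w y ^ (-q - 1)) := by
  have hθ' := sub_pos.2 hθ1
  have hW := axialLift_pos h.one_le y
  calc |u y ^ (-q) - v y ^ (-q)|
      ≤ q * ((1 - θ) * axialLift w y) ^ (-q - 1) * |u y - v y| :=
        abs_rpow_neg_sub_le hq (mul_pos hθ' hW)
          (h.one_sub_mul_le_of_mem_weightedBall hδ0 hδ4 hθ hu y)
          (h.one_sub_mul_le_of_mem_weightedBall hδ0 hδ4 hθ hv y)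
    _ ≤ q * (2 * axialLift w y ^ (-q - 1)) * (D * axialWeight δ g y) := by
        rw [mul_rpow hθ'.le hW.le]
        gcongr
        exact hD y
    _ = _ := by ring

theorem abs_potentialMap_sub_le (h : IsProfile q l C w g) (hq : 3 < q) (hl : 0 < l)
    (hδ0 : 0 < δ) (hδ4 : δ ≤ 1 / 4) (hδC : 16 * q * δ * C ≤ 1)
    (hm : 8 * q * (l * (q - 1) / π * ∫ y, axialLift w y ^ (1 - q)) ≤ δ)
    (hθ : 0 ≤ θ) (hθ1 : θ < 1) (hθq : (1 - θ) ^ (-q - 1) ≤ 2)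
    (hu : u ∈ weightedBall (axialLift w) (axialWeight δ g) θ)
    (hv : v ∈ weightedBall (axialLift w) (axialWeight δ g) θ)
    (hD : ∀ y, |u y - v y| ≤ D * axialWeight δ g y) (x : ℝ³) :
    |potentialMap q (l * (q - 1) / π) u x - potentialMap q (l * (q - 1) / π) v x| ≤
      1 / 2 * D * axialWeight δ g x := by
  have hε : 0 < l * (q - 1) / π := div_pos (mul_pos hl (by linarith)) pi_pos
  have hD0 : 0 ≤ D := nonneg_of_mul_nonneg_left ((abs_nonneg _).trans (hD 0))
    (axialWeight_pos hδ0.le h.super_pos 0)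
  have hi {u : ℝ³ → ℝ} (hu : u ∈ weightedBall (axialLift w) (axialWeight δ g) θ) :
      Integrable fun y ↦ symmKernel x y * u y ^ (-q) :=
    integrable_symmKernel_mul
      (h.integrable_rpow_neg_of_mem_weightedBall hq hδ0 hδ4 hθ hθ1 hu) continuous_id' x
  have hG := integrable_symmKernel_mul (h.integrable_mul_axialLift_rpow hq
    (continuous_axialWeight h.continuous_super)
    (fun y ↦ (axialWeight_pos hδ0.le h.super_pos y).le)
    (axialWeight_le_axialLift hδ0.le hδ4 h.one_le h.super_le)) continuous_id' x
  have h_int : |∫ y, (symmKernel x y * u y ^ (-q) - symmKernel x y * v y ^ (-q))| ≤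
      ∫ y, 2 * q * D * (symmKernel x y * (axialWeight δ g y * axialLift w y ^ (-q - 1))) := by
    rw [← norm_eq_abs]
    refine norm_integral_le_of_norm_le (hG.const_mul _) (.of_forall fun y ↦ ?_)
    have hk := symmKernel_nonneg x y
    rw [← mul_sub, norm_mul, norm_of_nonneg hk, mul_left_comm]
    exact mul_le_mul_of_nonneg_left
      (h.abs_rpow_sub_rpow_le (by linarith) hδ0 hδ4 hθ hθ1 hθq hu hv hD y) hk
  rw [potentialMap, potentialMap, add_sub_add_left_eq_sub, ← mul_sub,
    ← integral_sub (hi hu) (hi hv), abs_mul, abs_of_pos hε]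
  rw [integral_const_mul] at h_int
  have := h.mul_integral_symmKernel_mul_axialWeight_le hq hl hδ0 hδ4 hδC hm x
  set ε := l * (q - 1) / π
  set J := ∫ y, symmKernel x y * (axialWeight δ g y * axialLift w y ^ (-q - 1))
  calc ε * _ ≤ ε * (2 * q * D * J) := by gcongr
    _ = 2 * D * (q * (ε * J)) := by ring
    _ ≤ 2 * D * (axialWeight δ g x / 4) := by gcongr
    _ = 1 / 2 * D * axialWeight δ g x := by ring

theorem abs_potentialMap_axialLift_sub_le (h : IsProfile q l C w g) (hq : 3 < q) (hl : 0 < l)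
    (hθ : 0 ≤ θ) (hm : 4 * (l * (q - 1) / π * ∫ y, axialLift w y ^ (1 - q)) ≤ θ * δ) (x : ℝ³) :
    |potentialMap q (l * (q - 1) / π) (axialLift w) x - axialLift w x| ≤
      (1 - 1 / 2) * θ * axialWeight δ g x := by
  have hsub := h.abs_integral_symmKernel_mul_axialLift_sub_le hq hl x
  rw [potentialMap, axialLift.eq_def w x]
  set ε := l * (q - 1) / π
  set m := ε * ∫ y, axialLift w y ^ (1 - q)
  calc |1 + (x 0 ^ 2 + x 1 ^ 2) + ε * (∫ y, symmKernel x y * axialLift w y ^ (-q)) -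
        (w (x 2) + (x 0 ^ 2 + x 1 ^ 2))|
      = |ε * (∫ y, symmKernel x y * axialLift w y ^ (-q)) - (w (x 2) - 1)| := by ring_nf
    _ ≤ 2 * m * (1 + |x 0| + |x 1|) := hsub
    _ = 4 * m * (1 + |x 0| + |x 1|) / 2 := by ring
    _ ≤ θ * δ * (1 + |x 0| + |x 1|) / 2 := by gcongr
    _ ≤ (1 - 1 / 2) * θ * axialWeight δ g x := by
        rw [axialWeight]
        nlinarith [mul_nonneg hθ (h.super_pos (x 2)).le]

end IsProfile

theorem exists_potentialMap_eq_self {q : ℝ} (hq : 3 < q) : ∃ ε > 0, ∃ u : ℝ³ → ℝ,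
    Continuous u ∧ (∃ c > 0, ∀ x, c * (1 + ‖x‖) ≤ u x) ∧ potentialMap q ε u = u := by
  obtain ⟨C, hC⟩ := exists_isProfile_integral_le (by linarith : 5 / 2 ≤ q)
  obtain ⟨θ, hθ, hθ1, hθq⟩ := exists_one_sub_rpow_le_two (-q - 1)
  set δ := (16 * q * (|C| + 1))⁻¹ with hδ
  have hδ0 : 0 < δ := by positivity
  have hδ4 : δ ≤ 1 / 4 := by
    rw [one_div]
    exact inv_anti₀ (by norm_num) (by nlinarith [abs_nonneg C])
  have hδC : 16 * q * δ * C ≤ 1 := by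
    have : 16 * q * δ * (|C| + 1) = 1 := by rw [hδ]; field_simp
    refine le_trans ?_ this.le
    gcongr
    linarith [le_abs_self C]
  obtain ⟨l, hl, w, g, h, hm⟩ := hC (θ * δ / (8 * q)) (by positivity)
  rw [le_div_iff₀ (by positivity), mul_comm] at hm
  have hm0 : 0 ≤ l * (q - 1) / π * ∫ y, axialLift w y ^ (1 - q) :=
    mul_nonneg (div_nonneg (mul_nonneg hl.le (by linarith)) pi_pos.le)
      (integral_nonneg fun y ↦ rpow_nonneg (axialLift_pos h.one_le y).le _)
  obtain ⟨u, hu, hfix⟩ := exists_fixedPoint_of_weighted_contraction (K := 1 / 2)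
    (T := potentialMap q (l * (q - 1) / π)) (continuous_axialLift h.continuous_sol)
    (continuous_axialWeight h.continuous_super) (axialWeight_pos hδ0.le h.super_pos) hθ.le
    (by norm_num) (by norm_num)
    (fun u hu ↦ continuous_potentialMap _
      (h.integrable_rpow_neg_of_mem_weightedBall hq hδ0 hδ4 hθ.le hθ1 hu))
    (fun u hu v hv D hD ↦ h.abs_potentialMap_sub_le hq hl hδ0 hδ4 hδC
      (hm.trans (mul_le_of_le_one_left hδ0.le hθ1.le)) hθ.le hθ1 hθq hu hv hD)
    (h.abs_potentialMap_axialLift_sub_le hq hl hθ.le (by nlinarith))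
  exact ⟨_, div_pos (mul_pos hl (by linarith)) pi_pos, u, hu.1,
    h.exists_mul_le_of_mem_weightedBall hδ0 hδ4 hθ.le hθ1 hu, hfix⟩

section Growth

theorem isBigO_one_add_norm_rpow {E : Type*} [SeminormedAddGroup E] {a b : ℝ} (hab : a ≤ b) :
    (fun x : E ↦ (1 + ‖x‖) ^ a) =O[⊤] fun x ↦ (1 + ‖x‖) ^ b :=
  .of_norm_le fun x ↦ by
    rw [norm_of_nonneg (by positivity)]
    exact rpow_le_rpow_of_exponent_le (le_add_of_nonneg_right (norm_nonneg x)) hab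

theorem isBigO_rpow_neg_of_mul_rpow_le {E : Type*} [SeminormedAddGroup E] {u : E → ℝ} {c p s : ℝ}
    (hs : 0 ≤ s) (hc : 0 < c) (hcu : ∀ x, c * (1 + ‖x‖) ^ p ≤ u x) :
    (fun x ↦ u x ^ (-s)) =O[⊤] fun x ↦ (1 + ‖x‖) ^ (p * -s) := by
  refine .of_bound (c ^ (-s)) (.of_forall fun x ↦ ?_)
  have hu : 0 < u x := lt_of_lt_of_le (by positivity) (hcu x)
  rw [norm_of_nonneg (rpow_nonneg hu.le _), norm_of_nonneg (by positivity),
    rpow_mul (by positivity), ← mul_rpow hc.le (by positivity)]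
  exact rpow_le_rpow_of_nonpos (by positivity) (hcu x) (by linarith)

variable {E : Type*} [NormedAddCommGroup E] [NormedSpace ℝ E] {f g u : E → ℝ} {a b : ℝ} {n : ℕ}

/-- `HasGrowth a n f` says that `f` and its directional derivatives of order at most `n` are
continuous and `O((1 + ‖x‖) ^ a)` on the whole space, a symbol-type estimate in which
differentiation does not improve the exponent. Differentiability is required at each step of the
recursion, since `fderiv` is zero where it fails. -/
def HasGrowth (a : ℝ) : ℕ → (E → ℝ) → Prop
  | 0, f => Continuous f ∧ f =O[⊤] fun x ↦ (1 + ‖x‖) ^ a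
  | n + 1, f => Differentiable ℝ f ∧ f =O[⊤] (fun x ↦ (1 + ‖x‖) ^ a) ∧
      ∀ v, HasGrowth a n fun x ↦ fderiv ℝ f x v

namespace HasGrowth

protected theorem continuous (hf : HasGrowth a n f) : Continuous f := by
  cases n with
  | zero => exact hf.1
  | succ n => exact hf.1.continuous

theorem isBigO (hf : HasGrowth a n f) : f =O[⊤] fun x ↦ (1 + ‖x‖) ^ a := by
  cases n with
  | zero => exact hf.2
  | succ n => exact hf.2.1

theorem exists_norm_le (hf : HasGrowth 0 n f) : ∃ M, ∀ x, ‖f x‖ ≤ M := by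
  obtain ⟨M, hM⟩ := hf.isBigO.bound
  exact ⟨M, fun x ↦ by simpa using eventually_top.1 hM x⟩

theorem mono (hab : a ≤ b) (hf : HasGrowth a n f) : HasGrowth b n f := by
  induction n generalizing f with
  | zero => exact ⟨hf.1, hf.2.trans (isBigO_one_add_norm_rpow hab)⟩
  | succ n ih =>
    exact ⟨hf.1, hf.2.1.trans (isBigO_one_add_norm_rpow hab), fun v ↦ ih (hf.2.2 v)⟩

theorem of_succ (hf : HasGrowth a (n + 1) f) : HasGrowth a n f := by
  induction n generalizing f with
  | zero => exact ⟨hf.continuous, hf.isBigO⟩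
  | succ n ih => exact ⟨hf.1, hf.2.1, fun v ↦ ih (hf.2.2 v)⟩

theorem of_le {m : ℕ} (hmn : m ≤ n) (hf : HasGrowth a n f) : HasGrowth a m f := by
  induction hmn with
  | refl => exact hf
  | step _ ih => exact ih hf.of_succ

theorem add (hf : HasGrowth a n f) (hg : HasGrowth a n g) : HasGrowth a n fun x ↦ f x + g x := by
  induction n generalizing f g with
  | zero => exact ⟨hf.1.add hg.1, hf.2.add hg.2⟩
  | succ n ih =>
    refine ⟨hf.1.add hg.1, hf.2.1.add hg.2.1, fun v ↦ ?_⟩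
    simpa only [fderiv_fun_add (hf.1 _) (hg.1 _), add_apply] using ih (hf.2.2 v) (hg.2.2 v)

theorem mul (hf : HasGrowth a n f) (hg : HasGrowth b n g) :
    HasGrowth (a + b) n fun x ↦ f x * g x := by
  have hO {m : ℕ} {f g : E → ℝ} (hf : HasGrowth a m f) (hg : HasGrowth b m g) :
      (fun x ↦ f x * g x) =O[⊤] fun x ↦ (1 + ‖x‖) ^ (a + b) :=
    (hf.isBigO.mul hg.isBigO).congr_right fun x ↦ (rpow_add (by positivity) a b).symm
  induction n generalizing f g with
  | zero => exact ⟨hf.1.mul hg.1, hO hf hg⟩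
  | succ n ih =>
    refine ⟨hf.1.mul hg.1, hO hf hg, fun v ↦ ?_⟩
    have h := (ih hf.of_succ (hg.2.2 v)).add (ih (hf.2.2 v) hg.of_succ)
    convert h using 2 with x
    simp [fderiv_fun_mul (hf.1 x) (hg.1 x), mul_comm (g x)]

theorem const (c : ℝ) : HasGrowth 0 n fun _ : E ↦ c := by
  have hO (c : ℝ) : (fun _ : E ↦ c) =O[⊤] fun x ↦ (1 + ‖x‖) ^ (0 : ℝ) := by
    simpa using Asymptotics.isBigO_const_const c (one_ne_zero (α := ℝ)) ⊤
  induction n generalizing c with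
  | zero => exact ⟨continuous_const, hO c⟩
  | succ n ih => exact ⟨differentiable_const c, hO c, fun v ↦ by simpa using ih 0⟩

theorem const_mul (c : ℝ) (hf : HasGrowth a n f) : HasGrowth a n fun x ↦ c * f x := by
  simpa using (const c).mul hf

theorem clm (l : E →L[ℝ] ℝ) : HasGrowth 1 n l := by
  have hO : l =O[⊤] fun x ↦ (1 + ‖x‖) ^ (1 : ℝ) := by
    refine .of_bound ‖l‖ (.of_forall fun x ↦ (l.le_opNorm x).trans ?_)
    rw [rpow_one, norm_of_nonneg (by positivity)]
    gcongr
    linarith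
  cases n with
  | zero => exact ⟨l.continuous, hO⟩
  | succ n => exact ⟨l.differentiable, hO, fun v ↦ by simpa using (const (l v)).mono zero_le_one⟩

theorem contDiff [FiniteDimensional ℝ E] (hf : HasGrowth a n f) : ContDiff ℝ n f := by
  induction n generalizing f with
  | zero => exact contDiff_zero.2 hf.1
  | succ n ih =>
    push_cast
    exact contDiff_succ_iff_fderiv_apply.2 ⟨hf.1, by simp, fun v ↦ ih (hf.2.2 v)⟩

theorem continuous_fderiv [FiniteDimensional ℝ E] (hf : HasGrowth a (n + 1) f) :
    Continuous (fderiv ℝ f) :=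
  hf.contDiff.continuous_fderiv (by simp)

theorem isBigO_fderiv [FiniteDimensional ℝ E] (hf : HasGrowth a (n + 1) f) :
    fderiv ℝ f =O[⊤] fun x ↦ (1 + ‖x‖) ^ a := by
  let basis := Module.finBasis ℝ E
  obtain ⟨C, -, hC⟩ := basis.exists_opNorm_le (F := ℝ)
  have hsum : (fun x ↦ ∑ i, ‖fderiv ℝ f x (basis i)‖) =O[⊤] fun x ↦ (1 + ‖x‖) ^ a :=
    .fun_sum fun i _ ↦ (hf.2.2 (basis i)).isBigO.norm_left
  refine .trans (.of_bound C (.of_forall fun x ↦ ?_)) hsum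
  rw [norm_of_nonneg (by positivity)]
  exact hC (by positivity) fun i ↦ Finset.single_le_sum
    (f := fun i ↦ ‖fderiv ℝ f x (basis i)‖) (fun _ _ ↦ norm_nonneg _) (Finset.mem_univ i)

theorem rpow_neg {c p s : ℝ} (hs : 0 ≤ s) (hu : Differentiable ℝ u) (hc : 0 < c)
    (hcu : ∀ x, c * (1 + ‖x‖) ^ p ≤ u x) (hn : ∀ v, HasGrowth p n fun x ↦ fderiv ℝ u x v) :
    HasGrowth (p * -s) (n + 1) fun x ↦ u x ^ (-s) := by
  have hpos x : 0 < u x := lt_of_lt_of_le (by positivity) (hcu x)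
  have hd (s : ℝ) : Differentiable ℝ fun x ↦ u x ^ (-s) :=
    fun x ↦ (hu x).rpow_const (.inl (hpos x).ne')
  suffices ∀ m ≤ n + 1, ∀ s ≥ 0, HasGrowth (p * -s) m fun x ↦ u x ^ (-s) from
    this _ le_rfl s hs
  intro m
  induction m with
  | zero => exact fun _ s hs ↦ ⟨(hd s).continuous, isBigO_rpow_neg_of_mul_rpow_le hs hc hcu⟩
  | succ m ih =>
    refine fun hm s hs ↦ ⟨hd s, isBigO_rpow_neg_of_mul_rpow_le hs hc hcu, fun v ↦ ?_⟩
    have h := ((ih (by lia) (s + 1) (by linarith)).mul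
      ((hn v).of_le (by lia : m ≤ n))).const_mul (-s)
    rw [show p * -(s + 1) + p = p * -s by ring] at h
    convert h using 2 with x
    rw [((hu x).hasFDerivAt.rpow_const (.inl (hpos x).ne')).fderiv]
    simp [neg_add', mul_assoc, -neg_add_rev]

end HasGrowth

end Growth

section Convolution

theorem one_add_norm_sub_rpow_le {E : Type*} [SeminormedAddCommGroup E] {a : ℝ} (ha : a ≤ 0)
    (x z : E) : (1 + ‖x - z‖) ^ a ≤ (1 + ‖x‖) ^ (-a) * (1 + ‖z‖) ^ a := by
  have h : 1 + ‖z‖ ≤ (1 + ‖x‖) * (1 + ‖x - z‖) := by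
    have := norm_sub_le x (x - z)
    rw [sub_sub_cancel] at this
    nlinarith [norm_nonneg x, norm_nonneg (x - z)]
  have h' := rpow_le_rpow_of_nonpos (by positivity) h ha
  rw [mul_rpow (by positivity) (by positivity)] at h'
  rwa [rpow_neg (by positivity), ← div_eq_inv_mul, le_div_iff₀' (by positivity)]

variable {E : Type*} [NormedAddCommGroup E] [NormedSpace ℝ E] [FiniteDimensional ℝ E]
  [MeasureSpace E] [BorelSpace E] [(volume : Measure E).IsAddHaarMeasure]
  {f k : E → ℝ} {a M : ℝ} {m n : ℕ}

theorem exists_integrable_norm_comp_sub_le {F : Type*} [NormedAddCommGroup F] {h : E → F}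
    (ha : a < -Module.finrank ℝ E) (hh : h =O[⊤] fun x ↦ (1 + ‖x‖) ^ a) (R : ℝ) :
    ∃ b : E → ℝ, Integrable b ∧ ∀ x, ‖x‖ ≤ R → ∀ z, ‖h (x - z)‖ ≤ b z := by
  obtain ⟨C, hC, hle⟩ := hh.exists_pos
  have ha₀ : a ≤ 0 := ha.le.trans (neg_nonpos.2 (Nat.cast_nonneg _))
  have h_int := integrable_one_add_norm (E := E) (μ := volume) (lt_neg_of_lt_neg ha)
  rw [neg_neg] at h_int
  refine ⟨_, (h_int.const_mul ((1 + R) ^ (-a))).const_mul C, fun x hx z ↦ ?_⟩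
  have h' := Asymptotics.isBigOWith_top.1 hle (x - z)
  rw [norm_of_nonneg (by positivity)] at h'
  refine h'.trans (mul_le_mul_of_nonneg_left ((one_add_norm_sub_rpow_le ha₀ x z).trans ?_) hC.le)
  gcongr
  linarith

namespace HasGrowth

theorem integrable (hf : HasGrowth a n f) (ha : a < -Module.finrank ℝ E) : Integrable f := by
  obtain ⟨C, hC⟩ := hf.isBigO.bound
  have h_int := (integrable_one_add_norm (E := E) (μ := volume) (lt_neg_of_lt_neg ha)).const_mul C
  refine h_int.mono' hf.continuous.aestronglyMeasurable (.of_forall fun x ↦ ?_)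
  have := eventually_top.1 hC x
  rwa [norm_of_nonneg (r := (1 + ‖x‖) ^ a) (by positivity), ← neg_neg a] at this

theorem integrable_mul_comp_sub (hk : AEStronglyMeasurable k) (hM : ∀ z, ‖k z‖ ≤ M)
    (hf : HasGrowth a n f) (ha : a < -Module.finrank ℝ E) (x : E) :
    Integrable fun z ↦ k z * f (x - z) :=
  ((hf.integrable ha).comp_sub_left x).bdd_mul hk (.of_forall hM)

theorem norm_convolution_le (hM : ∀ z, ‖k z‖ ≤ M) (hf : HasGrowth a n f)
    (ha : a < -Module.finrank ℝ E) (x : E) : ‖(k ⋆ f) x‖ ≤ M * ∫ z, ‖f z‖ := by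
  rw [← integral_sub_left_eq_self (fun z ↦ ‖f z‖) volume x, ← integral_const_mul]
  refine norm_integral_le_of_norm_le
    (((hf.integrable ha).comp_sub_left x).norm.const_mul M) (.of_forall fun z ↦ ?_)
  rw [ContinuousLinearMap.lsmul_apply, norm_smul]
  exact mul_le_mul_of_nonneg_right (hM z) (norm_nonneg _)

theorem continuous_convolution (hk : AEStronglyMeasurable k) (hM : ∀ z, ‖k z‖ ≤ M)
    (hf : HasGrowth a n f) (ha : a < -Module.finrank ℝ E) : Continuous (k ⋆ f) := by
  refine continuous_iff_continuousAt.2 fun x ↦ ?_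
  obtain ⟨b, hb, hle⟩ := exists_integrable_norm_comp_sub_le ha hf.isBigO (‖x‖ + 1)
  refine continuousAt_of_dominated (bound := fun z ↦ M * b z) ?_ ?_ (hb.const_mul M)
    (.of_forall fun z ↦ ?_)
  · exact .of_forall fun x ↦ (hf.integrable_mul_comp_sub hk hM ha x).aestronglyMeasurable
  · filter_upwards [Metric.ball_mem_nhds x one_pos] with y hy
    refine .of_forall fun z ↦ (norm_smul (k z) (f (y - z))).trans_le ?_
    exact mul_le_mul (hM z) (hle y (norm_lt_of_mem_ball hy).le z) (norm_nonneg _)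
      ((norm_nonneg _).trans (hM z))
  · exact ((hf.continuous.comp (continuous_sub_right z)).const_smul (k z)).continuousAt

theorem integrable_smul_fderiv_comp_sub (hk : AEStronglyMeasurable k) (hM : ∀ z, ‖k z‖ ≤ M)
    (hf : HasGrowth a (n + 1) f) (ha : a < -Module.finrank ℝ E) (x : E) :
    Integrable fun z ↦ k z • fderiv ℝ f (x - z) := by
  obtain ⟨b, hb, hle⟩ := exists_integrable_norm_comp_sub_le ha hf.isBigO_fderiv ‖x‖
  have h_int : Integrable fun z ↦ fderiv ℝ f (x - z) :=
    hb.mono' (hf.continuous_fderiv.comp (continuous_sub_left x)).aestronglyMeasurable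
      (.of_forall (hle x le_rfl))
  exact h_int.bdd_smul M hk (.of_forall hM)

theorem hasFDerivAt_convolution (hk : AEStronglyMeasurable k) (hM : ∀ z, ‖k z‖ ≤ M)
    (hf : HasGrowth a (n + 1) f) (ha : a < -Module.finrank ℝ E) (x : E) :
    HasFDerivAt (k ⋆ f) ((k ⋆ fderiv ℝ f) x) x := by
  obtain ⟨b, hb, hle⟩ := exists_integrable_norm_comp_sub_le ha hf.isBigO_fderiv (‖x‖ + 1)
  refine hasFDerivAt_integral_of_dominated_of_fderiv_le
    (F' := fun y z ↦ k z • fderiv ℝ f (y - z)) (bound := fun z ↦ M * b z)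
    (Metric.ball_mem_nhds x one_pos)
    (.of_forall fun x ↦ (hf.integrable_mul_comp_sub hk hM ha x).aestronglyMeasurable)
    (hf.integrable_mul_comp_sub hk hM ha x)
    (hf.integrable_smul_fderiv_comp_sub hk hM ha x).aestronglyMeasurable
    (.of_forall fun z y hy ↦ (norm_smul (k z) _).trans_le ?_) (hb.const_mul M)
    (.of_forall fun z y _ ↦ ?_)
  · exact mul_le_mul (hM z) (hle y (norm_lt_of_mem_ball hy).le z) (norm_nonneg _)
      ((norm_nonneg _).trans (hM z))
  · exact ((hf.1 (y - z)).hasFDerivAt.comp y ((hasFDerivAt_id y).sub_const z)).const_smul (k z)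

theorem fderiv_convolution_apply (hk : AEStronglyMeasurable k) (hM : ∀ z, ‖k z‖ ≤ M)
    (hf : HasGrowth a (n + 1) f) (ha : a < -Module.finrank ℝ E) (x v : E) :
    fderiv ℝ (k ⋆ f) x v = (k ⋆ fun y ↦ fderiv ℝ f y v) x := by
  rw [(hf.hasFDerivAt_convolution hk hM ha x).fderiv]
  exact ContinuousLinearMap.integral_apply
    (hf.integrable_smul_fderiv_comp_sub hk hM ha x) v

theorem convolution (hk : AEStronglyMeasurable k) (hM : ∀ z, ‖k z‖ ≤ M) (hf : HasGrowth a n f)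
    (ha : a < -Module.finrank ℝ E) : HasGrowth 0 n (k ⋆ f) := by
  have hO {n : ℕ} {f : E → ℝ} (hf : HasGrowth a n f) :
      (k ⋆ f) =O[⊤] fun x ↦ (1 + ‖x‖) ^ (0 : ℝ) :=
    .of_bound (M * ∫ z, ‖f z‖) (.of_forall fun x ↦ by
      simpa using hf.norm_convolution_le hM ha x)
  induction n generalizing f with
  | zero => exact ⟨hf.continuous_convolution hk hM ha, hO hf⟩
  | succ n ih =>
    refine ⟨fun x ↦ (hf.hasFDerivAt_convolution hk hM ha x).differentiableAt, hO hf, fun v ↦ ?_⟩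
    simpa only [hf.fderiv_convolution_apply hk hM ha] using ih (hf.2.2 v)

theorem convolution_fderiv_comm (hk : HasGrowth 0 (m + 1) k) (hf : HasGrowth a (n + 1) f)
    (ha : a < -Module.finrank ℝ E) (v : E) :
    (k ⋆ fun y ↦ fderiv ℝ f y v) = (fun y ↦ fderiv ℝ k y v) ⋆ f := by
  funext x
  have hfx z : HasFDerivAt (fun z ↦ f (x - z)) (-fderiv ℝ f (x - z)) z := by
    have h := (hf.1 (x - z)).hasFDerivAt.comp z ((hasFDerivAt_id z).const_sub x)
    rwa [ContinuousLinearMap.comp_neg, ContinuousLinearMap.comp_id] at h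
  have h_int {m n : ℕ} {k f : E → ℝ} (hk : HasGrowth 0 m k) (hf : HasGrowth a n f) :
      Integrable fun z ↦ k z * f (x - z) :=
    have ⟨_, hM⟩ := hk.exists_norm_le
    hf.integrable_mul_comp_sub hk.continuous.aestronglyMeasurable hM ha x
  have h := integral_mul_fderiv_eq_neg_fderiv_mul_of_integrable (μ := volume) (v := v)
    (h_int (hk.2.2 v) hf) (by simpa [(hfx _).fderiv] using (h_int hk (hf.2.2 v)).neg)
    (h_int hk hf) (fun z _ ↦ hk.1 z) (fun z _ ↦ (hfx z).differentiableAt)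
  simpa [(hfx _).fderiv, integral_neg, convolution_lsmul] using h

end HasGrowth

end Convolution

section Potential

theorem integral_symmKernel_mul_eq_of_even {E : Type*} [NormedAddCommGroup E] [MeasurableSpace E]
    [BorelSpace E] {f : E → ℝ} {μ : Measure E} [μ.IsNegInvariant] (hf : Integrable f μ)
    (heven : ∀ y, f (-y) = f y) (x : E) :
    ∫ y, symmKernel x y * f y ∂μ = ∫ y, (‖x - y‖ - ‖y‖) * f y ∂μ := by
  have hle y : |‖x - y‖ - ‖y‖| ≤ ‖x‖ := by
    simpa using abs_norm_sub_norm_le (x - y) (-y)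
  have h_int : Integrable (fun y ↦ (‖x - y‖ - ‖y‖) * f y) μ :=
    hf.bdd_mul (Continuous.aestronglyMeasurable (by fun_prop)) (.of_forall hle)
  have hrefl : ∫ y, (‖x + y‖ - ‖y‖) * f y ∂μ = ∫ y, (‖x - y‖ - ‖y‖) * f y ∂μ := by
    rw [← integral_neg_eq_self]
    simp [heven, sub_eq_add_neg]
  have h_int' : Integrable (fun y ↦ (‖x + y‖ - ‖y‖) * f y) μ := by
    simpa [heven, sub_eq_add_neg] using h_int.comp_neg
  calc ∫ y, symmKernel x y * f y ∂μ
      = ∫ y, ((‖x - y‖ - ‖y‖) * f y + (‖x + y‖ - ‖y‖) * f y) / 2 ∂μ := by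
        congr with y
        simp only [symmKernel]
        ring
    _ = ∫ y, (‖x - y‖ - ‖y‖) * f y ∂μ := by
        rw [integral_div, integral_add h_int h_int', hrefl, add_self_div_two]

theorem abs_integral_norm_sub_sub_norm_mul_le {E : Type*} [SeminormedAddCommGroup E]
    [MeasurableSpace E] {f : E → ℝ} {μ : Measure E} (hf : Integrable f μ) (x : E) :
    |∫ y, (‖x - y‖ - ‖y‖) * f y ∂μ| ≤ (∫ y, |f y| ∂μ) * ‖x‖ := by
  rw [← integral_mul_const, ← norm_eq_abs]
  refine norm_integral_le_of_norm_le (hf.abs.mul_const ‖x‖) (.of_forall fun y ↦ ?_)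
  rw [norm_mul, mul_comm, norm_eq_abs, norm_eq_abs]
  gcongr
  simpa using abs_norm_sub_norm_le (x - y) (-y)

theorem norm_fderiv_norm_apply_le {E : Type*} [NormedAddCommGroup E] [NormedSpace ℝ E] (z v : E) :
    ‖fderiv ℝ norm z v‖ ≤ ‖v‖ := by
  simpa using (fderiv ℝ norm z).le_of_opNorm_le
    (norm_fderiv_le_of_lipschitz ℝ lipschitzWith_one_norm) v

theorem hasFDerivAt_integral_norm_sub_sub_norm_mul {E : Type*} [NormedAddCommGroup E]
    [InnerProductSpace ℝ E] [FiniteDimensional ℝ E] [MeasurableSpace E] [BorelSpace E]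
    {f : E → ℝ} {μ : Measure E} [NullSingletonClass μ] (hf : Integrable f μ) (x : E) :
    Integrable (fun y ↦ f y • fderiv ℝ norm (x - y)) μ ∧
      HasFDerivAt (fun x ↦ ∫ y, (‖x - y‖ - ‖y‖) * f y ∂μ)
        (∫ y, f y • fderiv ℝ norm (x - y) ∂μ) x := by
  have hle y : |‖x - y‖ - ‖y‖| ≤ ‖x‖ := by
    simpa using abs_norm_sub_norm_le (x - y) (-y)
  refine hasFDerivAt_integral_of_dominated_loc_of_lip (bound := f) univ_mem
    (.of_forall fun x ↦ .mul (Continuous.aestronglyMeasurable (by fun_prop)) hf.1)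
    (hf.bdd_mul (Continuous.aestronglyMeasurable (by fun_prop)) (.of_forall hle))
    (hf.1.smul ((measurable_fderiv ℝ _).comp (measurable_const_sub x)).aestronglyMeasurable)
    (.of_forall fun y ↦ ?_) hf ?_
  · refine LipschitzOnWith.of_dist_le_mul fun x _ x' _ ↦ ?_
    rw [dist_eq_norm, dist_eq_norm, ← sub_mul, norm_mul, coe_nnabs, mul_comm]
    refine mul_le_mul_of_nonneg_left ?_ (abs_nonneg _)
    simpa using abs_norm_sub_norm_le (x - y) (x' - y)
  · filter_upwards [compl_mem_ae_iff.2 (measure_singleton x)] with y hy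
    have hxy : x - y ≠ 0 := sub_ne_zero.2 (Ne.symm hy)
    have hnorm := (contDiffAt_norm ℝ hxy (n := 1)).differentiableAt one_ne_zero
    have := (hnorm.hasFDerivAt.comp x ((hasFDerivAt_id x).sub_const y)).sub_const ‖y‖
    exact this.mul_const (f y)

variable {E : Type*} [NormedAddCommGroup E] [InnerProductSpace ℝ E] [FiniteDimensional ℝ E]
  [MeasureSpace E] [BorelSpace E] [(volume : Measure E).IsAddHaarMeasure] {f : E → ℝ} {a : ℝ}
  {n : ℕ}

theorem fderiv_integral_norm_sub_sub_norm_mul_apply [Nontrivial E] (hf : Integrable f) (x v : E) :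
    fderiv ℝ (fun x ↦ ∫ y, (‖x - y‖ - ‖y‖) * f y) x v = ((fun z ↦ fderiv ℝ norm z v) ⋆ f) x := by
  obtain ⟨h_int, hderiv⟩ := hasFDerivAt_integral_norm_sub_sub_norm_mul hf x
  rw [hderiv.fderiv, ContinuousLinearMap.integral_apply h_int, convolution_lsmul,
    ← integral_sub_left_eq_self _ volume x]
  simp [mul_comm]

theorem HasGrowth.integral_norm_sub_sub_norm_mul [Nontrivial E] (hf : HasGrowth a n f)
    (ha : a < -Module.finrank ℝ E) :
    HasGrowth 1 (n + 1) fun x ↦ ∫ y, (‖x - y‖ - ‖y‖) * f y := by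
  have h_int := hf.integrable ha
  refine ⟨fun x ↦ (hasFDerivAt_integral_norm_sub_sub_norm_mul h_int x).2.differentiableAt,
    .of_bound (∫ y, |f y|) (.of_forall fun x ↦ ?_), fun v ↦ ?_⟩
  · rw [rpow_one, norm_of_nonneg (r := 1 + ‖x‖) (by positivity)]
    refine (abs_integral_norm_sub_sub_norm_mul_le h_int x).trans ?_
    gcongr
    exact le_add_of_nonneg_left zero_le_one
  · simp only [fderiv_integral_norm_sub_sub_norm_mul_apply h_int]
    exact (hf.convolution (measurable_fderiv_apply_const ℝ norm v).aestronglyMeasurable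
      (norm_fderiv_norm_apply_le · v) ha).mono zero_le_one

end Potential

section Laplacian

variable {f g : ℝ³ → ℝ} {a : ℝ} {n : ℕ}

theorem laplacian_eq_sum_fderiv (hf : ContDiff ℝ 2 f) :
    laplacian f = fun x ↦ ∑ i, fderiv ℝ (fun y ↦ fderiv ℝ f y (.single i 1)) x (.single i 1) := by
  funext x
  have hd : DifferentiableAt ℝ (fderiv ℝ f) x :=
    (hf.fderiv_right (m := 1) le_rfl).differentiable one_ne_zero x
  simp [laplacian, iteratedFDeriv_two_apply, fderiv_clm_apply hd (differentiableAt_const _)]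

theorem laplacian_eq_innerProductSpace_laplacian (f : ℝ³ → ℝ) :
    laplacian f = Laplacian.laplacian f := by
  rw [InnerProductSpace.laplacian_eq_iteratedFDeriv_orthonormalBasis f
    (EuclideanSpace.basisFun (Fin 3) ℝ)]
  simp [funext_iff, laplacian]

theorem laplacian_add (hf : ContDiff ℝ 2 f) (hg : ContDiff ℝ 2 g) :
    laplacian (fun x ↦ f x + g x) = fun x ↦ laplacian f x + laplacian g x := by
  funext x
  simp only [laplacian_eq_innerProductSpace_laplacian]
  exact hf.contDiffAt.laplacian_add hg.contDiffAt

theorem laplacian_const_mul (hf : ContDiff ℝ 2 f) (c : ℝ) :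
    laplacian (fun x ↦ c * f x) = fun x ↦ c * laplacian f x := by
  funext x
  simp only [laplacian_eq_innerProductSpace_laplacian]
  exact InnerProductSpace.laplacian_smul c hf.contDiffAt

theorem laplacian_sum {ι : Type*} (s : Finset ι) {F : ι → ℝ³ → ℝ}
    (hF : ∀ i ∈ s, ContDiff ℝ 2 (F i)) :
    laplacian (fun x ↦ ∑ i ∈ s, F i x) = fun x ↦ ∑ i ∈ s, laplacian (F i) x := by
  funext x
  simp only [laplacian, iteratedFDeriv_sum hF]
  simp [Finset.sum_comm (s := s)]

theorem laplacian_const_mul_comp_smul (hg : ContDiff ℝ 2 g) (a b : ℝ) :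
    laplacian (fun x ↦ a * g (b • x)) = fun x ↦ a * b ^ 2 * laplacian g (b • x) := by
  rw [laplacian_const_mul (f := fun x ↦ g (b • x)) (hg.comp (contDiff_const_smul b))]
  funext x
  simp [laplacian, iteratedFDeriv_comp_const_smul b hg, ← Finset.mul_sum, mul_assoc]

theorem contDiff_laplacian {n : WithTop ℕ∞} (hg : ContDiff ℝ (n + 2) g) :
    ContDiff ℝ n (laplacian g) :=
  .sum fun i _ ↦ (ContinuousMultilinearMap.apply ℝ (fun _ ↦ ℝ³) ℝ
    ![.single i 1, .single i 1]).contDiff.comp (hg.iteratedFDeriv_right le_rfl)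

namespace HasGrowth

theorem laplacian (hf : ContDiff ℝ 2 f)
    (hf' : ∀ v, HasGrowth a (n + 1) fun x ↦ fderiv ℝ f x v) : HasGrowth a n (laplacian f) := by
  rw [laplacian_eq_sum_fderiv hf]
  simpa only [Fin.sum_univ_three] using
    (((hf' _).2.2 _).add ((hf' _).2.2 _)).add ((hf' _).2.2 _)

end HasGrowth

end Laplacian

section RegularizedNorm

/-- The smooth approximation `√(‖z‖ ^ 2 + δ ^ 2)` of the norm, written as a real power so that it
fits into the family of the powers of `‖z‖ ^ 2 + δ ^ 2`. Its bilaplacian on `ℝ³` is a negative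
multiple of an approximate identity as `δ → 0`. -/
noncomputable def regularizedNorm {E : Type*} [Norm E] (δ : ℝ) (z : E) : ℝ :=
  (‖z‖ ^ 2 + δ ^ 2) ^ (1 / 2 : ℝ)

variable {E : Type*} [NormedAddCommGroup E] [InnerProductSpace ℝ E]

theorem hasFDerivAt_norm_sq_add_sq_rpow {δ : ℝ} {z : E} (h : ‖z‖ ^ 2 + δ ^ 2 ≠ 0) (s : ℝ) :
    HasFDerivAt (fun z : E ↦ (‖z‖ ^ 2 + δ ^ 2) ^ s)
      ((2 * s * (‖z‖ ^ 2 + δ ^ 2) ^ (s - 1)) • innerSL ℝ z) z := by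
  refine (((hasStrictFDerivAt_norm_sq z).hasFDerivAt.add_const (δ ^ 2)).rpow_const
    (p := s) (.inl h)).congr_fderiv ?_
  ext v
  simp only [smul_apply, coe_innerSL_apply, nsmul_eq_mul, Nat.cast_ofNat, smul_eq_mul]
  ring

theorem fderiv_norm_sq_add_sq_rpow_apply {δ : ℝ} (hδ : 0 < δ) (s : ℝ) (z v : E) :
    fderiv ℝ (fun z : E ↦ (‖z‖ ^ 2 + δ ^ 2) ^ s) z v =
      2 * s * (⟪z, v⟫ * (‖z‖ ^ 2 + δ ^ 2) ^ (s - 1)) := by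
  rw [(hasFDerivAt_norm_sq_add_sq_rpow (by positivity) s).fderiv]
  simp [mul_assoc, mul_comm]

theorem fderiv_regularizedNorm_apply {δ : ℝ} {z : E} (h : ‖z‖ ^ 2 + δ ^ 2 ≠ 0) (v : E) :
    fderiv ℝ (regularizedNorm δ) z v = ⟪z, v⟫ * (‖z‖ ^ 2 + δ ^ 2) ^ (-(1 / 2) : ℝ) := by
  unfold regularizedNorm
  rw [(hasFDerivAt_norm_sq_add_sq_rpow h _).fderiv]
  norm_num [mul_comm]

namespace HasGrowth

theorem inner_right (v : E) (n : ℕ) : HasGrowth 1 n fun z : E ↦ ⟪z, v⟫ := by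
  convert clm (innerSL ℝ v) using 2 with z
  exact real_inner_comm v z

theorem norm_sq_add_sq_rpow_neg {δ s : ℝ} (hδ : 0 < δ) (hs : 0 ≤ s) (n : ℕ) :
    HasGrowth (2 * -s) n fun z : E ↦ (‖z‖ ^ 2 + δ ^ 2) ^ (-s) := by
  have hfd (z : E) : HasFDerivAt (fun z : E ↦ ‖z‖ ^ 2 + δ ^ 2) (2 • innerSL ℝ z) z :=
    (hasStrictFDerivAt_norm_sq z).hasFDerivAt.add_const _
  refine (rpow_neg (c := min 1 (δ ^ 2) / 2) (p := 2) hs (fun z ↦ (hfd z).differentiableAt)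
    (by positivity) (fun z ↦ ?_) fun v ↦ ?_).of_succ
  · rw [rpow_two]
    nlinarith [min_le_left 1 (δ ^ 2), min_le_right 1 (δ ^ 2), sq_nonneg (1 - ‖z‖), sq_nonneg ‖z‖,
      (by positivity : 0 < min 1 (δ ^ 2))]
  · simpa [(hfd _).fderiv, two_mul] using
      ((inner_right v n).add (inner_right v n)).mono (b := 2) one_le_two

theorem fderiv_regularizedNorm {δ : ℝ} (hδ : 0 < δ) (v : E) (n : ℕ) :
    HasGrowth 0 n fun z ↦ fderiv ℝ (regularizedNorm δ) z v := by
  have hδ' (z : E) : ‖z‖ ^ 2 + δ ^ 2 ≠ 0 := by positivity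
  simp only [fderiv_regularizedNorm_apply (hδ' _)]
  simpa using (inner_right v n).mul (norm_sq_add_sq_rpow_neg hδ (s := 1 / 2) (by norm_num) n)

end HasGrowth

theorem contDiff_norm_sq_add_sq_rpow {δ : ℝ} (hδ : 0 < δ) (s : ℝ) {n : WithTop ℕ∞} :
    ContDiff ℝ n fun z : E ↦ (‖z‖ ^ 2 + δ ^ 2) ^ s :=
  ((contDiff_norm_sq ℝ).add contDiff_const).rpow_const_of_ne fun z ↦ by positivity

theorem laplacian_norm_sq_add_sq_rpow {δ : ℝ} (hδ : 0 < δ) (s : ℝ) :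
    laplacian (fun z ↦ (‖z‖ ^ 2 + δ ^ 2) ^ s) = fun z ↦
      2 * s * (2 * s + 1) * (‖z‖ ^ 2 + δ ^ 2) ^ (s - 1) -
        4 * s * (s - 1) * δ ^ 2 * (‖z‖ ^ 2 + δ ^ 2) ^ (s - 2) := by
  rw [laplacian_eq_sum_fderiv (contDiff_norm_sq_add_sq_rpow hδ s)]
  funext z
  have hφ : ‖z‖ ^ 2 + δ ^ 2 ≠ 0 := by positivity
  have hsecond (i : Fin 3) :
      fderiv ℝ (fun y ↦ fderiv ℝ (fun z : ℝ³ ↦ (‖z‖ ^ 2 + δ ^ 2) ^ s) y (.single i 1)) z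
        (.single i 1) = 2 * s * (‖z‖ ^ 2 + δ ^ 2) ^ (s - 1) +
          4 * s * (s - 1) * (‖z‖ ^ 2 + δ ^ 2) ^ (s - 2) * z i ^ 2 := by
    have hcoord : HasFDerivAt (fun z : ℝ³ ↦ z i) (EuclideanSpace.proj i : ℝ³ →L[ℝ] ℝ) z :=
      (EuclideanSpace.proj i : ℝ³ →L[ℝ] ℝ).hasFDerivAt
    have h := (hcoord.fun_mul (hasFDerivAt_norm_sq_add_sq_rpow hφ (s - 1))).const_mul (2 * s)
    have hinner (y : ℝ³) : ⟪y, .single i 1⟫ = y i := by simp [EuclideanSpace.inner_single_right]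
    simp only [fderiv_norm_sq_add_sq_rpow_apply hδ, hinner]
    rw [h.fderiv]
    simp only [show s - 1 - 1 = s - 2 by ring, add_apply, smul_apply, coe_innerSL_apply, hinner,
      smul_eq_mul, PiLp.proj_apply, PiLp.single_eq_same, mul_one]
    ring
  have hpow : (‖z‖ ^ 2 + δ ^ 2) ^ (s - 1) = (‖z‖ ^ 2 + δ ^ 2) ^ (s - 2) * (‖z‖ ^ 2 + δ ^ 2) := by
    rw [← rpow_add_one hφ]
    ring_nf
  simp only [hsecond, Finset.sum_add_distrib, ← Finset.mul_sum, ← EuclideanSpace.real_norm_sq_eq,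
    Finset.sum_const, Finset.card_univ, Fintype.card_fin, hpow, nsmul_eq_mul, Nat.cast_ofNat]
  ring

theorem laplacian_regularizedNorm {δ : ℝ} (hδ : 0 < δ) :
    laplacian (regularizedNorm δ) = fun z ↦
      2 * (‖z‖ ^ 2 + δ ^ 2) ^ (-(1 / 2) : ℝ) + δ ^ 2 * (‖z‖ ^ 2 + δ ^ 2) ^ (-(3 / 2) : ℝ) := by
  unfold regularizedNorm
  rw [laplacian_norm_sq_add_sq_rpow hδ]
  funext z
  norm_num

theorem laplacian_laplacian_regularizedNorm {δ : ℝ} (hδ : 0 < δ) :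
    laplacian (laplacian (regularizedNorm δ)) = fun z ↦
      -15 * δ ^ 4 * (‖z‖ ^ 2 + δ ^ 2) ^ (-(7 / 2) : ℝ) := by
  have hC (s c : ℝ) : ContDiff ℝ 2 fun z : ℝ³ ↦ c * (‖z‖ ^ 2 + δ ^ 2) ^ s :=
    contDiff_const.mul (contDiff_norm_sq_add_sq_rpow hδ s)
  rw [laplacian_regularizedNorm hδ, laplacian_add (hC _ _) (hC _ _),
    laplacian_const_mul (contDiff_norm_sq_add_sq_rpow hδ _),
    laplacian_const_mul (contDiff_norm_sq_add_sq_rpow hδ _),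
    laplacian_norm_sq_add_sq_rpow hδ, laplacian_norm_sq_add_sq_rpow hδ]
  funext z
  norm_num
  ring

end RegularizedNorm

section LaplacianConvolution

variable {f k : ℝ³ → ℝ} {a M : ℝ}

theorem convolution_laplacian (hk : AEStronglyMeasurable k) (hM : ∀ z, ‖k z‖ ≤ M)
    (hf : HasGrowth a 2 f) (ha : a < -Module.finrank ℝ ℝ³) :
    k ⋆ laplacian f = laplacian (k ⋆ f) := by
  have hfderiv (v : ℝ³) : (fun y ↦ fderiv ℝ (k ⋆ f) y v) = k ⋆ fun y ↦ fderiv ℝ f y v :=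
    funext (hf.fderiv_convolution_apply hk hM ha · v)
  rw [laplacian_eq_sum_fderiv (hf.convolution hk hM ha).contDiff,
    laplacian_eq_sum_fderiv hf.contDiff]
  funext x
  simp only [hfderiv, (hf.2.2 _).fderiv_convolution_apply hk hM ha]
  simp only [convolution_lsmul, Finset.smul_sum]
  exact integral_finsetSum _ fun i _ ↦ ((hf.2.2 _).2.2 _).integrable_mul_comp_sub hk hM ha x

theorem laplacian_convolution (hk : ContDiff ℝ 2 k)
    (hk' : ∀ v, HasGrowth 0 1 fun x ↦ fderiv ℝ k x v) (hf : HasGrowth a 1 f)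
    (ha : a < -Module.finrank ℝ ℝ³) :
    laplacian k ⋆ f = fun x ↦ ∑ i : Fin 3,
      ((fun y ↦ fderiv ℝ k y (.single i 1)) ⋆ fun y ↦ fderiv ℝ f y (.single i 1)) x := by
  rw [laplacian_eq_sum_fderiv hk]
  funext x
  simp only [(hk' _).convolution_fderiv_comm hf ha]
  simp only [convolution_lsmul, Finset.sum_smul]
  refine integral_finsetSum _ fun i _ ↦ ?_
  have ⟨_, hM⟩ := ((hk' (.single i 1)).2.2 (.single i 1)).exists_norm_le
  exact hf.integrable_mul_comp_sub ((hk' _).2.2 _).continuous.aestronglyMeasurable hM ha x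

theorem convolution_laplacian_comm (hk : HasGrowth 0 2 k) (hf : HasGrowth a 2 f)
    (ha : a < -Module.finrank ℝ ℝ³) : k ⋆ laplacian f = laplacian k ⋆ f := by
  have ⟨M, hM⟩ := hk.exists_norm_le
  have hk_meas := hk.continuous.aestronglyMeasurable (μ := volume)
  have hfderiv (v : ℝ³) : (fun y ↦ fderiv ℝ (k ⋆ f) y v) = (fun y ↦ fderiv ℝ k y v) ⋆ f := by
    rw [← hk.convolution_fderiv_comm hf ha]
    exact funext (hf.fderiv_convolution_apply hk_meas hM ha · v)
  rw [convolution_laplacian hk_meas hM hf ha,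
    laplacian_eq_sum_fderiv (hf.convolution hk_meas hM ha).contDiff,
    laplacian_convolution hk.contDiff hk.2.2 (hf.of_le one_le_two) ha]
  funext x
  refine Finset.sum_congr rfl fun i _ ↦ ?_
  have ⟨_, hM'⟩ := (hk.2.2 (.single i 1)).exists_norm_le
  rw [hfderiv, hf.fderiv_convolution_apply (hk.2.2 _).continuous.aestronglyMeasurable hM' ha]

end LaplacianConvolution

section RegularizationLimit

section

variable {E : Type*} [NormedAddCommGroup E] [InnerProductSpace ℝ E]

theorem norm_fderiv_regularizedNorm_apply_le {δ : ℝ} (hδ : 0 < δ) (z v : E) :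
    ‖fderiv ℝ (regularizedNorm δ) z v‖ ≤ ‖v‖ := by
  have hz : ‖z‖ ≤ √(‖z‖ ^ 2 + δ ^ 2) := le_sqrt_of_sq_le (by nlinarith)
  have hinner : |⟪z, v⟫| ≤ ‖v‖ * √(‖z‖ ^ 2 + δ ^ 2) :=
    (abs_real_inner_le_norm z v).trans (by rw [mul_comm]; gcongr)
  have hpow : (‖z‖ ^ 2 + δ ^ 2) ^ (-(1 / 2) : ℝ) = (√(‖z‖ ^ 2 + δ ^ 2))⁻¹ := by
    rw [sqrt_eq_rpow, ← rpow_neg (by positivity)]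
  rw [fderiv_regularizedNorm_apply (by positivity), hpow, ← div_eq_mul_inv, norm_div,
    norm_of_nonneg (sqrt_nonneg _)]
  exact div_le_of_le_mul₀ (by positivity) (by positivity) hinner

theorem tendsto_fderiv_regularizedNorm_apply {z : E} (hz : z ≠ 0) (v : E) :
    Tendsto (fun δ : ℝ ↦ fderiv ℝ (regularizedNorm δ) z v) (𝓝[>] 0)
      (𝓝 (fderiv ℝ norm z v)) := by
  have hpos δ : ‖z‖ ^ 2 + δ ^ 2 ≠ 0 := by positivity
  have hnorm : (norm : E → ℝ) = regularizedNorm 0 := by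
    funext z
    rw [regularizedNorm, zero_pow two_ne_zero, add_zero, ← sqrt_eq_rpow, sqrt_sq (norm_nonneg z)]
  rw [hnorm]
  simp only [fderiv_regularizedNorm_apply (hpos _)]
  refine (Continuous.tendsto' ?_ 0 _ rfl).mono_left nhdsWithin_le_nhds
  have : Continuous fun δ : ℝ ↦ (‖z‖ ^ 2 + δ ^ 2) ^ (-(1 / 2) : ℝ) :=
    Continuous.rpow_const (by fun_prop) fun δ ↦ .inl (hpos δ)
  fun_prop

theorem tendsto_convolution_fderiv_regularizedNorm [FiniteDimensional ℝ E] [Nontrivial E]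
    [MeasureSpace E] [BorelSpace E] [(volume : Measure E).IsAddHaarMeasure] {f : E → ℝ}
    (hf : Integrable f) (x v : E) :
    Tendsto (fun δ : ℝ ↦
      ((fun z ↦ fderiv ℝ (regularizedNorm δ) z v) ⋆ f) x) (𝓝[>] 0)
      (𝓝 (((fun z ↦ fderiv ℝ norm z v) ⋆ f) x)) := by
  have hfx : Integrable fun z ↦ f (x - z) := hf.comp_sub_left x
  refine tendsto_integral_filter_of_dominated_convergence _ (.of_forall fun δ ↦ ?_) ?_
    (hfx.norm.const_mul ‖v‖) ?_
  · exact (measurable_fderiv_apply_const ℝ _ v).aestronglyMeasurable.smul hfx.1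
  · filter_upwards [self_mem_nhdsWithin] with δ hδ
    refine .of_forall fun z ↦ ?_
    rw [ContinuousLinearMap.lsmul_apply, norm_smul]
    gcongr
    exact norm_fderiv_regularizedNorm_apply_le hδ z v
  · filter_upwards [compl_mem_ae_iff.2 (measure_singleton 0)] with z hz
    exact (tendsto_fderiv_regularizedNorm_apply hz v).smul_const _

end

variable {f : ℝ³ → ℝ} {a : ℝ}

theorem integrable_one_add_norm_sq_rpow_neg_seven_halves :
    Integrable fun w : ℝ³ ↦ (1 + ‖w‖ ^ 2) ^ (-(7 / 2) : ℝ) := by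
  simpa [neg_div] using
    integrable_rpow_neg_one_add_norm_sq (E := ℝ³) (r := 7) (μ := volume) (by norm_num)

theorem laplacian_laplacian_regularizedNorm_convolution {δ : ℝ} (hδ : 0 < δ) (x : ℝ³) :
    (laplacian (laplacian (regularizedNorm δ)) ⋆ f) x =
      -15 * ∫ w, (1 + ‖w‖ ^ 2) ^ (-(7 / 2) : ℝ) * f (x - δ • w) := by
  have hscale (g : ℝ³ → ℝ) : ∫ z, g z = δ ^ 3 * ∫ w, g (δ • w) := by
    rw [Measure.integral_comp_smul_of_nonneg _ _ _ (hR := hδ.le), finrank_euclideanSpace_fin,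
      smul_eq_mul, mul_inv_cancel_left₀ (by positivity)]
  have hpow (w : ℝ³) : (‖δ • w‖ ^ 2 + δ ^ 2) ^ (-(7 / 2) : ℝ) =
      (δ ^ 7)⁻¹ * (1 + ‖w‖ ^ 2) ^ (-(7 / 2) : ℝ) := by
    rw [norm_smul, norm_of_nonneg hδ.le, mul_pow, add_comm, ← mul_one_add,
      mul_rpow (by positivity) (by positivity), ← rpow_natCast_mul hδ.le, ← rpow_natCast δ 7,
      ← rpow_neg hδ.le]
    norm_num
  rw [laplacian_laplacian_regularizedNorm hδ, convolution_lsmul, hscale]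
  simp only [hpow, smul_eq_mul, ← integral_const_mul]
  congr with w
  field_simp

theorem tendsto_laplacian_laplacian_regularizedNorm_convolution {M : ℝ}
    (hf : Continuous f) (hM : ∀ x, ‖f x‖ ≤ M) (x : ℝ³) :
    Tendsto (fun δ : ℝ ↦
      (laplacian (laplacian (regularizedNorm δ)) ⋆ f) x) (𝓝[>] 0)
      (𝓝 (-15 * (∫ w : ℝ³, (1 + ‖w‖ ^ 2) ^ (-(7 / 2) : ℝ)) * f x)) := by
  have hpos (w : ℝ³) : 1 + ‖w‖ ^ 2 ≠ 0 := by positivity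
  have hcont : Continuous fun w : ℝ³ ↦ (1 + ‖w‖ ^ 2) ^ (-(7 / 2) : ℝ) :=
    Continuous.rpow_const (by fun_prop) fun w ↦ .inl (hpos w)
  rw [mul_assoc, ← integral_mul_const]
  refine Tendsto.congr' (eventually_mem_nhdsWithin.mono fun δ hδ ↦
    (laplacian_laplacian_regularizedNorm_convolution hδ x).symm) (.const_mul _ ?_)
  refine tendsto_integral_filter_of_dominated_convergence _ (.of_forall fun δ ↦ ?_)
    (.of_forall fun δ ↦ .of_forall fun w ↦ ?_)
    (integrable_one_add_norm_sq_rpow_neg_seven_halves.mul_const M) (.of_forall fun w ↦ ?_)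
  · exact Continuous.aestronglyMeasurable (by fun_prop)
  · rw [norm_mul, norm_of_nonneg (by positivity)]
    gcongr
    exact hM _
  · refine (Continuous.tendsto' ?_ _ _ (by simp)).mono_left nhdsWithin_le_nhds
    fun_prop

end RegularizationLimit

section Bilaplacian

variable {f : ℝ³ → ℝ} {a : ℝ}

theorem sum_fderiv_regularizedNorm_convolution_laplacian {δ : ℝ} (hδ : 0 < δ)
    (hf : HasGrowth a 3 f) (ha : a < -Module.finrank ℝ ℝ³) (x : ℝ³) :
    ∑ i : Fin 3, ((fun z ↦ fderiv ℝ (regularizedNorm δ) z (.single i 1)) ⋆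
      laplacian fun y ↦ fderiv ℝ f y (.single i 1)) x =
        (laplacian (laplacian (regularizedNorm δ)) ⋆ f) x := by
  have hN : ContDiff ℝ 2 (regularizedNorm δ : ℝ³ → ℝ) := contDiff_norm_sq_add_sq_rpow hδ _
  have hN' (n : ℕ) (v : ℝ³) := HasGrowth.fderiv_regularizedNorm hδ v n
  have hf₂ : HasGrowth a 2 f := hf.of_le (by norm_num)
  have hmeas (i : Fin 3) := (hN' 0 (.single i 1)).continuous.aestronglyMeasurable (μ := volume)
  have hbdd (i : Fin 3) (z : ℝ³) :
      ‖fderiv ℝ (regularizedNorm δ) z (.single i 1)‖ ≤ 1 := by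
    simpa using norm_fderiv_regularizedNorm_apply_le hδ z (.single i 1)
  have hΔN : HasGrowth 0 2 (laplacian (regularizedNorm δ : ℝ³ → ℝ)) :=
    .laplacian hN (hN' 3)
  obtain ⟨M, hM⟩ := hΔN.exists_norm_le
  calc ∑ i : Fin 3, ((fun z ↦ fderiv ℝ (regularizedNorm δ) z (.single i 1)) ⋆
        laplacian fun y ↦ fderiv ℝ f y (.single i 1)) x
      = ∑ i : Fin 3, laplacian ((fun z ↦ fderiv ℝ (regularizedNorm δ) z (.single i 1)) ⋆
          fun y ↦ fderiv ℝ f y (.single i 1)) x := by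
        simp only [convolution_laplacian (hmeas _) (hbdd _) (hf.2.2 _) ha]
    _ = laplacian (laplacian (regularizedNorm δ) ⋆ f) x := by
        rw [laplacian_convolution hN (hN' 1) (hf.of_le (by norm_num)) ha, laplacian_sum]
        exact fun i _ ↦ ((hf.2.2 _).convolution (hmeas i) (hbdd i) ha).contDiff
    _ = (laplacian (laplacian (regularizedNorm δ)) ⋆ f) x := by
        rw [← convolution_laplacian hΔN.continuous.aestronglyMeasurable hM hf₂ ha,
          convolution_laplacian_comm hΔN hf₂ ha]

theorem laplacian_integral_norm_sub_sub_norm_mul (hf : HasGrowth a 1 f)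
    (ha : a < -Module.finrank ℝ ℝ³) :
    laplacian (fun x ↦ ∫ y, (‖x - y‖ - ‖y‖) * f y) = fun x ↦ ∑ i : Fin 3,
      ((fun z ↦ fderiv ℝ norm z (.single i 1)) ⋆ fun y ↦ fderiv ℝ f y (.single i 1)) x := by
  rw [laplacian_eq_sum_fderiv (hf.integral_norm_sub_sub_norm_mul ha).contDiff]
  funext x
  refine Finset.sum_congr rfl fun i _ ↦ ?_
  simp only [fderiv_integral_norm_sub_sub_norm_mul_apply (hf.integrable ha)]
  exact hf.fderiv_convolution_apply (measurable_fderiv_apply_const ℝ norm _).aestronglyMeasurable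
    (norm_fderiv_norm_apply_le · _) ha x _

theorem laplacian_laplacian_integral_norm_sub_sub_norm_mul (hf : HasGrowth a 3 f)
    (ha : a < -Module.finrank ℝ ℝ³) (x : ℝ³) :
    laplacian (laplacian fun x ↦ ∫ y, (‖x - y‖ - ‖y‖) * f y) x =
      -15 * (∫ w : ℝ³, (1 + ‖w‖ ^ 2) ^ (-(7 / 2) : ℝ)) * f x := by
  have hmeas (i : Fin 3) : AEStronglyMeasurable fun z : ℝ³ ↦ fderiv ℝ norm z (.single i 1) :=
    (measurable_fderiv_apply_const ℝ norm _).aestronglyMeasurable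
  have hbdd (i : Fin 3) := (norm_fderiv_norm_apply_le (E := ℝ³) · (.single i 1))
  have hΔf (i : Fin 3) : HasGrowth a 0 (laplacian fun y ↦ fderiv ℝ f y (.single i 1)) :=
    .laplacian (hf.2.2 _).contDiff (hf.2.2 _).2.2
  have ha₀ : a ≤ 0 := ha.le.trans (neg_nonpos.2 (Nat.cast_nonneg _))
  obtain ⟨M, hM⟩ := (hf.mono ha₀).exists_norm_le
  have hlap : laplacian (laplacian fun x ↦ ∫ y, (‖x - y‖ - ‖y‖) * f y) x =
      ∑ i : Fin 3, ((fun z ↦ fderiv ℝ norm z (.single i 1)) ⋆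
        laplacian fun y ↦ fderiv ℝ f y (.single i 1)) x := by
    rw [laplacian_integral_norm_sub_sub_norm_mul (hf.of_le (by norm_num)) ha, laplacian_sum]
    · simp only [convolution_laplacian (hmeas _) (hbdd _) (hf.2.2 _) ha]
    · exact fun i _ ↦ ((hf.2.2 _).convolution (hmeas i) (hbdd i) ha).contDiff
  rw [hlap]
  refine tendsto_nhds_unique (tendsto_finsetSum _ fun i _ ↦
    tendsto_convolution_fderiv_regularizedNorm ((hΔf i).integrable ha) x _)
    ((tendsto_laplacian_laplacian_regularizedNorm_convolution hf.continuous hM x).congr' ?_)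
  filter_upwards [self_mem_nhdsWithin] with δ hδ
  exact (sum_fderiv_regularizedNorm_convolution_laplacian hδ hf ha x).symm

end Bilaplacian

section Regularity

variable {q ε c : ℝ} {n : ℕ} {u : ℝ³ → ℝ}

theorem potentialMap_neg (x : ℝ³) : potentialMap q ε u (-x) = potentialMap q ε u x := by
  simp [potentialMap, symmKernel_neg_left]

theorem eq_add_integral_of_potentialMap_eq_self (hfix : potentialMap q ε u = u)
    (hu : Integrable fun y ↦ u y ^ (-q)) :
    u = fun x ↦ 1 + (x 0 ^ 2 + x 1 ^ 2) + ε * ∫ y, (‖x - y‖ - ‖y‖) * u y ^ (-q) := by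
  have heven (y : ℝ³) : u (-y) = u y := by rw [← hfix, potentialMap_neg]
  nth_rw 1 [← hfix]
  funext x
  rw [potentialMap, integral_symmKernel_mul_eq_of_even hu fun y ↦ by rw [heven]]

theorem hasFDerivAt_sq_add_sq (x : ℝ³) : HasFDerivAt (fun x : ℝ³ ↦ 1 + (x 0 ^ 2 + x 1 ^ 2))
    ((2 * x 0) • (EuclideanSpace.proj 0 : ℝ³ →L[ℝ] ℝ) +
      (2 * x 1) • (EuclideanSpace.proj 1 : ℝ³ →L[ℝ] ℝ)) x := by
  have h (i : Fin 3) := ((EuclideanSpace.proj i : ℝ³ →L[ℝ] ℝ).hasFDerivAt (x := x)).pow 2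
  simpa using ((h 0).add (h 1)).const_add 1

theorem HasGrowth.fderiv_sq_add_sq (v : ℝ³) (n : ℕ) :
    HasGrowth 1 n fun x ↦ fderiv ℝ (fun x : ℝ³ ↦ 1 + (x 0 ^ 2 + x 1 ^ 2)) x v := by
  have h (i : Fin 3) : HasGrowth 1 n fun x : ℝ³ ↦ 2 * v i * x i :=
    (clm (EuclideanSpace.proj i : ℝ³ →L[ℝ] ℝ)).const_mul _
  convert (h 0).add (h 1) using 2 with x
  simp only [(hasFDerivAt_sq_add_sq x).fderiv, add_apply, smul_apply, PiLp.proj_apply, smul_eq_mul]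
  ring

theorem laplacian_laplacian_sq_add_sq :
    laplacian (laplacian fun x ↦ 1 + (x 0 ^ 2 + x 1 ^ 2)) = 0 := by
  have h : laplacian (fun x ↦ 1 + (x 0 ^ 2 + x 1 ^ 2)) = fun _ ↦ 4 := by
    rw [laplacian_eq_sum_fderiv (by fun_prop)]
    funext x
    have hd (i : Fin 3) : fderiv ℝ (fun x : ℝ³ ↦ 2 * x i) x =
        (2 : ℝ) • (EuclideanSpace.proj i : ℝ³ →L[ℝ] ℝ) :=
      ((EuclideanSpace.proj i : ℝ³ →L[ℝ] ℝ).hasFDerivAt.const_mul 2).fderiv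
    have hfd (i : Fin 3) (y : ℝ³) :
        fderiv ℝ (fun x : ℝ³ ↦ 1 + (x 0 ^ 2 + x 1 ^ 2)) y (.single i 1) =
          ![2 * y 0, 2 * y 1, 0] i := by
      fin_cases i <;> simp [(hasFDerivAt_sq_add_sq y).fderiv]
    simp only [hfd, Fin.sum_univ_three, Matrix.cons_val, hd, fderiv_fun_const]
    norm_num
  rw [h, laplacian_eq_sum_fderiv contDiff_const]
  simp only [fderiv_fun_const, Pi.zero_apply, zero_apply, Finset.sum_const_zero]
  rfl

theorem hasGrowth_rpow_neg_of_eq_add_integral (hq : 3 < q) (hu : Continuous u) (hc : 0 < c)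
    (hcu : ∀ x, c * (1 + ‖x‖) ≤ u x)
    (h : u = fun x ↦ 1 + (x 0 ^ 2 + x 1 ^ 2) + ε * ∫ y, (‖x - y‖ - ‖y‖) * u y ^ (-q)) (n : ℕ) :
    HasGrowth (-q) n fun x ↦ u x ^ (-q) := by
  have hcu' : ∀ x, c * (1 + ‖x‖) ^ (1 : ℝ) ≤ u x := by simpa using hcu
  induction n with
  | zero =>
    have hpos (x : ℝ³) : 0 < u x := lt_of_lt_of_le (by positivity) (hcu x)
    exact ⟨hu.rpow_const fun x ↦ .inl (hpos x).ne',
      by simpa using isBigO_rpow_neg_of_mul_rpow_le (by linarith) hc hcu'⟩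
  | succ n ih =>
    have hV := (ih.integral_norm_sub_sub_norm_mul (by simpa using hq)).const_mul ε
    have hd (x : ℝ³) := ((hasFDerivAt_sq_add_sq x).differentiableAt.hasFDerivAt.add
      (hV.1 x).hasFDerivAt).congr_of_eventuallyEq (.of_forall (congrFun h))
    refine (HasGrowth.rpow_neg (by linarith) (fun x ↦ (hd x).differentiableAt) hc hcu'
      fun v ↦ ?_).mono (by simp)
    simpa [(hd _).fderiv] using (HasGrowth.fderiv_sq_add_sq v n).add (hV.2.2 v)

theorem integral_one_add_norm_sq_rpow_neg_seven_halves_pos :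
    0 < ∫ w : ℝ³, (1 + ‖w‖ ^ 2) ^ (-(7 / 2) : ℝ) :=
  integral_pos_of_integrable_nonneg_nonzero (x := 0)
    (by simpa [add_comm] using
      (contDiff_norm_sq_add_sq_rpow (E := ℝ³) (n := 0) one_pos (-(7 / 2))).continuous)
    integrable_one_add_norm_sq_rpow_neg_seven_halves (fun w ↦ by positivity) (by simp)

theorem laplacian_laplacian_eq_of_eq_add_integral (hq : 3 < q)
    (hf : HasGrowth (-q) 3 fun x ↦ u x ^ (-q))
    (h : u = fun x ↦ 1 + (x 0 ^ 2 + x 1 ^ 2) + ε * ∫ y, (‖x - y‖ - ‖y‖) * u y ^ (-q)) (x : ℝ³) :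
    laplacian (laplacian u) x =
      -(15 * ε * ∫ w : ℝ³, (1 + ‖w‖ ^ 2) ^ (-(7 / 2) : ℝ)) * u x ^ (-q) := by
  have ha : -q < -Module.finrank ℝ ℝ³ := by simpa using hq
  have hV : ContDiff ℝ (2 + 2) fun x ↦ ∫ y, (‖x - y‖ - ‖y‖) * u y ^ (-q) :=
    (hf.integral_norm_sub_sub_norm_mul ha).contDiff
  have hV₂ : ContDiff ℝ 2 fun x ↦ ∫ y, (‖x - y‖ - ‖y‖) * u y ^ (-q) := hV.of_le (by norm_num)
  have hP : ContDiff ℝ (2 + 2) fun x : ℝ³ ↦ 1 + (x 0 ^ 2 + x 1 ^ 2) := by fun_prop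
  have hΔV := contDiff_laplacian hV
  conv_lhs => rw [h]
  rw [laplacian_add (hP.of_le (by norm_num)) (contDiff_const.mul hV₂),
    laplacian_const_mul hV₂, laplacian_add (contDiff_laplacian hP)
    (contDiff_const.mul hΔV), laplacian_const_mul hΔV, laplacian_laplacian_sq_add_sq]
  simp only [laplacian_laplacian_integral_norm_sub_sub_norm_mul hf ha, Pi.zero_apply]
  ring

theorem contDiff_four_of_eq_add_integral (hq : 3 < q)
    (hf : HasGrowth (-q) 3 fun x ↦ u x ^ (-q))
    (h : u = fun x ↦ 1 + (x 0 ^ 2 + x 1 ^ 2) + ε * ∫ y, (‖x - y‖ - ‖y‖) * u y ^ (-q)) :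
    ContDiff ℝ 4 u := by
  have hV : ContDiff ℝ 4 fun x ↦ ∫ y, (‖x - y‖ - ‖y‖) * u y ^ (-q) :=
    (hf.integral_norm_sub_sub_norm_mul (by simpa using hq)).contDiff
  rw [h]
  fun_prop

theorem exists_abs_sub_sq_add_sq_le_of_eq_add_integral (hq : 3 < q)
    (hf : HasGrowth (-q) n fun x ↦ u x ^ (-q))
    (h : u = fun x ↦ 1 + (x 0 ^ 2 + x 1 ^ 2) + ε * ∫ y, (‖x - y‖ - ‖y‖) * u y ^ (-q)) :
    ∃ C, ∀ x, |u x - (x 0 ^ 2 + x 1 ^ 2)| ≤ C * (1 + ‖x‖) := by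
  have hV := ((hf.integral_norm_sub_sub_norm_mul (by simpa using hq)).const_mul ε).add
    ((HasGrowth.const 1).mono zero_le_one)
  obtain ⟨C, hC⟩ := hV.isBigO.bound
  refine ⟨C, fun x ↦ ?_⟩
  have hx := eventually_top.1 hC x
  rw [rpow_one, norm_of_nonneg (by positivity : 0 ≤ 1 + ‖x‖), norm_eq_abs] at hx
  refine le_of_eq_of_le (congrArg abs ?_) hx
  rw [congrFun h x]
  ring

theorem exists_laplacian_laplacian_eq_neg_mul (hq : 3 < q) : ∃ l > 0, ∃ u : ℝ³ → ℝ,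
    ContDiff ℝ 4 u ∧ (∃ c > 0, ∀ x, c * (1 + ‖x‖) ≤ u x) ∧
      (∃ C, ∀ x, |u x - (x 0 ^ 2 + x 1 ^ 2)| ≤ C * (1 + ‖x‖)) ∧
      ∀ x, laplacian (laplacian u) x = -l * u x ^ (-q) := by
  obtain ⟨ε, hε, u, hu, ⟨c, hc, hcu⟩, hfix⟩ := exists_potentialMap_eq_self hq
  have h := eq_add_integral_of_potentialMap_eq_self hfix
    (integrable_rpow_neg_of_mul_one_add_norm_le (by simpa using hq) hu hc hcu)
  have hf := hasGrowth_rpow_neg_of_eq_add_integral hq hu hc hcu h 3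
  exact ⟨_, mul_pos (by positivity) integral_one_add_norm_sq_rpow_neg_seven_halves_pos, u,
    contDiff_four_of_eq_add_integral hq hf h, ⟨c, hc, hcu⟩,
    exists_abs_sub_sq_add_sq_le_of_eq_add_integral hq hf h,
    laplacian_laplacian_eq_of_eq_add_integral hq hf h⟩

theorem exists_rescaling {l κ : ℝ} (hl : 0 < l) (hκ : 0 < κ) (hq : 1 < q) :
    ∃ A > 0, ∃ B > 0, A * B ^ 2 = κ ∧ A * B ^ 4 * l = A ^ (-q) := by
  have hA : 0 < (κ ^ 2 * l) ^ (-(q - 1))⁻¹ := by positivity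
  have hAq : ((κ ^ 2 * l) ^ (-(q - 1))⁻¹) ^ (-(q - 1)) = κ ^ 2 * l :=
    rpow_inv_rpow (by positivity) (by linarith)
  set A := (κ ^ 2 * l) ^ (-(q - 1))⁻¹
  have hAB : A * √(κ / A) ^ 2 = κ := by
    rw [sq_sqrt (by positivity), mul_div_cancel₀ _ hA.ne']
  refine ⟨A, hA, √(κ / A), by positivity, hAB, mul_right_cancel₀ hA.ne' ?_⟩
  calc A * √(κ / A) ^ 4 * l * A = (A * √(κ / A) ^ 2) ^ 2 * l := by ring
    _ = A ^ (-(q - 1)) := by rw [hAB, hAq]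
    _ = A ^ (-q) * A := by rw [← rpow_add_one hA.ne', neg_sub', sub_neg_eq_add]

theorem exists_solution_asymptotic_sq_add_sq {κ : ℝ} (hq : 3 < q) (hκ : 0 < κ) :
    ∃ u : ℝ³ → ℝ, ContDiff ℝ 4 u ∧ (∃ c > 0, ∀ x, c * (1 + ‖x‖) ≤ u x) ∧
      (∃ C, ∀ x, |u x - κ * (x 0 ^ 2 + x 1 ^ 2)| ≤ C * (1 + ‖x‖)) ∧
      ∀ x, laplacian (laplacian u) x + u x ^ (-q) = 0 := by
  obtain ⟨l, hl, u, hu, ⟨c, hc, hcu⟩, ⟨C, hC⟩, hΔ⟩ := exists_laplacian_laplacian_eq_neg_mul hq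
  obtain ⟨A, hA, B, hB, hκAB, hlAB⟩ := exists_rescaling hl hκ (by linarith : 1 < q)
  have hpos (x : ℝ³) : 0 < u x := lt_of_lt_of_le (by positivity) (hcu x)
  have hC₀ : 0 ≤ C := by simpa using (abs_nonneg _).trans (hC 0)
  have hBx (x : ℝ³) : ‖B • x‖ = B * ‖x‖ := by rw [norm_smul, norm_of_nonneg hB.le]
  refine ⟨fun x ↦ A * u (B • x), by fun_prop,
    ⟨A * c * min 1 B, by positivity, fun x ↦ ?_⟩, ⟨A * C * max 1 B, fun x ↦ ?_⟩, fun x ↦ ?_⟩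
  · have hmin : min 1 B * (1 + ‖x‖) ≤ 1 + ‖B • x‖ := by
      rw [hBx, mul_one_add]
      gcongr
      exacts [min_le_left _ _, min_le_right _ _]
    calc A * c * min 1 B * (1 + ‖x‖) = A * (c * (min 1 B * (1 + ‖x‖))) := by ring
      _ ≤ A * (c * (1 + ‖B • x‖)) := by gcongr
      _ ≤ A * u (B • x) := by gcongr; exact hcu _
  · have hmax : 1 + ‖B • x‖ ≤ max 1 B * (1 + ‖x‖) := by
      rw [hBx, mul_one_add]
      gcongr
      exacts [le_max_left _ _, le_max_right _ _]
    calc |A * u (B • x) - κ * (x 0 ^ 2 + x 1 ^ 2)|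
        = |A * (u (B • x) - ((B • x) 0 ^ 2 + (B • x) 1 ^ 2))| := by
          simp only [← hκAB, PiLp.smul_apply, smul_eq_mul]
          ring_nf
      _ ≤ A * (C * (1 + ‖B • x‖)) := by
          rw [abs_mul, abs_of_pos hA]
          gcongr
          exact hC _
      _ ≤ A * (C * (max 1 B * (1 + ‖x‖))) := by gcongr
      _ = A * C * max 1 B * (1 + ‖x‖) := by ring
  · rw [laplacian_const_mul_comp_smul (hu.of_le (by norm_num)),
      laplacian_const_mul_comp_smul (contDiff_laplacian (n := 2) hu)]
    simp only [hΔ, mul_rpow hA.le (hpos _).le, ← hlAB]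
    ring

end Regularity

section Asymptotics

theorem tendsto_smul_const_cocompact {E : Type*} [NormedAddCommGroup E] [NormedSpace ℝ E]
    [ProperSpace E] {v : E} (hv : v ≠ 0) : Tendsto (fun t : ℝ ↦ t • v) atTop (cocompact E) := by
  rw [← Metric.cobounded_eq_cocompact, ← tendsto_norm_atTop_iff_cobounded]
  simpa only [norm_smul] using tendsto_norm_atTop_atTop.atTop_mul_const (norm_pos_iff.2 hv)

variable {κ c C : ℝ} {u : ℝ³ → ℝ}

theorem tendsto_add_smul_div_sq (hu : ∀ x, |u x - κ * (x 0 ^ 2 + x 1 ^ 2)| ≤ C * (1 + ‖x‖))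
    (p v : ℝ³) :
    Tendsto (fun t : ℝ ↦ u (p + t • v) / t ^ 2) atTop (𝓝 (κ * (v 0 ^ 2 + v 1 ^ 2))) := by
  have hC : 0 ≤ C := by simpa using (abs_nonneg _).trans (hu 0)
  have hinv (a : ℝ) : Tendsto (fun t : ℝ ↦ a / t) atTop (𝓝 0) :=
    tendsto_const_nhds.div_atTop tendsto_id
  have hlead : Tendsto (fun t : ℝ ↦ κ * ((p 0 / t + v 0) ^ 2 + (p 1 / t + v 1) ^ 2)) atTop
      (𝓝 (κ * (v 0 ^ 2 + v 1 ^ 2))) := by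
    simpa using ((((hinv (p 0)).add_const (v 0)).pow 2).add
      (((hinv (p 1)).add_const (v 1)).pow 2)).const_mul κ
  have herr : Tendsto (fun t : ℝ ↦ C * ((1 + ‖p‖) / t ^ 2 + ‖v‖ / t)) atTop (𝓝 0) := by
    simpa using ((tendsto_const_nhds.div_atTop (tendsto_pow_atTop two_ne_zero)).add
      (hinv ‖v‖)).const_mul C
  refine hlead.congr_dist (squeeze_zero' (.of_forall fun _ ↦ dist_nonneg) ?_ herr)
  filter_upwards [eventually_gt_atTop 0] with t ht
  have hscale : κ * ((p 0 / t + v 0) ^ 2 + (p 1 / t + v 1) ^ 2) =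
      κ * ((p + t • v) 0 ^ 2 + (p + t • v) 1 ^ 2) / t ^ 2 := by
    simp only [PiLp.add_apply, PiLp.smul_apply, smul_eq_mul]
    field_simp
  rw [dist_comm, dist_eq, hscale, ← sub_div, abs_div, abs_of_pos (by positivity : 0 < t ^ 2),
    div_le_iff₀ (by positivity)]
  calc |u (p + t • v) - κ * ((p + t • v) 0 ^ 2 + (p + t • v) 1 ^ 2)|
      ≤ C * (1 + ‖p + t • v‖) := hu _
    _ ≤ C * (1 + (‖p‖ + t * ‖v‖)) := by
        gcongr
        exact (norm_add_le _ _).trans_eq (by rw [norm_smul, norm_of_nonneg ht.le])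
    _ = C * ((1 + ‖p‖) / t ^ 2 + ‖v‖ / t) * t ^ 2 := by
        field_simp
        ring

theorem not_radial_of_abs_sub_le (hκ : κ ≠ 0)
    (hu : ∀ x, |u x - κ * (x 0 ^ 2 + x 1 ^ 2)| ≤ C * (1 + ‖x‖)) :
    ¬∃ p, ∀ x y, ‖x - p‖ = ‖y - p‖ → u x = u y := by
  rintro ⟨p, hp⟩
  have heq (t : ℝ) : u (p + t • .single 0 1) = u (p + t • .single 2 1) :=
    hp _ _ (by simp [norm_smul])
  have h₀ := tendsto_add_smul_div_sq hu p (.single 0 1)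
  have h₂ := tendsto_add_smul_div_sq hu p (.single 2 1)
  simp only [heq] at h₀
  exact hκ (by simpa using tendsto_nhds_unique h₀ h₂)

theorem liminf_div_norm_pos (hc : 0 < c) (hcu : ∀ x, c * (1 + ‖x‖) ≤ u x)
    (hu : ∀ x, |u x - κ * (x 0 ^ 2 + x 1 ^ 2)| ≤ C * (1 + ‖x‖)) :
    0 < liminf (fun x ↦ u x / ‖x‖) (cocompact ℝ³) := by
  have hC : 0 ≤ C := by simpa using (abs_nonneg _).trans (hu 0)
  refine hc.trans_le (le_liminf_of_le (.of_frequently_le (a := 2 * C) ?_) ?_)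
  · refine (tendsto_smul_const_cocompact (v := .single 2 1) (by simp)).frequently
      (Eventually.frequently ?_)
    filter_upwards [eventually_ge_atTop 1] with t ht
    have h : u (t • .single 2 1) ≤ C * (1 + t) := by
      simpa [norm_smul, abs_of_nonneg (zero_le_one.trans ht)] using
        (abs_le.1 (hu (t • .single 2 1))).2
    rw [norm_smul, norm_of_nonneg (by linarith), PiLp.norm_single, norm_one, mul_one,
      div_le_iff₀ (by linarith)]
    nlinarith
  · filter_upwards [tendsto_norm_cocompact_atTop.eventually_gt_atTop 0] with x hx
    rw [le_div_iff₀ hx]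
    linarith [hcu x]

theorem tendsto_one_add_norm_div_norm_sq_cocompact (E : Type*) [NormedAddCommGroup E]
    [ProperSpace E] : Tendsto (fun x : E ↦ (1 + ‖x‖) / ‖x‖ ^ 2) (cocompact E) (𝓝 0) := by
  have h : Tendsto (fun t : ℝ ↦ (1 + t) / t ^ 2) atTop (𝓝 0) := by
    simpa [add_div, sq, div_self_mul_self'] using
      ((tendsto_const_nhds (x := (1 : ℝ))).div_atTop (tendsto_pow_atTop two_ne_zero)).add
        tendsto_inv_atTop_zero
  exact h.comp tendsto_norm_cocompact_atTop

theorem limsup_div_norm_sq_eq (hκ : 0 ≤ κ)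
    (hu : ∀ x, |u x - κ * (x 0 ^ 2 + x 1 ^ 2)| ≤ C * (1 + ‖x‖)) :
    limsup (fun x ↦ u x / ‖x‖ ^ 2) (cocompact ℝ³) = κ := by
  have hlim : Tendsto (fun x : ℝ³ ↦ κ + C * ((1 + ‖x‖) / ‖x‖ ^ 2)) (cocompact ℝ³) (𝓝 κ) := by
    simpa using ((tendsto_one_add_norm_div_norm_sq_cocompact ℝ³).const_mul C).const_add κ
  have hle : ∀ᶠ x : ℝ³ in cocompact ℝ³, u x / ‖x‖ ^ 2 ≤ κ + C * ((1 + ‖x‖) / ‖x‖ ^ 2) := by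
    filter_upwards [tendsto_norm_cocompact_atTop.eventually_gt_atTop 0] with x hx
    have hsq : x 0 ^ 2 + x 1 ^ 2 ≤ ‖x‖ ^ 2 := by
      rw [EuclideanSpace.real_norm_sq_eq, Fin.sum_univ_three]
      exact le_add_of_nonneg_right (sq_nonneg _)
    rw [div_le_iff₀ (by positivity), add_mul, mul_assoc, div_mul_cancel₀ _ (by positivity)]
    linarith [(abs_le.1 (hu x)).2, mul_le_mul_of_nonneg_left hsq hκ]
  have hcluster : MapClusterPt κ (cocompact ℝ³) fun x ↦ u x / ‖x‖ ^ 2 := by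
    refine .of_comp (tendsto_smul_const_cocompact (v := .single 0 1) (by simp))
      (Tendsto.mapClusterPt ?_)
    simpa [norm_smul, Function.comp_def] using tendsto_add_smul_div_sq hu 0 (.single 0 1)
  have hbdd := hlim.isBoundedUnder_le.mono_le hle
  refine le_antisymm ?_ (hcluster.le_limsup hbdd)
  rw [← hlim.limsup_eq]
  exact limsup_le_limsup hle (.of_frequently_ge (hcluster.frequently
    (eventually_ge_nhds (sub_one_lt κ)))) hlim.isBoundedUnder_le

end Asymptotics

theorem exists_nonradial_solution_mixed_growth_general (q κ : ℝ) (hq : 3 < q) (hκ : 0 < κ) :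
    ∃ u : ℝ³ → ℝ, ContDiff ℝ 4 u ∧ (∀ x, 0 < u x) ∧
      (∀ x, laplacian (laplacian u) x + u x ^ (-q) = 0) ∧
      (¬∃ p : ℝ³, ∀ x y, ‖x - p‖ = ‖y - p‖ → u x = u y) ∧
      0 < liminf (fun x ↦ u x / ‖x‖) (cocompact ℝ³) ∧
      limsup (fun x ↦ u x / ‖x‖ ^ 2) (cocompact ℝ³) = κ := by
  obtain ⟨u, hu, ⟨c, hc, hcu⟩, ⟨C, hC⟩, hΔ⟩ := exists_solution_asymptotic_sq_add_sq hq hκ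
  exact ⟨u, hu, fun x ↦ lt_of_lt_of_le (by positivity) (hcu x), hΔ,
    not_radial_of_abs_sub_le hκ.ne' hC, liminf_div_norm_pos hc hcu hC,
    limsup_div_norm_sq_eq hκ.le hC⟩

/-- **Theorem.** For `q > 7` and `κ > 0` there exists a positive `C⁴` solution of
`Δ²u + u^{-q} = 0` on ℝ³, not radially symmetric about any point, with
`liminf_{|x|→∞} u(x)/|x| ∈ (0,∞)` and `limsup_{|x|→∞} u(x)/|x|² = κ`.
(Note that for the real-valued `liminf`, positivity `0 < liminf` also rules out the degenerate
unbounded case, since in ℝ the `liminf` of a function tending to `+∞` equals the junk value `0`.) -/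
theorem exists_nonradial_solution_mixed_growth
    (q κ : ℝ) (hq : 7 < q) (hκ : 0 < κ) :
    ∃ u : EuclideanSpace ℝ (Fin 3) → ℝ,
      ContDiff ℝ 4 u ∧ (∀ x, 0 < u x) ∧
      (∀ x, laplacian (laplacian u) x + (u x) ^ (-q) = 0) ∧
      (¬ ∃ p : EuclideanSpace ℝ (Fin 3), ∀ x y, ‖x - p‖ = ‖y - p‖ → u x = u y) ∧
      0 < liminf (fun x => u x / ‖x‖) (cocompact (EuclideanSpace ℝ (Fin 3))) ∧
      limsup (fun x => u x / ‖x‖ ^ 2) (cocompact (EuclideanSpace ℝ (Fin 3))) = κ :=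
  exists_nonradial_solution_mixed_growth_general q κ (by linarith) hκ
end

section
/- Let q > 0 and let P : ℝ³ → (0, ∞) be a continuous function with P(−x) = P(x) for all x and ∫_{ℝ³} |x| P(x)^{−q} dx < ∞. Then there exists a continuous function v : ℝ³ → ℝ with v(−x) = v(x) for all x, sup_{x∈ℝ³} |v(x)|/(1+|x|) < ∞, min_{ℝ³} v = v(0) = 0, satisfying v(x) = (1/8π)∫_{ℝ³} (|x−y| − |y|) (P(y) + v(y))^{−q} dy for all x ∈ ℝ³, and lim_{|x|→∞} v(x)/|x| = (1/8π)∫_{ℝ³} (P(y) + v(y))^{−q} dy. -/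
open MeasureTheory Filter Topology Real

/-! Averaging the kernel `‖x - y‖ - ‖y‖` with its reflection in `x` does not affect integrals
against even densities, and makes the kernel nonnegative, zero at `x = 0` and bounded by `‖x‖`.
Hence any solution of the averaged equation, with `P + max v 0` in place of `P + v`, is
automatically even, nonnegative, zero at `0` and Lipschitz, and solves the original equation. To
find one, evaluate `v` inside the nonlinearity at `s y` instead of `y`, where `s` is a simple
function: Brouwer's theorem solves the resulting finite-dimensional problem, and as `s` tends to the
identity the equi-Lipschitz solutions subconverge to a solution of the integral equation. The slope
at infinity is dominated convergence.

Brouwer's theorem comes from the volume argument of Milnor and Rogers. If a Lipschitz map `g`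
vanishes outside `U`, then for large `t` the map `x ↦ t • x + g x` is a bijection from `U` onto
`t • U` with positive Jacobian, so that `∫ x in U, det (t + Dg x) = t ^ n * vol U`. Both sides are
polynomial in `t`, so this persists at `t = 1`; with `g = r - id` for a retraction `r` of the ball
`U` onto its boundary, the integrand would be `det (Dr) = 0`. -/

/-! ### Brouwer's fixed point theorem -/

section PolynomialIdentity

open Polynomial

theorem integral_eval_eq_sum_lagrange {α : Type*} [MeasurableSpace α] {μ : Measure α}
    {p : α → ℝ[X]} {s : Finset ℝ} (hdeg : ∀ x, (p x).degree < s.card)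
    (hint : ∀ a ∈ s, Integrable (fun x => (p x).eval a) μ) (t : ℝ) :
    ∫ x, (p x).eval t ∂μ
      = ∑ a ∈ s, (∫ x, (p x).eval a ∂μ) * (Lagrange.basis s id a).eval t := by
  have interpolation (x : α) :
      (p x).eval t = ∑ a ∈ s, (p x).eval a * (Lagrange.basis s id a).eval t := by
    conv_lhs => rw [Lagrange.eq_interpolate (Set.injOn_id _) (hdeg x)]
    simp [Lagrange.interpolate_apply, eval_finsetSum]
  simp_rw [interpolation]
  rw [integral_finsetSum _ fun a ha => (hint a ha).mul_const _]
  simp_rw [integral_mul_const]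

theorem integral_eval_eq_of_infinite {α : Type*} [MeasurableSpace α] {μ : Measure α} {n : ℕ}
    {p : α → ℝ[X]} {P : ℝ[X]} {S : Set ℝ} (hp : ∀ x, (p x).natDegree ≤ n) (hS : S.Infinite)
    (hint : ∀ a ∈ S, Integrable (fun x => (p x).eval a) μ)
    (heq : ∀ a ∈ S, ∫ x, (p x).eval a ∂μ = P.eval a) (hP : P.natDegree ≤ n) (t : ℝ) :
    ∫ x, (p x).eval t ∂μ = P.eval t := by
  obtain ⟨s, hsS, hcard⟩ := hS.exists_subset_card_eq (n + 1)
  have degree_lt {f : ℝ[X]} (hf : f.natDegree ≤ n) : f.degree < s.card := by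
    rw [hcard]
    exact degree_le_natDegree.trans_lt (by exact_mod_cast Nat.lt_succ_of_le hf)
  rw [integral_eval_eq_sum_lagrange (fun x => degree_lt (hp x)) (fun a ha => hint a (hsS ha)),
    Finset.sum_congr rfl fun a ha => by rw [heq a (hsS ha)]]
  conv_rhs => rw [Lagrange.eq_interpolate (Set.injOn_id _) (degree_lt hP)]
  simp [Lagrange.interpolate_apply, eval_finsetSum]

end PolynomialIdentity

theorem inter_frontier_nonempty_of_isPreconnected {X : Type*} [TopologicalSpace X] {s t : Set X}
    (ht : IsPreconnected t) (hts : (t ∩ s).Nonempty) (hts' : (t ∩ sᶜ).Nonempty) :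
    (t ∩ frontier s).Nonempty := by
  by_contra! h
  have hcover : t ⊆ interior s ∪ interior sᶜ := by
    rw [← compl_frontier_eq_union_interior]
    exact Set.subset_compl_iff_disjoint_right.2 (Set.disjoint_iff_inter_eq_empty.2 h)
  rcases ht.subset_or_subset isOpen_interior isOpen_interior
    (disjoint_compl_right.mono interior_subset interior_subset) hcover with hsub | hsub
  · obtain ⟨x, hx, hxs⟩ := hts'
    exact hxs (interior_subset (hsub hx))
  · obtain ⟨x, hx, hxs⟩ := hts
    exact interior_subset (hsub hx) hxs

theorem lipschitzWith_indicator {E F : Type*} [NormedAddCommGroup E] [NormedSpace ℝ E]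
    [SeminormedAddCommGroup F] {C : NNReal} {f : E → F} {s : Set E} (hf : LipschitzOnWith C f s)
    (hs : IsClosed s) (hfs : ∀ x ∈ frontier s, f x = 0) : LipschitzWith C (s.indicator f) := by
  have across {x y : E} (hx : x ∈ s) (hy : y ∉ s) : dist (f x) 0 ≤ C * dist x y := by
    obtain ⟨z, hz, hzs⟩ := inter_frontier_nonempty_of_isPreconnected
      (convex_segment x y).isPreconnected ⟨x, left_mem_segment ℝ x y, hx⟩
      ⟨y, right_mem_segment ℝ x y, hy⟩
    calc dist (f x) 0 = dist (f x) (f z) := by rw [hfs z hzs]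
      _ ≤ C * dist x z := hf.dist_le_mul x hx z (hs.frontier_subset hzs)
      _ ≤ C * dist x y := by
        gcongr
        rw [← dist_add_dist_of_mem_segment hz]
        exact le_add_of_nonneg_right dist_nonneg
  refine LipschitzWith.of_dist_le_mul fun x y => ?_
  by_cases hx : x ∈ s <;> by_cases hy : y ∈ s <;> simp only [hx, hy, Set.indicator_of_mem,
    Set.indicator_of_notMem, not_false_eq_true]
  · exact hf.dist_le_mul x hx y hy
  · exact across hx hy
  · rw [dist_comm, dist_comm x]
    exact across hy hx
  · rw [dist_self]
    positivity

theorem image_eq_of_bijective_of_eqOn_compl {α : Type*} {f : α → α} {s : Set α}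
    (hf : Function.Bijective f) (hfs : Set.EqOn f id sᶜ) : f '' s = s := by
  rw [← compl_inj_iff, ← Set.image_compl_eq hf, hfs.image_eq, Set.image_id]

theorem bijective_id_add_of_lipschitzWith {E : Type*} [NormedAddCommGroup E] [CompleteSpace E]
    {K : NNReal} {h : E → E} (hh : LipschitzWith K h) (hK : K < 1) :
    Function.Bijective (fun x => x + h x) := by
  refine Function.bijective_iff_existsUnique _ |>.2 fun y => ?_
  have contracting : ContractingWith K (fun x => y - h x) :=
    ⟨hK, LipschitzWith.of_dist_le_mul fun a b => by
      rw [dist_sub_left]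
      exact hh.dist_le_mul a b⟩
  have isFixedPt_iff (x : E) : Function.IsFixedPt (fun x => y - h x) x ↔ x + h x = y := by
    rw [Function.IsFixedPt, sub_eq_iff_eq_add, eq_comm]
  exact ⟨contracting.fixedPoint, (isFixedPt_iff _).1 contracting.fixedPoint_isFixedPt,
    fun x hx => contracting.fixedPoint_unique ((isFixedPt_iff x).2 hx)⟩

section Volume

variable {E : Type*} [NormedAddCommGroup E] [NormedSpace ℝ E]

theorem eventually_det_one_add_pos : ∀ᶠ A : E →L[ℝ] E in 𝓝 0, 0 < (1 + A).det := by
  have hcont : Continuous fun A : E →L[ℝ] E => (1 + A).det :=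
    ContinuousLinearMap.continuous_det.comp (continuous_const.add continuous_id)
  refine hcont.continuousAt.eventually (lt_mem_nhds ?_)
  simp [ContinuousLinearMap.det]

variable [FiniteDimensional ℝ E]

theorem eval_charpoly_neg_eq_det (A : E →L[ℝ] E) (t : ℝ) :
    (-A : E →ₗ[ℝ] E).charpoly.eval t = (t • 1 + A).det := by
  rw [LinearMap.eval_charpoly, ContinuousLinearMap.det]
  congr 1
  ext x
  simp [Algebra.algebraMap_eq_smul_one]

theorem det_smul_one_add (A : E →L[ℝ] E) {t : ℝ} (ht : t ≠ 0) :
    (t • 1 + A).det = t ^ Module.finrank ℝ E * (1 + t⁻¹ • A).det := by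
  rw [ContinuousLinearMap.det, ContinuousLinearMap.det, ← LinearMap.det_smul]
  congr 1
  ext x
  simp [smul_smul, ht]

variable [MeasurableSpace E] [BorelSpace E] {μ : Measure E} {U : Set E} {C : NNReal} {g : E → E}

theorem integrableOn_det_smul_one_add_fderiv (hU : μ U ≠ ⊤) (hg : LipschitzWith C g) (t : ℝ) :
    IntegrableOn (fun x => (t • 1 + fderiv ℝ g x).det) U μ := by
  have hcont : Continuous fun A : E →L[ℝ] E => (t • 1 + A).det :=
    ContinuousLinearMap.continuous_det.comp (continuous_const.add continuous_id)
  obtain ⟨B, hB⟩ := (isCompact_closedBall (0 : E →L[ℝ] E) C).exists_bound_of_continuousOn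
    hcont.continuousOn
  refine IntegrableOn.of_bound hU.lt_top
    (hcont.measurable.comp (measurable_fderiv ℝ g)).aestronglyMeasurable B ?_
  exact Eventually.of_forall fun x =>
    hB _ (mem_closedBall_zero_iff.2 (norm_fderiv_le_of_lipschitz ℝ hg))

variable [μ.IsAddHaarMeasure]

theorem setIntegral_abs_det_one_add_fderiv (hU : IsOpen U) {K : NNReal} {h : E → E}
    (hh : LipschitzWith K h) (hK : K < 1) (hzero : ∀ x ∉ U, h x = 0)
    (hdiff : DifferentiableOn ℝ h U) :
    ∫ x in U, |(1 + fderiv ℝ h x).det| ∂μ = μ.real U := by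
  have hbij := bijective_id_add_of_lipschitzWith hh hK
  have himage : (fun x => x + h x) '' U = U :=
    image_eq_of_bijective_of_eqOn_compl hbij fun x hx => by simp [hzero x hx]
  have hderiv : ∀ x ∈ U, HasFDerivWithinAt (fun x => x + h x) (1 + fderiv ℝ h x) U x :=
    fun x hx => ((hasFDerivAt_id x).add
      (hdiff.differentiableAt (hU.mem_nhds hx)).hasFDerivAt).hasFDerivWithinAt
  have hchange := integral_image_eq_integral_abs_det_fderiv_smul μ hU.measurableSet hderiv
    hbij.injective.injOn fun _ => (1 : ℝ)
  simpa [himage] using hchange.symm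

theorem exists_forall_gt_setIntegral_det_smul_one_add_fderiv (hU : IsOpen U)
    (hg : LipschitzWith C g) (hzero : ∀ x ∉ U, g x = 0) (hdiff : DifferentiableOn ℝ g U) :
    ∃ t₀ : ℝ, ∀ t > t₀,
      ∫ x in U, (t • 1 + fderiv ℝ g x).det ∂μ = μ.real U * t ^ Module.finrank ℝ E := by
  obtain ⟨δ, hδ, hpos⟩ := Metric.eventually_nhds_iff.1 (eventually_det_one_add_pos (E := E))
  refine ⟨max C (C / δ), fun t ht => ?_⟩
  obtain ⟨hCt, hCδ⟩ := max_lt_iff.1 ht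
  have ht0 : 0 < t := C.coe_nonneg.trans_lt hCt
  have hlip : LipschitzWith (‖t⁻¹‖₊ * C) (t⁻¹ • g) := (lipschitzWith_smul t⁻¹).comp hg
  have hlt : ‖t⁻¹‖₊ * C < 1 := by
    rw [← NNReal.coe_lt_coe]
    simpa [abs_of_pos ht0, inv_mul_lt_iff₀ ht0] using hCt
  have hfderiv : ∀ x ∈ U, fderiv ℝ (t⁻¹ • g) x = t⁻¹ • fderiv ℝ g x := fun x hx =>
    fderiv_const_smul (hdiff.differentiableAt (hU.mem_nhds hx)) t⁻¹
  have hdet : ∀ x, 0 < (1 + t⁻¹ • fderiv ℝ g x).det := fun x => hpos <| by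
    rw [dist_zero_right, norm_smul, norm_inv, Real.norm_of_nonneg ht0.le, inv_mul_lt_iff₀ ht0]
    exact (norm_fderiv_le_of_lipschitz ℝ hg).trans_lt ((div_lt_iff₀ hδ).1 hCδ)
  rw [← setIntegral_abs_det_one_add_fderiv hU hlip hlt (fun x hx => by simp [hzero x hx])
    (hdiff.const_smul t⁻¹), ← integral_mul_const]
  refine setIntegral_congr_fun hU.measurableSet fun x hx => ?_
  simp only [hfderiv x hx, abs_of_pos (hdet x), det_smul_one_add _ ht0.ne', mul_comm]

theorem setIntegral_det_one_add_fderiv (hU : IsOpen U) (hUfin : μ U ≠ ⊤) (hg : LipschitzWith C g)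
    (hzero : ∀ x ∉ U, g x = 0) (hdiff : DifferentiableOn ℝ g U) :
    ∫ x in U, (1 + fderiv ℝ g x).det ∂μ = μ.real U := by
  obtain ⟨t₀, ht₀⟩ :=
    exists_forall_gt_setIntegral_det_smul_one_add_fderiv (μ := μ) hU hg hzero hdiff
  have heq := integral_eval_eq_of_infinite (μ := μ.restrict U)
    (p := fun x => (-fderiv ℝ g x : E →ₗ[ℝ] E).charpoly)
    (P := Polynomial.C (μ.real U) * Polynomial.X ^ Module.finrank ℝ E)
    (fun x => (LinearMap.charpoly_natDegree _).le) (Set.Ioi_infinite t₀)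
    (fun t _ => by
      simp only [eval_charpoly_neg_eq_det]
      exact integrableOn_det_smul_one_add_fderiv hUfin hg t)
    (fun t ht => by simpa [eval_charpoly_neg_eq_det] using ht₀ t ht)
    (Polynomial.natDegree_C_mul_X_pow_le _ _) 1
  simpa [eval_charpoly_neg_eq_det] using heq

end Volume

theorem det_eq_zero_of_hasFDerivAt_of_norm_eq {E : Type*} [NormedAddCommGroup E]
    [InnerProductSpace ℝ E] [FiniteDimensional ℝ E] {ρ : ℝ} (hρ : ρ ≠ 0) {f : E → E}
    {f' : E →L[ℝ] E} {x : E} (hf : HasFDerivAt f f' x) (hnorm : ∀ y, ‖f y‖ = ρ) :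
    f'.det = 0 := by
  by_contra hdet
  obtain ⟨w, hw⟩ := (f'.toContinuousLinearEquivOfDetNeZero hdet).surjective (f x)
  have hfw : f' w = f x := hw
  have hconst : (fun y => ‖f y‖ ^ 2) = fun _ => ρ ^ 2 := by simp only [hnorm]
  have hderiv := hf.norm_sq
  rw [hconst] at hderiv
  have horth := DFunLike.congr_fun (hderiv.unique (hasFDerivAt_const _ _)) w
  simp [hfw, hnorm, hρ] at horth

theorem not_forall_norm_eq_of_eqOn_sphere {E : Type*} [NormedAddCommGroup E]
    [InnerProductSpace ℝ E] [FiniteDimensional ℝ E] {ρ : ℝ} (hρ : 0 < ρ) {r : E → E}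
    (hr : ContDiff ℝ 1 r) (hid : Set.EqOn r id (Metric.sphere 0 ρ)) : ¬ ∀ x, ‖r x‖ = ρ := by
  intro hnorm
  borelize E
  have hsub : ContDiff ℝ 1 (fun x => r x - x) := hr.sub contDiff_id
  obtain ⟨C, hC⟩ := hsub.locallyLipschitz.locallyLipschitzOn.exists_lipschitzOnWith_of_compact
    (isCompact_closedBall (0 : E) ρ)
  set g : E → E := (Metric.closedBall 0 ρ).indicator fun x => r x - x with hg
  have hfrontier : ∀ x ∈ Metric.sphere (0 : E) ρ, r x - x = 0 := fun x hx => by simp [hid hx]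
  have hlip : LipschitzWith C g := lipschitzWith_indicator hC Metric.isClosed_closedBall
    (by rwa [frontier_closedBall _ hρ.ne'])
  have hzero : ∀ x ∉ Metric.ball (0 : E) ρ, g x = 0 := fun x hx => by
    by_cases hxρ : x ∈ Metric.closedBall 0 ρ
    · rw [hg, Set.indicator_of_mem hxρ]
      exact hfrontier x ((Metric.mem_closedBall.1 hxρ).antisymm (not_lt.1 hx))
    · exact Set.indicator_of_notMem hxρ _
  have hderiv : ∀ x ∈ Metric.ball (0 : E) ρ, HasFDerivAt g (fderiv ℝ r x - 1) x := fun x hx =>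
    ((hr.differentiable one_ne_zero x).hasFDerivAt.sub (hasFDerivAt_id x)).congr_of_eventuallyEq <|
      (Set.eqOn_indicator.mono Metric.ball_subset_closedBall).eventuallyEq_of_mem
        (Metric.isOpen_ball.mem_nhds hx)
  have hdet : ∀ x ∈ Metric.ball (0 : E) ρ, (1 + fderiv ℝ g x).det = 0 := fun x hx => by
    rw [(hderiv x hx).fderiv, add_sub_cancel]
    exact det_eq_zero_of_hasFDerivAt_of_norm_eq hρ.ne'
      (hr.differentiable one_ne_zero x).hasFDerivAt hnorm
  have hvolume := setIntegral_det_one_add_fderiv (μ := Measure.addHaar) Metric.isOpen_ball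
    measure_ball_lt_top.ne hlip hzero
    fun x hx => (hderiv x hx).differentiableAt.differentiableWithinAt
  rw [setIntegral_congr_fun measurableSet_ball hdet, integral_zero] at hvolume
  exact (ENNReal.toReal_pos (Metric.measure_ball_pos _ _ hρ).ne' measure_ball_lt_top.ne).ne hvolume

theorem exists_isFixedPt_of_contDiff {E : Type*} [NormedAddCommGroup E] [InnerProductSpace ℝ E]
    [FiniteDimensional ℝ E] {G : E → E} (hG : ContDiff ℝ 1 G)
    (hbdd : Bornology.IsBounded (Set.range G)) : ∃ x, Function.IsFixedPt G x := by
  by_contra! hfixed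
  obtain ⟨R, hR, hGR⟩ := hbdd.exists_pos_norm_le
  rw [Set.forall_mem_range] at hGR
  let χ : ContDiffBump (0 : E) := ⟨R, R + 1, hR, lt_add_one R⟩
  -- `F` has no zero since `G` has no fixed point, and it is the identity on the sphere of radius
  -- `R + 1`, so rescaling it to constant norm retracts the space onto that sphere.
  let F : E → E := fun x => x - χ x • G x
  have hF : ContDiff ℝ 1 F := contDiff_id.sub (χ.contDiff.smul hG)
  have hF0 : ∀ x, F x ≠ 0 := fun x hx => by
    have hxχ : x = χ x • G x := sub_eq_zero.1 hx
    have hxR : ‖x‖ ≤ R := by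
      rw [hxχ, norm_smul, Real.norm_of_nonneg χ.nonneg]
      exact (mul_le_of_le_one_left (norm_nonneg _) χ.le_one).trans (hGR x)
    rw [χ.one_of_mem_closedBall (mem_closedBall_zero_iff.2 hxR), one_smul] at hxχ
    exact hfixed x hxχ.symm
  have hρ : 0 < R + 1 := by positivity
  refine not_forall_norm_eq_of_eqOn_sphere (r := fun x => ((R + 1) / ‖F x‖) • F x) hρ
    ((contDiff_const.div (hF.norm ℝ hF0) fun x => norm_ne_zero_iff.2 (hF0 x)).smul hF) ?_ ?_
  · intro x hx
    have hxρ : ‖x‖ = R + 1 := mem_sphere_zero_iff_norm.1 hx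
    have hFx : F x = x := by
      simp [F, χ.zero_of_le_dist (x := x) (by simpa [χ] using hxρ.ge)]
    simp [hFx, hxρ, div_self hρ.ne']
  · intro x
    rw [norm_smul, norm_div, norm_norm, div_mul_cancel₀ _ (norm_ne_zero_iff.2 (hF0 x)),
      Real.norm_of_nonneg hρ.le]

theorem exists_isFixedPt_of_innerProductSpace {E : Type*} [NormedAddCommGroup E]
    [InnerProductSpace ℝ E] [FiniteDimensional ℝ E] {G : E → E} (hG : Continuous G)
    (hbdd : Bornology.IsBounded (Set.range G)) : ∃ x, Function.IsFixedPt G x := by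
  obtain ⟨R, hR, hGR⟩ := hbdd.exists_pos_norm_le
  rw [Set.forall_mem_range] at hGR
  obtain ⟨x₀, -, hmin⟩ := (isCompact_closedBall (0 : E) (R + 1)).exists_isMinOn
    (Metric.nonempty_closedBall.2 (by positivity)) (hG.dist continuous_id).continuousOn
  by_contra! hfixed
  have hδ : 0 < min (dist (G x₀) x₀) 1 := lt_min (dist_pos.2 (hfixed x₀)) one_pos
  obtain ⟨H, hH, hHG, -⟩ := hG.exists_contDiff_approx 1 continuous_const fun _ => hδ
  have hHR : ∀ x, ‖H x‖ ≤ R + 1 := fun x =>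
    calc ‖H x‖ ≤ ‖G x‖ + dist (H x) (G x) := by
          rw [dist_eq_norm]
          exact norm_le_norm_add_norm_sub' _ _
      _ ≤ R + 1 := add_le_add (hGR x) ((hHG x).le.trans (min_le_right _ _))
  obtain ⟨x, hx⟩ := exists_isFixedPt_of_contDiff hH
    (isBounded_iff_forall_norm_le.2 ⟨R + 1, Set.forall_mem_range.2 hHR⟩)
  have hxR : x ∈ Metric.closedBall (0 : E) (R + 1) :=
    mem_closedBall_zero_iff.2 (hx.eq ▸ hHR x)
  have hmin_lt : dist (G x) x < dist (G x₀) x₀ := calc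
    dist (G x) x = dist (H x) (G x) := by rw [hx.eq, dist_comm]
    _ < dist (G x₀) x₀ := (hHG x).trans_le (min_le_left _ _)
  exact (hmin hxR).not_gt hmin_lt

theorem exists_isFixedPt_of_isBounded_range {E : Type*} [NormedAddCommGroup E]
    [NormedSpace ℝ E] [FiniteDimensional ℝ E] {G : E → E} (hG : Continuous G)
    (hbdd : Bornology.IsBounded (Set.range G)) : ∃ x, Function.IsFixedPt G x := by
  let e := toEuclidean (E := E)
  have hrange : Set.range (fun a => e (G (e.symm a))) ⊆ e '' Set.range G := by
    rintro _ ⟨a, rfl⟩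
    exact ⟨_, ⟨_, rfl⟩, rfl⟩
  obtain ⟨a, ha⟩ := exists_isFixedPt_of_innerProductSpace
    (e.continuous.comp (hG.comp e.symm.continuous))
    ((e.lipschitz.isBounded_image hbdd).subset hrange)
  exact ⟨e.symm a, e.injective (by rw [e.apply_symm_apply]; exact ha)⟩

/-! ### Hammerstein operators with Lipschitz kernels -/

theorem exists_subseq_tendsto_of_equicontinuous {X Y : Type*} [TopologicalSpace X]
    [TopologicalSpace.SeparableSpace X] [PseudoMetricSpace Y] [ProperSpace Y] {u : ℕ → X → Y}
    (hu : Equicontinuous u) (hbdd : ∀ x, Bornology.IsBounded (Set.range fun n => u n x)) :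
    ∃ φ : ℕ → ℕ, StrictMono φ ∧ ∃ v : X → Y, ∀ x, Tendsto (fun n => u (φ n) x) atTop (𝓝 (v x)) := by
  obtain ⟨s, hs, hdense⟩ := TopologicalSpace.exists_countable_dense X
  have : Countable s := hs
  obtain ⟨a, -, φ, hφ, ha⟩ := (isCompact_univ_pi fun x : s =>
    (hbdd x).isCompact_closure).tendsto_subseq
      fun n x _ => subset_closure (Set.mem_range_self (f := fun n => u n x) n)
  rw [tendsto_pi_nhds] at ha
  have hcauchy (x : X) : CauchySeq fun n => u (φ n) x := by
    refine Metric.cauchySeq_iff'.2 fun ε hε => ?_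
    have hnhds := Metric.equicontinuousAt_iff_right.1 (hu x) (ε / 3) (by positivity)
    obtain ⟨y, hys, hy⟩ := hdense.inter_nhds_nonempty hnhds
    obtain ⟨N, hN⟩ := Metric.cauchySeq_iff'.1 (ha ⟨y, hys⟩).cauchySeq (ε / 3) (by positivity)
    refine ⟨N, fun n hn => ?_⟩
    calc dist (u (φ n) x) (u (φ N) x)
        ≤ dist (u (φ n) x) (u (φ n) y) + dist (u (φ n) y) (u (φ N) y)
            + dist (u (φ N) y) (u (φ N) x) := dist_triangle4 _ _ _ _
      _ < ε / 3 + ε / 3 + ε / 3 := by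
        gcongr
        · exact hy (φ n)
        · exact hN n hn
        · rw [dist_comm]
          exact hy (φ N)
      _ = ε := by ring
  choose v hv using fun x => cauchySeq_tendsto_of_complete (hcauchy x)
  exact ⟨φ, hφ, v, hv⟩

section Hammerstein

variable {X Y : Type*} [MeasurableSpace Y]

/-- The Hammerstein integral operator `w ↦ ∫ y, k · y * g y (w y) ∂μ` with kernel `k` and
nonlinearity `g`. -/
noncomputable def hammerstein (μ : Measure Y) (k : X → Y → ℝ) (g : Y → ℝ → ℝ) (w : Y → ℝ) (x : X) :
    ℝ :=
  ∫ y, k x y * g y (w y) ∂μ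

/-- A Carathéodory function `g` (continuous in its second variable, jointly measurable) whose values
`g y t` are dominated, uniformly in `t`, by an integrable function of `y`. -/
structure IsDominatedCaratheodory (μ : Measure Y) (g : Y → ℝ → ℝ) (b : Y → ℝ) : Prop where
  measurable : Measurable (Function.uncurry g)
  continuous : ∀ y, Continuous (g y)
  abs_le : ∀ y t, |g y t| ≤ b y
  integrable_bound : Integrable b μ

variable {μ : Measure Y} {k : X → Y → ℝ} {g : Y → ℝ → ℝ} {b : Y → ℝ} {w : Y → ℝ}

theorem hammerstein_const_mul (c : ℝ) (x : X) :
    hammerstein μ k (fun y t => c * g y t) w x = c * hammerstein μ k g w x := by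
  simp only [hammerstein, mul_left_comm _ c, integral_const_mul]

theorem IsDominatedCaratheodory.const_mul (hg : IsDominatedCaratheodory μ g b) (c : ℝ) :
    IsDominatedCaratheodory μ (fun y t => c * g y t) (fun y => |c| * b y) where
  measurable := hg.measurable.const_mul c
  continuous y := (hg.continuous y).const_mul c
  abs_le y t := by
    rw [abs_mul]
    gcongr
    exact hg.abs_le y t
  integrable_bound := hg.integrable_bound.const_mul _

theorem IsDominatedCaratheodory.measurable_comp (hg : IsDominatedCaratheodory μ g b)
    (hw : Measurable w) : Measurable fun y => g y (w y) :=
  hg.measurable.comp (measurable_id.prodMk hw)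

theorem IsDominatedCaratheodory.integrable_comp (hg : IsDominatedCaratheodory μ g b)
    (hw : Measurable w) : Integrable (fun y => g y (w y)) μ :=
  hg.integrable_bound.mono' (hg.measurable_comp hw).aestronglyMeasurable
    (Eventually.of_forall fun y => hg.abs_le y (w y))

theorem IsDominatedCaratheodory.integral_bound_nonneg (hg : IsDominatedCaratheodory μ g b) :
    0 ≤ ∫ y, b y ∂μ :=
  integral_nonneg fun y => (abs_nonneg _).trans (hg.abs_le y 0)

variable [PseudoMetricSpace X] {x₀ : X}

/-- A kernel that is nonexpansive in its first variable and vanishes when the latter is `x₀`;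
in particular `|k x y| ≤ dist x x₀`, so that `k x` is bounded although `k` need not be. -/
structure IsLipschitzKernel (k : X → Y → ℝ) (x₀ : X) : Prop where
  measurable : ∀ x, Measurable (k x)
  lipschitzWith : ∀ y, LipschitzWith 1 fun x => k x y
  base_eq_zero : ∀ y, k x₀ y = 0

theorem IsLipschitzKernel.abs_le_dist (hk : IsLipschitzKernel k x₀) (x : X) (y : Y) :
    |k x y| ≤ dist x x₀ := by
  simpa [Real.dist_eq, hk.base_eq_zero] using (hk.lipschitzWith y).dist_le_mul x x₀

theorem IsLipschitzKernel.integrable_mul (hk : IsLipschitzKernel k x₀) (x : X) {f : Y → ℝ}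
    (hf : Integrable f μ) : Integrable (fun y => k x y * f y) μ :=
  hf.bdd_mul (hk.measurable x).aestronglyMeasurable (Eventually.of_forall (hk.abs_le_dist x))

theorem hammerstein_base (hk : IsLipschitzKernel k x₀) : hammerstein μ k g w x₀ = 0 := by
  simp [hammerstein, hk.base_eq_zero]

theorem lipschitzWith_hammerstein (hk : IsLipschitzKernel k x₀)
    (hg : IsDominatedCaratheodory μ g b) (hw : Measurable w) :
    LipschitzWith (∫ y, b y ∂μ).toNNReal (hammerstein μ k g w) := by
  refine LipschitzWith.of_dist_le_mul fun x x' => ?_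
  have hint := hg.integrable_comp hw
  rw [Real.coe_toNNReal _ hg.integral_bound_nonneg, ← integral_mul_const, Real.dist_eq,
    hammerstein, hammerstein, ← integral_sub (hk.integrable_mul x hint) (hk.integrable_mul x' hint),
    ← Real.norm_eq_abs]
  refine norm_integral_le_of_norm_le (hg.integrable_bound.mul_const _)
    (Eventually.of_forall fun y => ?_)
  rw [← sub_mul, norm_mul, mul_comm]
  have hkxx' := (hk.lipschitzWith y).dist_le_mul x x'
  rw [NNReal.coe_one, one_mul, dist_eq_norm] at hkxx'
  exact mul_le_mul (hg.abs_le y _) hkxx' (norm_nonneg _) ((abs_nonneg _).trans (hg.abs_le y 0))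

theorem abs_hammerstein_le (hk : IsLipschitzKernel k x₀) (hg : IsDominatedCaratheodory μ g b)
    (hw : Measurable w) (x : X) : |hammerstein μ k g w x| ≤ (∫ y, b y ∂μ) * dist x x₀ := by
  simpa [Real.dist_eq, hammerstein_base hk, hg.integral_bound_nonneg]
    using (lipschitzWith_hammerstein hk hg hw).dist_le_mul x x₀

theorem tendsto_hammerstein {ι : Type*} {l : Filter ι} [l.IsCountablyGenerated]
    (hk : IsLipschitzKernel k x₀) (hg : IsDominatedCaratheodory μ g b) {u : ι → Y → ℝ}
    (hu : ∀ i, Measurable (u i)) (hlim : ∀ y, Tendsto (fun i => u i y) l (𝓝 (w y))) (x : X) :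
    Tendsto (fun i => hammerstein μ k g (u i) x) l (𝓝 (hammerstein μ k g w x)) := by
  refine tendsto_integral_filter_of_dominated_convergence (fun y => dist x x₀ * b y)
    (Eventually.of_forall fun i =>
      (hk.integrable_mul x (hg.integrable_comp (hu i))).aestronglyMeasurable)
    (Eventually.of_forall fun i => Eventually.of_forall fun y => ?_)
    (hg.integrable_bound.const_mul _)
    (Eventually.of_forall fun y => (((hg.continuous y).tendsto _).comp (hlim y)).const_mul _)
  rw [norm_mul]
  exact mul_le_mul (hk.abs_le_dist x y) (hg.abs_le y _) (norm_nonneg _) dist_nonneg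

theorem exists_isFixedPt_hammerstein_comp_simpleFunc (hk : IsLipschitzKernel k x₀)
    (hg : IsDominatedCaratheodory μ g b) (s : SimpleFunc Y X) :
    ∃ u : X → ℝ, Function.IsFixedPt (fun u => hammerstein μ k g (u ∘ s)) u := by
  let W (a : s.range → ℝ) : Y → ℝ := Function.extend Subtype.val a 0 ∘ s
  have hW (a : s.range → ℝ) (y : Y) : W a y = a ⟨s y, s.mem_range_self y⟩ :=
    Subtype.val_injective.extend_apply a 0 ⟨s y, s.mem_range_self y⟩
  have hmeas (a : s.range → ℝ) : Measurable (W a) :=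
    (s.map (Function.extend Subtype.val a 0)).measurable
  have hcont : Continuous fun (a : s.range → ℝ) (i : s.range) => hammerstein μ k g (W a) i :=
    continuous_pi fun i => continuous_iff_continuousAt.2 fun a =>
      tendsto_hammerstein hk hg hmeas (fun y => by
        simp only [hW]
        exact (continuous_apply _).tendsto a) i
  have hbdd : Bornology.IsBounded
      (Set.range fun (a : s.range → ℝ) (i : s.range) => hammerstein μ k g (W a) i) := by
    refine (Bornology.IsBounded.pi fun i : s.range =>
      Metric.isBounded_closedBall (x := (0 : ℝ)) (r := (∫ y, b y ∂μ) * dist (i : X) x₀)).subset ?_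
    rintro _ ⟨a, rfl⟩ i -
    exact mem_closedBall_zero_iff.2 (abs_hammerstein_le hk hg (hmeas a) i)
  obtain ⟨a, ha⟩ := exists_isFixedPt_of_isBounded_range hcont hbdd
  refine ⟨hammerstein μ k g (W a), congrArg (hammerstein μ k g) (funext fun y => ?_)⟩
  rw [hW]
  exact congrFun ha ⟨s y, s.mem_range_self y⟩

end Hammerstein

theorem exists_lipschitzWith_isFixedPt_hammerstein {X : Type*} [PseudoMetricSpace X]
    [SecondCountableTopology X] [MeasurableSpace X] [OpensMeasurableSpace X] {μ : Measure X}
    {k : X → X → ℝ} {x₀ : X} {g : X → ℝ → ℝ} {b : X → ℝ} (hk : IsLipschitzKernel k x₀)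
    (hg : IsDominatedCaratheodory μ g b) :
    ∃ v : X → ℝ, LipschitzWith (∫ y, b y ∂μ).toNNReal v ∧
      Function.IsFixedPt (hammerstein μ k g) v := by
  let s : ℕ → SimpleFunc X X := SimpleFunc.approxOn id measurable_id Set.univ x₀ (Set.mem_univ _)
  have hs (y : X) : Tendsto (fun n => s n y) atTop (𝓝 y) :=
    SimpleFunc.tendsto_approxOn measurable_id (Set.mem_univ _) (by simp)
  choose u hu using fun n => exists_isFixedPt_hammerstein_comp_simpleFunc hk hg (s n)
  have hmeas (n : ℕ) : Measurable (u n ∘ s n) := ((s n).map (u n)).measurable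
  have hlip (n : ℕ) : LipschitzWith (∫ y, b y ∂μ).toNNReal (u n) :=
    (hu n).eq ▸ lipschitzWith_hammerstein hk hg (hmeas n)
  have hbdd (x : X) : Bornology.IsBounded (Set.range fun n => u n x) := by
    refine isBounded_iff_forall_norm_le.2 ⟨(∫ y, b y ∂μ) * dist x x₀, Set.forall_mem_range.2 ?_⟩
    intro n
    rw [← (hu n).eq]
    exact abs_hammerstein_le hk hg (hmeas n) x
  obtain ⟨φ, hφ, v, hv⟩ := exists_subseq_tendsto_of_equicontinuous
    (LipschitzWith.uniformEquicontinuous u _ hlip).equicontinuous hbdd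
  refine ⟨v, (isClosed_setOfPred_lipschitzWith _).mem_of_tendsto (tendsto_pi_nhds.2 hv)
    (Eventually.of_forall fun n => hlip (φ n)), funext fun x => ?_⟩
  have hcomp (y : X) : Tendsto (fun n => (u (φ n) ∘ s (φ n)) y) atTop (𝓝 (v y)) := by
    have hdist : Tendsto (fun n => dist (u (φ n) (s (φ n) y)) (u (φ n) y)) atTop (𝓝 0) :=
      squeeze_zero (fun _ => dist_nonneg) (fun n => (hlip (φ n)).dist_le_mul _ _)
        (by simpa using
          (tendsto_iff_dist_tendsto_zero.1 ((hs y).comp hφ.tendsto_atTop)).const_mul _)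
    exact (tendsto_iff_of_dist hdist).2 (hv y)
  refine tendsto_nhds_unique (tendsto_hammerstein hk hg (fun n => hmeas (φ n)) hcomp x) ?_
  exact (hv x).congr fun n => (congrFun (hu (φ n)) x).symm

/-! ### The kernel `‖x - y‖ - ‖y‖` -/

section EvenKernel

variable {E : Type*} [SeminormedAddCommGroup E]

/-- The even part `x ↦ (φ x + φ (-x)) / 2` of the kernel `φ x = ‖x - y‖ - ‖y‖`. Both kernels give
the same integrals against even densities, but only the even one is nonnegative. -/
noncomputable def evenDistKernel (x y : E) : ℝ :=
  (‖x - y‖ + ‖x + y‖) / 2 - ‖y‖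

theorem evenDistKernel_neg_left (x y : E) : evenDistKernel (-x) y = evenDistKernel x y := by
  rw [evenDistKernel, evenDistKernel, ← neg_add', norm_neg, neg_add_eq_sub, norm_sub_rev y,
    add_comm ‖x + y‖]

theorem evenDistKernel_nonneg [NormedSpace ℝ E] (x y : E) : 0 ≤ evenDistKernel x y := by
  have hparallelogram : 2 * ‖y‖ ≤ ‖x - y‖ + ‖x + y‖ :=
    calc 2 * ‖y‖ = ‖(2 : ℝ) • y‖ := by simp [norm_smul]
      _ = ‖(x + y) - (x - y)‖ := by rw [two_smul, add_sub_sub_cancel]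
      _ ≤ ‖x - y‖ + ‖x + y‖ := (norm_sub_le _ _).trans_eq (add_comm _ _)
  rw [evenDistKernel]
  linarith

theorem abs_norm_sub_sub_norm_le (x y : E) : |‖x - y‖ - ‖y‖| ≤ ‖x‖ := by
  rw [norm_sub_rev]
  simpa using abs_norm_sub_norm_le (y - x) y

theorem tendsto_norm_sub_sub_norm_div_cobounded (y : E) :
    Tendsto (fun x => (‖x - y‖ - ‖y‖) / ‖x‖) (Bornology.cobounded E) (𝓝 1) := by
  have hlower : Tendsto (fun x : E => 1 - 2 * ‖y‖ / ‖x‖) (Bornology.cobounded E) (𝓝 1) := by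
    simpa using (tendsto_norm_cobounded_atTop.const_div_atTop (2 * ‖y‖)).const_sub 1
  refine tendsto_of_tendsto_of_tendsto_of_le_of_le' hlower tendsto_const_nhds ?_ ?_
  · filter_upwards [tendsto_norm_cobounded_atTop.eventually_gt_atTop 0] with x hx
    rw [le_div_iff₀ hx, sub_mul, one_mul, div_mul_cancel₀ _ hx.ne']
    linarith [norm_sub_norm_le x y]
  · exact Eventually.of_forall fun x =>
      div_le_one_of_le₀ ((le_abs_self _).trans (abs_norm_sub_sub_norm_le x y)) (norm_nonneg x)

variable [MeasurableSpace E]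

theorem isLipschitzKernel_evenDistKernel [OpensMeasurableSpace E] :
    IsLipschitzKernel (evenDistKernel (E := E)) 0 where
  measurable x := by
    unfold evenDistKernel
    fun_prop
  lipschitzWith y := LipschitzWith.of_dist_le_mul fun x x' => by
    have hsub := abs_norm_sub_norm_le (x - y) (x' - y)
    have hadd := abs_norm_sub_norm_le (x + y) (x' + y)
    rw [sub_sub_sub_cancel_right, abs_le] at hsub
    rw [add_sub_add_right_eq_sub, abs_le] at hadd
    rw [NNReal.coe_one, one_mul, Real.dist_eq, dist_eq_norm, evenDistKernel, evenDistKernel,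
      abs_le]
    constructor <;> linarith
  base_eq_zero y := by simp [evenDistKernel]

variable {μ : Measure E} {f : E → ℝ}

theorem integrable_norm_sub_sub_norm_mul [OpensMeasurableSpace E] (hf : Integrable f μ) (x : E) :
    Integrable (fun y => (‖x - y‖ - ‖y‖) * f y) μ :=
  hf.bdd_mul (by fun_prop) (Eventually.of_forall (abs_norm_sub_sub_norm_le x))

theorem integral_evenDistKernel_mul [BorelSpace E] [μ.IsNegInvariant] (hf : Integrable f μ)
    (heven : ∀ y, f (-y) = f y) (x : E) :
    ∫ y, evenDistKernel x y * f y ∂μ = ∫ y, (‖x - y‖ - ‖y‖) * f y ∂μ := by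
  have hint := integrable_norm_sub_sub_norm_mul hf x
  calc ∫ y, evenDistKernel x y * f y ∂μ
      = ∫ y, ((‖x - y‖ - ‖y‖) * f y + (‖x - -y‖ - ‖-y‖) * f (-y)) / 2 ∂μ := by
        congr with y
        rw [heven, norm_neg, sub_neg_eq_add, evenDistKernel]
        ring
    _ = (∫ y, (‖x - y‖ - ‖y‖) * f y ∂μ + ∫ y, (‖x - -y‖ - ‖-y‖) * f (-y) ∂μ) / 2 := by
        rw [integral_div, integral_add hint hint.comp_neg]
    _ = ∫ y, (‖x - y‖ - ‖y‖) * f y ∂μ := by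
        rw [integral_neg_eq_self fun y => (‖x - y‖ - ‖y‖) * f y, add_self_div_two]

theorem tendsto_integral_norm_sub_sub_norm_mul_div_cobounded [OpensMeasurableSpace E]
    (hf : Integrable f μ) :
    Tendsto (fun x => (∫ y, (‖x - y‖ - ‖y‖) * f y ∂μ) / ‖x‖) (Bornology.cobounded E)
      (𝓝 (∫ y, f y ∂μ)) := by
  have hcountable : (Bornology.cobounded E).IsCountablyGenerated := by
    rw [← comap_norm_atTop]
    infer_instance
  simp only [← integral_div, mul_div_right_comm]
  refine tendsto_integral_filter_of_dominated_convergence (fun y => ‖f y‖)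
    (Eventually.of_forall fun x => ?_)
    (Eventually.of_forall fun x => Eventually.of_forall fun y => ?_) hf.norm
    (Eventually.of_forall fun y => ?_)
  · exact AEStronglyMeasurable.mul (by fun_prop) hf.aestronglyMeasurable
  · rw [norm_mul, norm_div, norm_norm]
    exact mul_le_of_le_one_left (norm_nonneg _)
      (div_le_one_of_le₀ (abs_norm_sub_sub_norm_le x y) (norm_nonneg x))
  · simpa using (tendsto_norm_sub_sub_norm_div_cobounded y).mul_const (f y)

theorem exists_lipschitzWith_even_eq_integral_norm_sub_sub_norm [NormedSpace ℝ E]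
    [SecondCountableTopology E] [BorelSpace E] [μ.IsNegInvariant] {c : ℝ} (hc : 0 ≤ c)
    {g : E → ℝ → ℝ} {b : E → ℝ} (hg : IsDominatedCaratheodory μ g b) (hg0 : ∀ y t, 0 ≤ g y t)
    (heven : ∀ y t, g (-y) t = g y t) :
    ∃ (K : NNReal) (v : E → ℝ), LipschitzWith K v ∧ (∀ x, v (-x) = v x) ∧ v 0 = 0 ∧
      (∀ x, 0 ≤ v x) ∧ ∀ x, v x = c * ∫ y, (‖x - y‖ - ‖y‖) * g y (v y) ∂μ := by
  obtain ⟨v, hlip, hfix⟩ :=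
    exists_lipschitzWith_isFixedPt_hammerstein isLipschitzKernel_evenDistKernel (hg.const_mul c)
  have hv (x : E) : v x = c * ∫ y, evenDistKernel x y * g y (v y) ∂μ := by
    conv_lhs => rw [← hfix.eq]
    exact hammerstein_const_mul c x
  have hv_even (x : E) : v (-x) = v x := by
    rw [hv, hv x]
    simp only [evenDistKernel_neg_left]
  refine ⟨_, v, hlip, hv_even, ?_, fun x => ?_, fun x => ?_⟩
  · rw [← hfix.eq]
    exact hammerstein_base isLipschitzKernel_evenDistKernel
  · rw [hv]
    exact mul_nonneg hc (integral_nonneg fun y => mul_nonneg (evenDistKernel_nonneg x y) (hg0 _ _))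
  · rw [hv, integral_evenDistKernel_mul (hg.integrable_comp hlip.continuous.measurable)
      fun y => by rw [heven, hv_even]]

end EvenKernel

theorem integrable_of_integrable_norm_mul {E : Type*} [SeminormedAddCommGroup E]
    [MeasurableSpace E] [OpensMeasurableSpace E] {μ : Measure E} {f : E → ℝ}
    (hf : AEStronglyMeasurable f μ) (h0 : IntegrableAtFilter f (𝓝 0) μ)
    (hint : Integrable (fun x => ‖x‖ * f x) μ) : Integrable f μ := by
  obtain ⟨s, hs, hfs⟩ := h0
  obtain ⟨ε, hε, hball⟩ := Metric.mem_nhds_iff.1 hs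
  have hnear : IntegrableOn f (Metric.ball 0 ε) μ := hfs.mono_set hball
  have hfar : IntegrableOn f (Metric.ball 0 ε)ᶜ μ := by
    refine Integrable.mono' (hint.norm.const_mul ε⁻¹).integrableOn hf.restrict ?_
    filter_upwards [ae_restrict_mem measurableSet_ball.compl] with x hx
    have hεx : ε ≤ ‖x‖ := by simpa using hx
    rw [norm_mul, norm_norm, ← mul_assoc, inv_mul_eq_div]
    exact le_mul_of_one_le_left (norm_nonneg _) ((one_le_div₀ hε).2 hεx)
  rw [← integrableOn_univ, ← Set.union_compl_self (Metric.ball (0 : E) ε)]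
  exact hnear.union hfar

theorem isDominatedCaratheodory_add_max_rpow_neg {Y : Type*} [MeasurableSpace Y] {μ : Measure Y}
    {P : Y → ℝ} {q : ℝ} (hq : 0 ≤ q) (hP : Measurable P) (hPpos : ∀ y, 0 < P y)
    (hPint : Integrable (fun y => P y ^ (-q)) μ) :
    IsDominatedCaratheodory μ (fun y t => (P y + max t 0) ^ (-q)) fun y => P y ^ (-q) where
  measurable := ((hP.comp measurable_fst).add (measurable_snd.max measurable_const)).pow_const _
  continuous y := Continuous.rpow_const (by fun_prop) fun t =>
    Or.inl (add_pos_of_pos_of_nonneg (hPpos y) (le_max_right t 0)).ne'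
  abs_le y t := by
    rw [abs_of_nonneg (rpow_nonneg (add_nonneg (hPpos y).le (le_max_right t 0)) _)]
    exact rpow_le_rpow_of_nonpos (hPpos y) (le_add_of_nonneg_right (le_max_right t 0))
      (neg_nonpos.2 hq)
  integrable_bound := hPint

theorem exists_even_solution_integral_equation_general {E : Type*} [SeminormedAddCommGroup E]
    [NormedSpace ℝ E] [SecondCountableTopology E] [MeasurableSpace E] [BorelSpace E]
    (μ : Measure E) [IsLocallyFiniteMeasure μ] [μ.IsNegInvariant] {c q : ℝ} (hc : 0 ≤ c)
    (hq : 0 ≤ q) {P : E → ℝ} (hPcont : Continuous P) (hPpos : ∀ x, 0 < P x)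
    (hPeven : ∀ x, P (-x) = P x) (hPint : Integrable (fun x => ‖x‖ * P x ^ (-q)) μ) :
    ∃ v : E → ℝ,
      Continuous v ∧
      (∀ x, v (-x) = v x) ∧
      (∃ C : ℝ, ∀ x, |v x| ≤ C * (1 + ‖x‖)) ∧
      v 0 = 0 ∧ (∀ x, 0 ≤ v x) ∧
      Integrable (fun y => (P y + v y) ^ (-q)) μ ∧
      (∀ x, Integrable (fun y => (‖x - y‖ - ‖y‖) * (P y + v y) ^ (-q)) μ) ∧
      (∀ x, v x = c * ∫ y, (‖x - y‖ - ‖y‖) * (P y + v y) ^ (-q) ∂μ) ∧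
      Tendsto (fun x => v x / ‖x‖) (Bornology.cobounded E)
        (𝓝 (c * ∫ y, (P y + v y) ^ (-q) ∂μ)) := by
  have hcont : Continuous fun x => P x ^ (-q) := hPcont.rpow_const fun x => Or.inl (hPpos x).ne'
  have hg := isDominatedCaratheodory_add_max_rpow_neg hq hPcont.measurable hPpos
    (integrable_of_integrable_norm_mul hcont.aestronglyMeasurable (hcont.integrableAt_nhds 0) hPint)
  obtain ⟨K, v, hlip, hv_even, hv_zero, hv_nonneg, hv⟩ :=
    exists_lipschitzWith_even_eq_integral_norm_sub_sub_norm hc hg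
      (fun y t => rpow_nonneg (add_nonneg (hPpos y).le (le_max_right t 0)) _)
      (fun y t => by rw [hPeven])
  have hint := hg.integrable_comp hlip.continuous.measurable
  simp only [max_eq_left (hv_nonneg _)] at hv hint
  refine ⟨v, hlip.continuous, hv_even, ⟨K, fun x => ?_⟩, hv_zero, hv_nonneg, hint,
    integrable_norm_sub_sub_norm_mul hint, hv, ?_⟩
  · calc |v x| ≤ K * ‖x‖ := by simpa [hv_zero, Real.dist_eq] using hlip.dist_le_mul x 0
      _ ≤ K * (1 + ‖x‖) := by gcongr; linarith
  · refine ((tendsto_integral_norm_sub_sub_norm_mul_div_cobounded hint).const_mul c).congr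
      fun x => ?_
    rw [hv x, mul_div_assoc]

/-- **Proposition.** If `P : ℝ³ → (0,∞)` is continuous, even, with `∫ |x| P(x)^{-q} dx < ∞`
for some `q > 0`, then there is a continuous even function `v` of at most linear growth with
`min v = v(0) = 0` solving `v(x) = (8π)⁻¹ ∫ (|x−y| − |y|)(P(y)+v(y))^{-q} dy`, and
`v(x)/|x| → (8π)⁻¹ ∫ (P(y)+v(y))^{-q} dy` as `|x| → ∞`. -/
theorem exists_even_solution_integral_equation
    (q : ℝ) (hq : 0 < q) (P : EuclideanSpace ℝ (Fin 3) → ℝ)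
    (hPcont : Continuous P) (hPpos : ∀ x, 0 < P x) (hPeven : ∀ x, P (-x) = P x)
    (hPint : Integrable (fun x => ‖x‖ * (P x) ^ (-q))) :
    ∃ v : EuclideanSpace ℝ (Fin 3) → ℝ,
      Continuous v ∧
      (∀ x, v (-x) = v x) ∧
      (∃ C : ℝ, ∀ x, |v x| ≤ C * (1 + ‖x‖)) ∧
      v 0 = 0 ∧ (∀ x, 0 ≤ v x) ∧
      Integrable (fun y => (P y + v y) ^ (-q)) ∧
      (∀ x, Integrable (fun y => (‖x - y‖ - ‖y‖) * (P y + v y) ^ (-q))) ∧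
      (∀ x, v x = (8 * π)⁻¹ * ∫ y, (‖x - y‖ - ‖y‖) * (P y + v y) ^ (-q)) ∧
      Tendsto (fun x => v x / ‖x‖) (cocompact (EuclideanSpace ℝ (Fin 3)))
        (𝓝 ((8 * π)⁻¹ * ∫ y, (P y + v y) ^ (-q))) := by
  rw [← Metric.cobounded_eq_cocompact]
  exact exists_even_solution_integral_equation_general volume (by positivity) hq.le hPcont hPpos
    hPeven hPint
end
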